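/- Suppose 𝒳 is a compact metric space, φ:𝒳^v→ℝ is continuous, H=K_{1,v−1} is the (v−1)-star graph, δ_□(W_{Q_n},W)→0 for some W∈𝒲, the family of random variables {𝔑_{W_{Q_n}}(U)^{v−1}}_{n≥1} (with U ~ Unif[0,1]) is uniformly integrable, and ∫₀¹ 𝔑_W(x)^{v−1} dx < ∞. Then both U_n(X) and V_n(X) satisfy a large deviation principle at speed n with the good rate function I₀(t) = inf{ D(ν|ρ) : ν ∈ 𝒯ℳ, D(ν|ρ) < ∞, T_{W,φ}(ν) = t }. -/

import Mathlib

open MeasureTheory Filter Set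
open scoped ENNReal NNReal

noncomputable section

/-- The uniform probability measure on `[0,1]`. -/
def unif01 : Measure ℝ := volume.restrict (Set.Icc 0 1)

instance : IsProbabilityMeasure unif01 :=
  ⟨by rw [unif01, Measure.restrict_apply_univ, Real.volume_Icc]; norm_num⟩

/-- The `L^r` norm (`r : ℝ≥0∞`) of a kernel, viewed as a function on `[0,1]²`. -/
def kerNorm (W : ℝ → ℝ → ℝ) (r : ℝ≥0∞) : ℝ≥0∞ :=
  eLpNorm (fun z : ℝ × ℝ => W z.1 z.2) r (unif01.prod unif01)

/-- The (strong) cut distance `d_□` between two kernels on `[0,1]²`. -/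
def cutDist (W₁ W₂ : ℝ → ℝ → ℝ) : ℝ :=
  ⨆ S : {S : Set ℝ // MeasurableSet S}, ⨆ T : {T : Set ℝ // MeasurableSet T},
    |∫ x in Set.Icc (0:ℝ) 1 ∩ S.1, ∫ y in Set.Icc (0:ℝ) 1 ∩ T.1, (W₁ x y - W₂ x y)|

/-- A Lebesgue-measure-preserving bijection of `[0,1]`. -/
def MPB (σ : ℝ → ℝ) : Prop :=
  Set.BijOn σ (Set.Icc 0 1) (Set.Icc 0 1) ∧ MeasurePreserving σ unif01 unif01

/-- The weak cut distance `δ_□`. -/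
def weakCutDist (W₁ W₂ : ℝ → ℝ → ℝ) : ℝ :=
  ⨅ σ : {σ : ℝ → ℝ // MPB σ}, cutDist (fun x y => W₁ (σ.1 x) (σ.1 y)) W₂

/-- The step kernel `W_{Q_n}` associated to an `n × n` matrix `Q`:
it equals `Q i j` when `⌈n x⌉ = i, ⌈n y⌉ = j`. -/
def stepKernel (n : ℕ) (Q : Fin n → Fin n → ℝ) : ℝ → ℝ → ℝ := fun x y =>
  ∑ i : Fin n, ∑ j : Fin n,
    if x ∈ Set.Ioc (((i : ℕ) : ℝ)/n) ((((i : ℕ) : ℝ)+1)/n) ∧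
       y ∈ Set.Ioc (((j : ℕ) : ℝ)/n) ((((j : ℕ) : ℝ)+1)/n)
    then Q i j else 0

/-- Product over the edges of `H` (each edge counted once) of `f a b`. -/
def edgeProd {v : ℕ} (G : SimpleGraph (Fin v)) [DecidableRel G.Adj]
    (f : Fin v → Fin v → ℝ) : ℝ :=
  ∏ p ∈ Finset.univ.filter (fun p : Fin v × Fin v => G.Adj p.1 p.2 ∧ p.1 < p.2), f p.1 p.2

/-- The number of edges `|E(H)|`. -/
def edgeCard {v : ℕ} (G : SimpleGraph (Fin v)) [DecidableRel G.Adj] : ℕ :=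
  (Finset.univ.filter (fun p : Fin v × Fin v => G.Adj p.1 p.2 ∧ p.1 < p.2)).card

/-- The inhomogeneous U-statistic `U_n(X)` (sum over distinct indices). -/
def Ustat {X : Type*} {v : ℕ} (G : SimpleGraph (Fin v)) [DecidableRel G.Adj]
    (φ : (Fin v → X) → ℝ) (n : ℕ) (Q : Fin n → Fin n → ℝ) (x : Fin n → X) : ℝ :=
  (∑ i ∈ Finset.univ.filter (fun i : Fin v → Fin n => Function.Injective i),
      φ (x ∘ i) * edgeProd G (fun a b => Q (i a) (i b))) / (n : ℝ) ^ v

/-- The inhomogeneous V-statistic `V_n(X)` (sum over all indices). -/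
def Vstat {X : Type*} {v : ℕ} (G : SimpleGraph (Fin v)) [DecidableRel G.Adj]
    (φ : (Fin v → X) → ℝ) (n : ℕ) (Q : Fin n → Fin n → ℝ) (x : Fin n → X) : ℝ :=
  (∑ i : Fin v → Fin n, φ (x ∘ i) * edgeProd G (fun a b => Q (i a) (i b))) / (n : ℝ) ^ v

open Classical in
/-- Kullback-Leibler divergence `D(ν | ρ) ∈ [0,∞]`. -/
def KLdiv {α : Type*} [MeasurableSpace α] (ν ρ : Measure α) : ℝ≥0∞ :=
  if ν ≪ ρ ∧ Integrable (llr ν ρ) ν then ENNReal.ofReal (∫ a, llr ν ρ a ∂ν) else ⊤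

open Classical in
/-- `ν` itself if it is a probability measure, junk value `0` otherwise. -/
def probOr {α : Type*} [MeasurableSpace α] (ν : Measure α) : Measure α :=
  if IsProbabilityMeasure ν then ν else 0

instance {α : Type*} [MeasurableSpace α] (ν : Measure α) : SigmaFinite (probOr ν) := by
  unfold probOr
  split_ifs with h
  · haveI := h; infer_instance
  · infer_instance

/-- `v`-fold product of a (probability) measure. -/
def piProb {α : Type*} [MeasurableSpace α] (v : ℕ) (ν : Measure α) : Measure (Fin v → α) :=
  Measure.pi fun _ => probOr ν

/-- The functional `T_{W,φ}(ν) = E[φ(B₁,…,B_v) ∏_{(a,b) ∈ E(H)} W(A_a,A_b)]`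
for `(A_a,B_a)` i.i.d. with law `ν`. -/
def TWphi {X : Type*} [MeasurableSpace X] {v : ℕ} (G : SimpleGraph (Fin v))
    [DecidableRel G.Adj] (W : ℝ → ℝ → ℝ) (φ : (Fin v → X) → ℝ)
    (ν : Measure (ℝ × X)) : ℝ :=
  ∫ z : Fin v → ℝ × X,
    φ (fun a => (z a).2) * edgeProd G (fun a b => W (z a).1 (z b).1) ∂(piProb v ν)

/-- Membership in `𝒯ℳ`: probability measures on `[0,1] × 𝒳` whose first marginal
is uniform on `[0,1]`. -/
def inTM {X : Type*} [MeasurableSpace X] (ν : Measure (ℝ × X)) : Prop :=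
  IsProbabilityMeasure ν ∧ ν.map Prod.fst = unif01

/-- The rate function `I₀(t) = inf { D(ν|ρ) : ν ∈ 𝒯ℳ, D(ν|ρ) < ∞, T_{W,φ}(ν) = t }`. -/
def rate0 {X : Type*} [MeasurableSpace X] {v : ℕ} (G : SimpleGraph (Fin v))
    [DecidableRel G.Adj] (W : ℝ → ℝ → ℝ) (φ : (Fin v → X) → ℝ) (μ : Measure X)
    (t : ℝ) : ℝ≥0∞ :=
  ⨅ ν : {ν : Measure (ℝ × X) //
      inTM ν ∧ KLdiv ν (unif01.prod μ) ≠ ⊤ ∧ TWphi G W φ ν = t},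
    KLdiv ν.1 (unif01.prod μ)

/-- Tail assumption (T): `E_μ[e^{λ ψ(X)^p}] < ∞` for all `λ > 0`; for `p = ∞`
it means `ψ` is bounded. -/
def TailCond {X : Type*} [MeasurableSpace X] (μ : Measure X) (ψ : X → ℝ)
    (p : ℝ≥0∞) : Prop :=
  if p = ⊤ then ∃ C : ℝ, ∀ x, ψ x ≤ C
  else ∀ lam : ℝ, 0 < lam →
    ∫⁻ x, ENNReal.ofReal (Real.exp (lam * ψ x ^ p.toReal)) ∂μ < ⊤

/-- A sequence of random elements `T n` defined on probability spaces `(Ω n, P n)`,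
taking values in a topological space `E`, satisfies a large deviation principle at
speed `n` with good rate function `I`. -/
def SatisfiesLDP {E : Type*} [TopologicalSpace E] {Ω : ℕ → Type*}
    [∀ n, MeasurableSpace (Ω n)] (P : ∀ n, Measure (Ω n)) (T : ∀ n, Ω n → E)
    (I : E → ℝ≥0∞) : Prop :=
  (∀ c : ℝ≥0∞, c ≠ ⊤ → IsCompact {x | I x ≤ c}) ∧
  ∀ F : Set E, MeasurableSet[borel E] F →
    (-(⨅ x ∈ interior F, (I x : EReal)) ≤
      Filter.atTop.liminf fun n : ℕ =>
        (((n : ℝ)⁻¹ : ℝ) : EReal) * ENNReal.log (P n {ω | T n ω ∈ F})) ∧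
    (Filter.atTop.limsup (fun n : ℕ =>
        (((n : ℝ)⁻¹ : ℝ) : EReal) * ENNReal.log (P n {ω | T n ω ∈ F})) ≤
      -(⨅ x ∈ closure F, (I x : EReal)))

end
/-- `𝔑_W(x) = ∫₀¹ |W(x,y)| dy`. -/
noncomputable def degFun (W : ℝ → ℝ → ℝ) : ℝ → ℝ := fun x => ∫ y, |W x y| ∂unif01

section Part1
open MeasureTheory Filter Set
open scoped ENNReal NNReal

lemma restrict_unif (S : Set ℝ) (hS : MeasurableSet S) :
    unif01.restrict S = volume.restrict (Set.Icc (0:ℝ) 1 ∩ S) := by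
  rw [unif01, Measure.restrict_restrict hS, Set.inter_comm]

lemma cut_set_bound (D : ℝ → ℝ → ℝ)
    (h : Integrable (Function.uncurry D) (unif01.prod unif01))
    (S T : Set ℝ) (_hS : MeasurableSet S) (_hT : MeasurableSet T) :
    |∫ x in S, ∫ y in T, D x y ∂unif01 ∂unif01| ≤
      ∫ x, ∫ y, |D x y| ∂unif01 ∂unif01 := by
  have hn : Integrable (fun x => ∫ y, |D x y| ∂unif01) unif01 := by
    simpa [Function.uncurry] using h.norm.integral_prod_left
  calc |∫ x in S, ∫ y in T, D x y ∂unif01 ∂unif01|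
      ≤ ∫ x in S, |∫ y in T, D x y ∂unif01| ∂unif01 := abs_integral_le_integral_abs
    _ ≤ ∫ x in S, ∫ y, |D x y| ∂unif01 ∂unif01 := by
        apply integral_mono_of_nonneg
        · exact Eventually.of_forall fun x => abs_nonneg _
        · exact hn.restrict
        · apply ae_restrict_of_ae
          filter_upwards [h.prod_right_ae] with x hx
          refine abs_integral_le_integral_abs.trans ?_
          exact setIntegral_le_integral hx.norm (Eventually.of_forall fun y => abs_nonneg _)
    _ ≤ _ := setIntegral_le_integral hn
        (Eventually.of_forall fun y => integral_nonneg fun _ => abs_nonneg _)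

lemma cut_set (W1 W2 : ℝ → ℝ → ℝ)
    (h1 : Integrable (Function.uncurry W1) (unif01.prod unif01))
    (h2 : Integrable (Function.uncurry W2) (unif01.prod unif01))
    (S T : Set ℝ) (hS : MeasurableSet S) (hT : MeasurableSet T) :
    |∫ x in S, ∫ y in T, (W1 x y - W2 x y) ∂unif01 ∂unif01| ≤ cutDist W1 W2 := by
  have h : Integrable (Function.uncurry fun x y => W1 x y - W2 x y) (unif01.prod unif01) := h1.sub h2
  have key : ∀ S T : {S : Set ℝ // MeasurableSet S},
      |∫ x in Set.Icc (0:ℝ) 1 ∩ S.1, ∫ y in Set.Icc (0:ℝ) 1 ∩ T.1, (W1 x y - W2 x y)|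
      ≤ ∫ x, ∫ y, |W1 x y - W2 x y| ∂unif01 ∂unif01 := by
    intro S T
    rw [← restrict_unif _ S.2, ← restrict_unif _ T.2]
    exact cut_set_bound _ h S.1 T.1 S.2 T.2
  unfold cutDist
  rw [restrict_unif _ hS, restrict_unif _ hT]
  have : Nonempty {S : Set ℝ // MeasurableSet S} := ⟨⟨∅, MeasurableSet.empty⟩⟩
  refine le_trans (le_ciSup (f := fun T : {S : Set ℝ // MeasurableSet S} =>
    |∫ x in Set.Icc (0:ℝ) 1 ∩ S, ∫ y in Set.Icc (0:ℝ) 1 ∩ T.1, (W1 x y - W2 x y)|) ?_ ⟨T, hT⟩) ?_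
  · refine ⟨∫ x, ∫ y, |W1 x y - W2 x y| ∂unif01 ∂unif01, ?_⟩
    rintro _ ⟨T, rfl⟩
    exact key ⟨S, hS⟩ T
  · refine le_ciSup (f := fun S : {S : Set ℝ // MeasurableSet S} => ⨆ T : {S : Set ℝ // MeasurableSet S},
      |∫ x in Set.Icc (0:ℝ) 1 ∩ S.1, ∫ y in Set.Icc (0:ℝ) 1 ∩ T.1, (W1 x y - W2 x y)|) ?_ ⟨S, hS⟩
    refine ⟨∫ x, ∫ y, |W1 x y - W2 x y| ∂unif01 ∂unif01, ?_⟩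
    rintro _ ⟨S, rfl⟩
    exact ciSup_le fun T => key S T

lemma cut_le_L1 (W1 W2 : ℝ → ℝ → ℝ)
    (h1 : Integrable (Function.uncurry W1) (unif01.prod unif01))
    (h2 : Integrable (Function.uncurry W2) (unif01.prod unif01)) :
    cutDist W1 W2 ≤ ∫ z, |W1 z.1 z.2 - W2 z.1 z.2| ∂(unif01.prod unif01) := by
  have h : Integrable (Function.uncurry fun x y => W1 x y - W2 x y) (unif01.prod unif01) := h1.sub h2
  have e : ∫ z, |W1 z.1 z.2 - W2 z.1 z.2| ∂(unif01.prod unif01)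
      = ∫ x, ∫ y, |W1 x y - W2 x y| ∂unif01 ∂unif01 := by
    rw [integral_prod]
    exact h.norm
  rw [e]
  have : Nonempty {S : Set ℝ // MeasurableSet S} := ⟨⟨∅, MeasurableSet.empty⟩⟩
  refine ciSup_le fun S => ciSup_le fun T => ?_
  rw [← restrict_unif _ S.2, ← restrict_unif _ T.2]
  exact cut_set_bound _ h S.1 T.1 S.2 T.2

lemma cutDist_nonneg (W1 W2 : ℝ → ℝ → ℝ) : 0 ≤ cutDist W1 W2 :=
  Real.iSup_nonneg fun _ => Real.iSup_nonneg fun _ => abs_nonneg _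

lemma abs_int_le_sets {α : Type*} [MeasurableSpace α] {μ : Measure α} (F : α → ℝ)
    (hF : Integrable F μ) (f : α → ℝ) (hf1 : ∀ x, |f x| ≤ 1) (c : ℝ)
    (h : ∀ S, MeasurableSet S → |∫ x in S, F x ∂μ| ≤ c) :
    |∫ x, f x * F x ∂μ| ≤ 2 * c := by
  obtain ⟨F', hF'm, hFF'⟩ := hF.1
  have hF' : Integrable F' μ := hF.congr hFF'
  have hm : MeasurableSet {x | 0 ≤ F' x} := measurableSet_le measurable_const hF'm.measurable
  calc |∫ x, f x * F x ∂μ| ≤ ∫ x, |F' x| ∂μ := by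
        refine abs_integral_le_integral_abs.trans ?_
        refine integral_mono_of_nonneg (Eventually.of_forall fun x => abs_nonneg _) hF'.norm ?_
        filter_upwards [hFF'] with x hx
        rw [abs_mul, hx]
        calc |f x| * |F' x| ≤ 1 * |F' x| := by gcongr; exact hf1 x
          _ = _ := by rw [one_mul]
    _ = (∫ x in {x | 0 ≤ F' x}, F' x ∂μ) - ∫ x in {x | 0 ≤ F' x}ᶜ, F' x ∂μ := by
        rw [← integral_add_compl hm hF'.abs, sub_eq_add_neg, ← integral_neg]
        congr 1
        · exact setIntegral_congr_fun hm fun x hx => abs_of_nonneg hx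
        · refine setIntegral_congr_fun hm.compl fun x hx => abs_of_neg ?_
          simpa using hx
    _ = (∫ x in {x | 0 ≤ F' x}, F x ∂μ) - ∫ x in {x | 0 ≤ F' x}ᶜ, F x ∂μ := by
        congr 1 <;> exact integral_congr_ae (ae_restrict_of_ae hFF'.symm)
    _ ≤ 2 * c := by
        have a := (abs_le.1 (h _ hm)).2
        have b := (abs_le.1 (h _ hm.compl)).1
        linarith

lemma cut_bilin (W1 W2 : ℝ → ℝ → ℝ)
    (h1 : Integrable (Function.uncurry W1) (unif01.prod unif01))
    (h2 : Integrable (Function.uncurry W2) (unif01.prod unif01))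
    (f g : ℝ → ℝ) (hg : Measurable g) (hf1 : ∀ x, |f x| ≤ 1) (hg1 : ∀ x, |g x| ≤ 1) :
    |∫ x, f x * ∫ y, (W1 x y - W2 x y) * g y ∂unif01 ∂unif01| ≤ 4 * cutDist W1 W2 := by
  have h : Integrable (Function.uncurry fun x y => W1 x y - W2 x y) (unif01.prod unif01) := h1.sub h2
  have hDg : Integrable (Function.uncurry fun x y => (W1 x y - W2 x y) * g y) (unif01.prod unif01) := by
    refine h.mul_bdd (c := 1) (g := fun z : ℝ × ℝ => g z.2) ?_ ?_
    · exact (hg.comp measurable_snd).aestronglyMeasurable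
    · exact Eventually.of_forall fun z => hg1 _
  have : 4 * cutDist W1 W2 = 2 * (2 * cutDist W1 W2) := by ring
  rw [this]
  apply abs_int_le_sets _ _ _ hf1
  · intro S hS
    have hDg' : Integrable (Function.uncurry fun x y => (W1 x y - W2 x y) * g y)
        ((unif01.restrict S).prod unif01) := by
      have := hDg.restrict (s := S ×ˢ univ)
      rwa [← Measure.prod_restrict, Measure.restrict_univ] at this
    have h' : Integrable (Function.uncurry fun x y => (W1 x y - W2 x y))
        ((unif01.restrict S).prod unif01) := by
      have := h.restrict (s := S ×ˢ univ)
      rwa [← Measure.prod_restrict, Measure.restrict_univ] at this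
    rw [integral_integral_swap hDg']
    have e : ∀ y, ∫ x in S, (W1 x y - W2 x y) * g y ∂unif01 =
        g y * ∫ x in S, (W1 x y - W2 x y) ∂unif01 := fun y => by
      rw [integral_mul_const, mul_comm]
    simp_rw [e]
    apply abs_int_le_sets _ _ _ hg1
    · intro T hT
      have h'' : Integrable (Function.uncurry fun x y => (W1 x y - W2 x y))
          ((unif01.restrict S).prod (unif01.restrict T)) := by
        have := h.restrict (s := S ×ˢ T)
        rwa [← Measure.prod_restrict] at this
      rw [← integral_integral_swap h'']
      exact cut_set W1 W2 h1 h2 S T hS hT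
    · exact h'.integral_prod_right
  · exact hDg.integral_prod_left

end Part1

section Part2
open MeasureTheory Filter Set
open scoped ENNReal NNReal

lemma abs_prod_le_pow {ι : Type*} (s : Finset ι) (f : ι → ℝ) (M : ℝ) (h : ∀ b ∈ s, |f b| ≤ M) :
    |∏ b ∈ s, f b| ≤ M ^ s.card := by
  rw [Finset.abs_prod, ← Finset.prod_const]
  exact Finset.prod_le_prod (fun b _ => abs_nonneg _) h

/-- one-leaf integral -/
noncomputable def leafInt (K : ℝ → ℝ → ℝ) (h : ℝ → ℝ) (x : ℝ) : ℝ := ∫ y, K x y * h y ∂unif01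

/-- star functional for product test functions -/
noncomputable def starS (m : ℕ) (K : ℝ → ℝ → ℝ) (h0 : ℝ → ℝ) (h : Fin m → ℝ → ℝ) : ℝ :=
  ∫ x, h0 x * ∏ b, leafInt K (h b) x ∂unif01

lemma leafInt_meas (K : ℝ → ℝ → ℝ) (hK : Measurable (Function.uncurry K)) (h : ℝ → ℝ)
    (hh : Measurable h) : Measurable (leafInt K h) := by
  have : StronglyMeasurable (Function.uncurry fun x y => K x y * h y) :=
    (hK.mul (hh.comp measurable_snd)).stronglyMeasurable
  exact (this.integral_prod_right (ν := unif01)).measurable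

lemma degFun_meas (K : ℝ → ℝ → ℝ) (hK : Measurable (Function.uncurry K)) :
    Measurable (degFun K) := by
  have : StronglyMeasurable (Function.uncurry fun x y => |K x y|) :=
    (hK.norm).stronglyMeasurable
  exact (this.integral_prod_right (ν := unif01)).measurable

lemma degFun_nonneg (K : ℝ → ℝ → ℝ) (x : ℝ) : 0 ≤ degFun K x :=
  integral_nonneg fun _ => abs_nonneg _

lemma leafInt_le (K : ℝ → ℝ → ℝ) (h : ℝ → ℝ) (h1 : ∀ y, |h y| ≤ 1) (x : ℝ)
    (hx : Integrable (K x) unif01) : |leafInt K h x| ≤ degFun K x := by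
  refine abs_integral_le_integral_abs.trans ?_
  refine integral_mono_of_nonneg (Eventually.of_forall fun x => abs_nonneg _) hx.norm ?_
  refine Eventually.of_forall fun y => ?_
  show |K x y * h y| ≤ |K x y|
  rw [abs_mul]
  exact mul_le_of_le_one_right (abs_nonneg _) (h1 y)

lemma leafInt_sub (K1 K2 : ℝ → ℝ → ℝ) (h : ℝ → ℝ) (hh : Measurable h) (h1 : ∀ y, |h y| ≤ 1) (x : ℝ)
    (hx1 : Integrable (K1 x) unif01) (hx2 : Integrable (K2 x) unif01) :
    leafInt K1 h x - leafInt K2 h x = ∫ y, (K1 x y - K2 x y) * h y ∂unif01 := by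
  unfold leafInt
  rw [← integral_sub]
  · congr 1; ext y; ring
  · exact hx1.mul_bdd (c := 1) hh.aestronglyMeasurable (Eventually.of_forall h1)
  · exact hx2.mul_bdd (c := 1) hh.aestronglyMeasurable (Eventually.of_forall h1)

lemma star_on_B (m : ℕ) (K1 K2 : ℝ → ℝ → ℝ)
    (hm1 : Measurable (Function.uncurry K1)) (hm2 : Measurable (Function.uncurry K2))
    (hi1 : Integrable (Function.uncurry K1) (unif01.prod unif01))
    (hi2 : Integrable (Function.uncurry K2) (unif01.prod unif01))
    (h : Fin m → ℝ → ℝ) (hh : ∀ b, Measurable (h b)) (hh1 : ∀ b y, |h b y| ≤ 1)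
    (M : ℝ) (hM : 1 ≤ M) (B : Set ℝ)
    (hB : ∀ x ∈ B, Integrable (K1 x) unif01 ∧ Integrable (K2 x) unif01 ∧ degFun K1 x ≤ M ∧
      degFun K2 x ≤ M) (s : Finset (Fin m)) :
    ∀ h0 : ℝ → ℝ, Measurable h0 → (∀ x, |h0 x| ≤ 1) → (∀ x ∉ B, h0 x = 0) →
    |∫ x, h0 x * (∏ b ∈ s, leafInt K1 (h b) x - ∏ b ∈ s, leafInt K2 (h b) x) ∂unif01| ≤
      s.card * M ^ s.card * (4 * cutDist K1 K2) := by
  classical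
  have hc := cutDist_nonneg K1 K2
  have hM0 : 0 < M := by linarith
  have l1 : ∀ b, ∀ x ∈ B, |leafInt K1 (h b) x| ≤ M := fun b x hx =>
    (leafInt_le K1 _ (hh1 b) x (hB x hx).1).trans (hB x hx).2.2.1
  have l2 : ∀ b, ∀ x ∈ B, |leafInt K2 (h b) x| ≤ M := fun b x hx =>
    (leafInt_le K2 _ (hh1 b) x (hB x hx).2.1).trans (hB x hx).2.2.2
  have p1 : ∀ s : Finset (Fin m), ∀ x ∈ B, |∏ b ∈ s, leafInt K1 (h b) x| ≤ M ^ s.card := by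
    intro s x hx
    exact abs_prod_le_pow _ _ _ fun b _ => l1 b x hx
  have p2 : ∀ s : Finset (Fin m), ∀ x ∈ B, |∏ b ∈ s, leafInt K2 (h b) x| ≤ M ^ s.card := by
    intro s x hx
    exact abs_prod_le_pow _ _ _ fun b _ => l2 b x hx
  have q1 : ∀ s : Finset (Fin m), Measurable fun x => ∏ b ∈ s, leafInt K1 (h b) x := fun s =>
    Finset.measurable_prod _ fun b _ => leafInt_meas K1 hm1 _ (hh b)
  have q2 : ∀ s : Finset (Fin m), Measurable fun x => ∏ b ∈ s, leafInt K2 (h b) x := fun s =>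
    Finset.measurable_prod _ fun b _ => leafInt_meas K2 hm2 _ (hh b)
  induction s using Finset.induction_on with
  | empty => intro h0 _ _ _; simp
  | insert a s ha ih =>
    intro h0 h0m h01 h0B
    rw [Finset.card_insert_of_notMem ha]
    -- the two test functions
    set f1 : ℝ → ℝ := fun x => h0 x * (∏ b ∈ s, leafInt K1 (h b) x) / M ^ s.card with hf1
    set f2 : ℝ → ℝ := fun x => h0 x * leafInt K2 (h a) x / M with hf2
    have b1 : ∀ x, |f1 x| ≤ 1 := by
      intro x
      by_cases hx : x ∈ B
      · rw [hf1]; simp only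
        rw [abs_div, abs_mul, abs_of_pos (pow_pos hM0 _), div_le_one (pow_pos hM0 _)]
        calc _ ≤ 1 * M ^ s.card := by gcongr; exacts [h01 x, p1 s x hx]
          _ = _ := one_mul _
      · simp [hf1, h0B x hx]
    have b2 : ∀ x, |f2 x| ≤ 1 := by
      intro x
      by_cases hx : x ∈ B
      · rw [hf2]; simp only
        rw [abs_div, abs_mul, abs_of_pos hM0, div_le_one hM0]
        calc _ ≤ 1 * M := by gcongr; exacts [h01 x, l2 a x hx]
          _ = _ := one_mul _
      · simp [hf2, h0B x hx]
    have m2 : Measurable f2 := (h0m.mul (leafInt_meas K2 hm2 _ (hh a))).div_const _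
    have m1 : Measurable f1 := (h0m.mul (q1 s)).div_const _
    have c1 := cut_bilin K1 K2 hi1 hi2 f1 (h a) (hh a) b1 (hh1 a)
    have c2 := ih f2 m2 b2 (fun x hx => by simp [hf2, h0B x hx])
    have e : ∀ x, h0 x * (∏ b ∈ insert a s, leafInt K1 (h b) x - ∏ b ∈ insert a s, leafInt K2 (h b) x)
        = M ^ s.card * (f1 x * ∫ y, (K1 x y - K2 x y) * h a y ∂unif01) +
          M * (f2 x * (∏ b ∈ s, leafInt K1 (h b) x - ∏ b ∈ s, leafInt K2 (h b) x)) := by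
      intro x
      by_cases hx : x ∈ B
      · rw [← leafInt_sub K1 K2 (h a) (hh a) (hh1 a) x (hB x hx).1 (hB x hx).2.1]
        rw [Finset.prod_insert ha, Finset.prod_insert ha]
        have : M ^ s.card ≠ 0 := (pow_pos hM0 _).ne'
        simp only [hf1, hf2]
        field_simp
        ring
      · simp [hf1, hf2, h0B x hx]
    simp_rw [e]
    have i1 : Integrable (fun x => M ^ s.card * (f1 x * ∫ y, (K1 x y - K2 x y) * h a y ∂unif01)) unif01 := by
      refine Integrable.const_mul ?_ _
      have hI : Integrable (fun x => ∫ y, (K1 x y - K2 x y) * h a y ∂unif01) unif01 := by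
        have : Integrable (fun z : ℝ × ℝ => (K1 z.1 z.2 - K2 z.1 z.2) * h a z.2) (unif01.prod unif01) :=
          (hi1.sub hi2).mul_bdd (c := 1) (g := fun z : ℝ × ℝ => h a z.2)
            ((hh a).comp measurable_snd).aestronglyMeasurable (Eventually.of_forall fun z => hh1 a _)
        exact this.integral_prod_left
      exact hI.bdd_mul (c := 1) m1.aestronglyMeasurable (Eventually.of_forall b1)
    have i2 : Integrable (fun x => M * (f2 x * (∏ b ∈ s, leafInt K1 (h b) x - ∏ b ∈ s, leafInt K2 (h b) x))) unif01 := by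
      refine Integrable.const_mul ?_ _
      refine Integrable.of_bound (C := 2 * M ^ s.card) (m2.mul ((q1 s).sub (q2 s))).aestronglyMeasurable
        (Eventually.of_forall fun x => ?_)
      rw [Real.norm_eq_abs]
      by_cases hx : x ∈ B
      · rw [abs_mul]
        calc _ ≤ 1 * (M ^ s.card + M ^ s.card) := by
              gcongr
              · exact b2 x
              · exact (abs_sub _ _).trans (add_le_add (p1 s x hx) (p2 s x hx))
          _ = _ := by ring
      · have : f2 x = 0 := by simp [hf2, h0B x hx]
        rw [this]; simp; positivity
    rw [integral_add i1 i2, integral_const_mul, integral_const_mul]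
    refine (abs_add_le _ _).trans ?_
    rw [abs_mul, abs_mul, abs_of_pos (pow_pos hM0 _), abs_of_pos hM0]
    have hp : M ^ s.card ≤ M ^ (s.card + 1) := pow_le_pow_right₀ hM (Nat.le_succ _)
    calc _ ≤ M ^ s.card * (4 * cutDist K1 K2) + M * (s.card * M ^ s.card * (4 * cutDist K1 K2)) := by
          gcongr
      _ ≤ M ^ (s.card + 1) * (4 * cutDist K1 K2) + M * (s.card * M ^ s.card * (4 * cutDist K1 K2)) := by
          gcongr
      _ = _ := by push_cast; ring

/-- tail of the degree function -/
noncomputable def degTail (m : ℕ) (K : ℝ → ℝ → ℝ) (M : ℝ) (x : ℝ) : ℝ :=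
  if M < degFun K x then degFun K x ^ m else 0

lemma degTail_nonneg (m : ℕ) (K : ℝ → ℝ → ℝ) (M x : ℝ) : 0 ≤ degTail m K M x := by
  unfold degTail; split_ifs
  · exact pow_nonneg (degFun_nonneg _ _) _
  · exact le_rfl

lemma degTail_int (m : ℕ) (K : ℝ → ℝ → ℝ) (hm : Measurable (Function.uncurry K)) (M : ℝ)
    (h : Integrable (fun x => degFun K x ^ m) unif01) : Integrable (degTail m K M) unif01 := by
  refine h.mono ?_ ?_
  · exact (Measurable.ite (measurableSet_lt measurable_const (degFun_meas K hm))
      ((degFun_meas K hm).pow_const m) measurable_const).aestronglyMeasurable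
  · refine Eventually.of_forall fun x => ?_
    have := degFun_nonneg K x
    unfold degTail; split_ifs
    · exact le_rfl
    · simp

lemma starS_diff (m : ℕ) (K1 K2 : ℝ → ℝ → ℝ)
    (hm1 : Measurable (Function.uncurry K1)) (hm2 : Measurable (Function.uncurry K2))
    (hi1 : Integrable (Function.uncurry K1) (unif01.prod unif01))
    (hi2 : Integrable (Function.uncurry K2) (unif01.prod unif01))
    (hd1 : Integrable (fun x => degFun K1 x ^ m) unif01)
    (hd2 : Integrable (fun x => degFun K2 x ^ m) unif01)
    (h0 : ℝ → ℝ) (h0m : Measurable h0) (h01 : ∀ x, |h0 x| ≤ 1)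
    (h : Fin m → ℝ → ℝ) (hh : ∀ b, Measurable (h b)) (hh1 : ∀ b y, |h b y| ≤ 1)
    (M : ℝ) (hM : 1 ≤ M) :
    |starS m K1 h0 h - starS m K2 h0 h| ≤
      2 * (∫ x, degTail m K1 M x ∂unif01 + ∫ x, degTail m K2 M x ∂unif01) +
      m * M ^ m * (4 * cutDist K1 K2) := by
  set B : Set ℝ := {x | Integrable (K1 x) unif01} ∩ {x | Integrable (K2 x) unif01} ∩
    ({x | degFun K1 x ≤ M} ∩ {x | degFun K2 x ≤ M}) with hBdef
  have hBm : MeasurableSet B :=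
    ((measurableSet_integrable hm1.stronglyMeasurable).inter
      (measurableSet_integrable hm2.stronglyMeasurable)).inter
      ((measurableSet_le (degFun_meas K1 hm1) measurable_const).inter
      (measurableSet_le (degFun_meas K2 hm2) measurable_const))
  have ae1 : ∀ᵐ x ∂unif01, Integrable (K1 x) unif01 := hi1.prod_right_ae
  have ae2 : ∀ᵐ x ∂unif01, Integrable (K2 x) unif01 := hi2.prod_right_ae
  have pb : ∀ K : ℝ → ℝ → ℝ, ∀ x, Integrable (K x) unif01 →
      |∏ b, leafInt K (h b) x| ≤ degFun K x ^ m := by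
    intro K x hx
    refine (abs_prod_le_pow _ _ _ fun b _ => leafInt_le K (h b) (hh1 b) x hx).trans ?_
    simp
  have int : ∀ K : ℝ → ℝ → ℝ, Measurable (Function.uncurry K) → (∀ᵐ x ∂unif01, Integrable (K x) unif01) →
      Integrable (fun x => degFun K x ^ m) unif01 →
      Integrable (fun x => h0 x * ∏ b, leafInt K (h b) x) unif01 := by
    intro K hKm hae hd
    refine hd.mono' (h0m.mul (Finset.measurable_prod _ fun b _ => leafInt_meas K hKm _ (hh b))).aestronglyMeasurable ?_
    filter_upwards [hae] with x hx
    rw [Real.norm_eq_abs, abs_mul]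
    calc _ ≤ 1 * degFun K x ^ m := by gcongr; exacts [h01 x, pb K x hx]
      _ = _ := one_mul _
  have I1 := int K1 hm1 ae1 hd1
  have I2 := int K2 hm2 ae2 hd2
  have key := star_on_B m K1 K2 hm1 hm2 hi1 hi2 h hh hh1 M hM B
    (fun x hx => ⟨hx.1.1, hx.1.2, hx.2.1, hx.2.2⟩) Finset.univ (B.indicator h0) (h0m.indicator hBm)
    (fun x => by
      by_cases hx : x ∈ B
      · simpa [hx] using h01 x
      · simp [hx]) (fun x hx => by simp [hx])
  simp only [Finset.card_univ, Fintype.card_fin] at key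
  unfold starS
  rw [← integral_sub I1 I2]
  have I12 : Integrable (fun x => h0 x * ∏ b, leafInt K1 (h b) x - h0 x * ∏ b, leafInt K2 (h b) x) unif01 :=
    I1.sub I2
  rw [← integral_add_compl hBm I12]
  refine (abs_add_le _ _).trans ?_
  rw [add_comm]
  refine add_le_add ?_ ?_
  · rw [← integral_add (degTail_int m K1 hm1 M hd1) (degTail_int m K2 hm2 M hd2), ← integral_const_mul]
    rw [← integral_indicator hBm.compl]
    refine abs_integral_le_integral_abs.trans ?_
    refine integral_mono_of_nonneg (Eventually.of_forall fun x => abs_nonneg _)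
      (((degTail_int m K1 hm1 M hd1).add (degTail_int m K2 hm2 M hd2)).const_mul 2) ?_
    filter_upwards [ae1, ae2] with x hx1 hx2
    have n1 := degTail_nonneg m K1 M x
    have n2 := degTail_nonneg m K2 M x
    by_cases hx : x ∈ B
    · simp only [Set.indicator, Set.mem_compl_iff, hx, not_true_eq_false, if_false, abs_zero]
      positivity
    · simp only [Set.indicator, Set.mem_compl_iff, hx, not_false_eq_true, if_true, Pi.sub_apply]
      have t1 := pb K1 x hx1
      have t2 := pb K2 x hx2
      have d1 := degFun_nonneg K1 x
      have d2 := degFun_nonneg K2 x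
      have A : |h0 x * ∏ b, leafInt K1 (h b) x - h0 x * ∏ b, leafInt K2 (h b) x| ≤
          degFun K1 x ^ m + degFun K2 x ^ m := by
        rw [← mul_sub, abs_mul]
        calc _ ≤ 1 * (degFun K1 x ^ m + degFun K2 x ^ m) := by
              gcongr
              · exact h01 x
              · exact (abs_sub _ _).trans (add_le_add t1 t2)
          _ = _ := one_mul _
      refine A.trans ?_
      have hx' : M < degFun K1 x ∨ M < degFun K2 x := by
        by_contra hcon
        push Not at hcon
        exact hx ⟨⟨hx1, hx2⟩, hcon⟩
      unfold degTail
      rcases le_total (degFun K1 x) (degFun K2 x) with hle | hle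
      · have hl : M < degFun K2 x := by rcases hx' with h | h <;> linarith
        have := pow_le_pow_left₀ d1 hle m
        rw [if_pos hl]
        split_ifs
        · nlinarith [pow_nonneg d1 m, pow_nonneg d2 m]
        · nlinarith [pow_nonneg d1 m, pow_nonneg d2 m]
      · have hl : M < degFun K1 x := by rcases hx' with h | h <;> linarith
        have := pow_le_pow_left₀ d2 hle m
        rw [if_pos hl]
        split_ifs
        · nlinarith [pow_nonneg d1 m, pow_nonneg d2 m]
        · nlinarith [pow_nonneg d1 m, pow_nonneg d2 m]
  · refine le_trans (le_of_eq ?_) key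
    rw [← integral_indicator hBm]
    congr 2
    ext x
    by_cases hx : x ∈ B
    · simp [hx, mul_sub]
    · simp [hx]

end Part2

section Part3
open MeasureTheory Filter Set
open scoped ENNReal NNReal

lemma edgeProd_star {m : ℕ} (G : SimpleGraph (Fin (m+1))) [DecidableRel G.Adj]
    (hstar : ∀ a b : Fin (m+1), G.Adj a b ↔ (a ≠ b ∧ (a = 0 ∨ b = 0)))
    (f : Fin (m+1) → Fin (m+1) → ℝ) : edgeProd G f = ∏ b : Fin m, f 0 b.succ := by
  unfold edgeProd
  symm
  refine Finset.prod_bij (fun b _ => ((0 : Fin (m+1)), b.succ)) ?_ ?_ ?_ ?_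
  · intro b _
    simp only [Finset.mem_filter, Finset.mem_univ, true_and, hstar]
    exact ⟨⟨(Fin.succ_ne_zero b).symm, by simp⟩, Fin.succ_pos b⟩
  · intro a _ b _ hab
    simpa using hab
  · rintro ⟨a, b⟩ hab
    simp only [Finset.mem_filter, Finset.mem_univ, true_and, hstar] at hab
    obtain ⟨⟨hne, h0⟩, hlt⟩ := hab
    have ha : a = 0 := by
      rcases h0 with h | h
      · exact h
      · subst h; exact absurd hlt (Fin.not_lt_zero a)
    subst ha
    obtain ⟨c, rfl⟩ := Fin.exists_succ_eq.2 hne.symm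
    exact ⟨c, Finset.mem_univ _, rfl⟩
  · intro a _; rfl

section
variable {X : Type*} [MetricSpace X] [CompactSpace X] [MeasurableSpace X] [BorelSpace X]

/-- the star functional -/
noncomputable def starT {X : Type*} [MeasurableSpace X] (m : ℕ) (W : ℝ → ℝ → ℝ)
    (φ : (Fin (m+1) → X) → ℝ) (ν : Measure (ℝ × X)) : ℝ :=
  ∫ z : Fin (m+1) → ℝ × X, φ (fun a => (z a).2) * ∏ b : Fin m, W (z 0).1 (z b.succ).1
    ∂(Measure.pi fun _ => ν)

lemma TWphi_star {X : Type*} [MeasurableSpace X] {m : ℕ} (G : SimpleGraph (Fin (m+1))) [DecidableRel G.Adj]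
    (hstar : ∀ a b : Fin (m+1), G.Adj a b ↔ (a ≠ b ∧ (a = 0 ∨ b = 0)))
    (W : ℝ → ℝ → ℝ) (φ : (Fin (m+1) → X) → ℝ) (ν : Measure (ℝ × X)) [h : IsProbabilityMeasure ν] :
    TWphi G W φ ν = starT m W φ ν := by
  unfold TWphi starT piProb
  have : probOr ν = ν := by unfold probOr; rw [if_pos h]
  have e : (Measure.pi fun _ : Fin (m+1) => probOr ν) = Measure.pi fun _ => ν := by
    congr 1; ext1 i; exact this
  rw [e]
  simp_rw [edgeProd_star G hstar]

lemma starKer_unif (m : ℕ) (W : ℝ → ℝ → ℝ) (hm : Measurable (Function.uncurry W))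
    (hi : Integrable (Function.uncurry W) (unif01.prod unif01))
    (hd : Integrable (fun x => degFun W x ^ m) unif01) :
    Integrable (fun z : ℝ × (Fin m → ℝ) => ∏ b : Fin m, W z.1 (z.2 b))
      (unif01.prod (Measure.pi fun _ => unif01)) ∧
    ∫ z : ℝ × (Fin m → ℝ), |∏ b : Fin m, W z.1 (z.2 b)| ∂(unif01.prod (Measure.pi fun _ => unif01))
      = ∫ x, degFun W x ^ m ∂unif01 := by
  have meas : Measurable (fun z : ℝ × (Fin m → ℝ) => ∏ b : Fin m, W z.1 (z.2 b)) := by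
    refine Finset.measurable_prod _ fun b _ => ?_
    exact hm.comp (measurable_fst.prodMk ((measurable_pi_apply b).comp measurable_snd))
  have e : ∀ x, ∫ y : Fin m → ℝ, ‖∏ b : Fin m, W x (y b)‖ ∂(Measure.pi fun _ => unif01) = degFun W x ^ m := by
    intro x
    simp_rw [norm_prod]
    rw [integral_fintype_prod_eq_prod (fun _ y => ‖W x y‖)]
    simp [degFun]
  have I : Integrable (fun z : ℝ × (Fin m → ℝ) => ∏ b : Fin m, W z.1 (z.2 b))
      (unif01.prod (Measure.pi fun _ => unif01)) := by
    rw [integrable_prod_iff meas.aestronglyMeasurable]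
    constructor
    · filter_upwards [hi.prod_right_ae] with x hx
      exact Integrable.fintype_prod (f := fun _ y => W x y) fun _ => hx
    · simp_rw [e]; exact hd
  refine ⟨I, ?_⟩
  have : Integrable (fun z : ℝ × (Fin m → ℝ) => |∏ b : Fin m, W z.1 (z.2 b)|)
      (unif01.prod (Measure.pi fun _ => unif01)) := I.norm
  rw [integral_prod _ this]
  exact integral_congr_ae (Eventually.of_forall e)

lemma mp_star {X : Type*} [MeasurableSpace X] (m : ℕ) (ν : Measure (ℝ × X)) [IsProbabilityMeasure ν] (hν : ν.map Prod.fst = unif01) :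
    MeasurePreserving (fun z : Fin (m+1) → ℝ × X => ((z 0).1, fun b : Fin m => (z b.succ).1))
      (Measure.pi fun _ => ν) (unif01.prod (Measure.pi fun _ => unif01)) := by
  have h1 : MeasurePreserving (fun (z : Fin (m+1) → ℝ × X) i => (z i).1) (Measure.pi fun _ => ν)
      (Measure.pi fun _ => unif01) := by
    refine ⟨by fun_prop, ?_⟩
    have : ∀ i : Fin (m+1), SigmaFinite (Measure.map (Prod.fst) ν) := fun _ => by rw [hν]; infer_instance
    rw [Measure.pi_map_pi (μ := fun _ => ν) (f := fun _ => Prod.fst) (fun _ => measurable_fst.aemeasurable)]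
    congr 1; ext1 i; exact hν
  have h2 := measurePreserving_piFinSuccAbove (fun _ : Fin (m+1) => unif01) 0
  exact h2.comp h1

lemma starKer_int {X : Type*} [MeasurableSpace X] (m : ℕ) (W : ℝ → ℝ → ℝ) (hm : Measurable (Function.uncurry W))
    (hi : Integrable (Function.uncurry W) (unif01.prod unif01))
    (hd : Integrable (fun x => degFun W x ^ m) unif01)
    (ν : Measure (ℝ × X)) [IsProbabilityMeasure ν] (hν : ν.map Prod.fst = unif01) :
    Integrable (fun z : Fin (m+1) → ℝ × X => ∏ b : Fin m, W (z 0).1 (z b.succ).1)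
      (Measure.pi fun _ => ν) ∧
    ∫ z : Fin (m+1) → ℝ × X, |∏ b : Fin m, W (z 0).1 (z b.succ).1| ∂(Measure.pi fun _ => ν)
      = ∫ x, degFun W x ^ m ∂unif01 := by
  obtain ⟨a, b⟩ := starKer_unif m W hm hi hd
  have mp := mp_star m ν hν
  refine ⟨mp.integrable_comp_of_integrable a, ?_⟩
  rw [← b, ← mp.map_eq, integral_map mp.measurable.aemeasurable]
  rw [mp.map_eq]; exact a.1.norm

lemma starT_integrable (m : ℕ) (W : ℝ → ℝ → ℝ) (hm : Measurable (Function.uncurry W))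
    (hi : Integrable (Function.uncurry W) (unif01.prod unif01))
    (hd : Integrable (fun x => degFun W x ^ m) unif01)
    (ν : Measure (ℝ × X)) [IsProbabilityMeasure ν] (hν : ν.map Prod.fst = unif01)
    (φ : C(Fin (m+1) → X, ℝ)) :
    Integrable (fun z : Fin (m+1) → ℝ × X => φ (fun a => (z a).2) * ∏ b : Fin m, W (z 0).1 (z b.succ).1)
      (Measure.pi fun _ => ν) := by
  refine (starKer_int m W hm hi hd ν hν).1.bdd_mul (c := ‖φ‖) ?_ ?_
  · have : Measurable fun z : Fin (m+1) → ℝ × X => fun a => (z a).2 := by fun_prop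
    exact (φ.continuous.measurable.comp this).aestronglyMeasurable
  · exact Eventually.of_forall fun z => φ.norm_coe_le_norm _

lemma starT_bound (m : ℕ) (W : ℝ → ℝ → ℝ) (hm : Measurable (Function.uncurry W))
    (hi : Integrable (Function.uncurry W) (unif01.prod unif01))
    (hd : Integrable (fun x => degFun W x ^ m) unif01)
    (ν : Measure (ℝ × X)) [IsProbabilityMeasure ν] (hν : ν.map Prod.fst = unif01)
    (φ : C(Fin (m+1) → X, ℝ)) :
    |starT m W φ ν| ≤ ‖φ‖ * ∫ x, degFun W x ^ m ∂unif01 := by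
  obtain ⟨a, b⟩ := starKer_int m W hm hi hd ν hν
  unfold starT
  rw [← b, ← integral_const_mul]
  refine abs_integral_le_integral_abs.trans ?_
  refine integral_mono_of_nonneg (Eventually.of_forall fun x => abs_nonneg _) (a.norm.const_mul _) ?_
  refine Eventually.of_forall fun z => ?_
  simp only [abs_mul]
  gcongr
  exact φ.norm_coe_le_norm _

lemma starT_add (m : ℕ) (W : ℝ → ℝ → ℝ) (hm : Measurable (Function.uncurry W))
    (hi : Integrable (Function.uncurry W) (unif01.prod unif01))
    (hd : Integrable (fun x => degFun W x ^ m) unif01)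
    (ν : Measure (ℝ × X)) [IsProbabilityMeasure ν] (hν : ν.map Prod.fst = unif01)
    (φ ψ : C(Fin (m+1) → X, ℝ)) :
    starT m W (φ + ψ : C(Fin (m+1) → X, ℝ)) ν = starT m W φ ν + starT m W ψ ν := by
  unfold starT
  rw [← integral_add (starT_integrable m W hm hi hd ν hν φ) (starT_integrable m W hm hi hd ν hν ψ)]
  congr 1; ext z; simp [add_mul]

lemma starT_smul (m : ℕ) (W : ℝ → ℝ → ℝ)
    (ν : Measure (ℝ × X)) (c : ℝ) (φ : C(Fin (m+1) → X, ℝ)) :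
    starT m W (c • φ : C(Fin (m+1) → X, ℝ)) ν = c * starT m W φ ν := by
  unfold starT
  rw [← integral_const_mul]
  congr 1; ext z; simp [mul_assoc]

/-- conditional average of `ψ` given the first coordinate -/
noncomputable def condInt {X : Type*} [MetricSpace X] [CompactSpace X] [MeasurableSpace X] [BorelSpace X]
    [Nonempty X] (ν : Measure (ℝ × X)) [IsFiniteMeasure ν] (ψ : X → ℝ) (t : ℝ) : ℝ :=
  ∫ x, ψ x ∂(ν.condKernel t)

lemma condInt_meas [Nonempty X] (ν : Measure (ℝ × X)) [IsFiniteMeasure ν] (ψ : X → ℝ) (hψ : Measurable ψ) :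
    Measurable (condInt ν ψ) :=
  (hψ.stronglyMeasurable.integral_kernel (κ := ν.condKernel)).measurable

lemma condInt_le [Nonempty X] (ν : Measure (ℝ × X)) [IsFiniteMeasure ν] (ψ : X → ℝ) (h1 : ∀ x, |ψ x| ≤ 1) (t : ℝ) :
    |condInt ν ψ t| ≤ 1 := by
  have := norm_integral_le_of_norm_le_const (μ := ν.condKernel t) (f := ψ) (C := 1)
    (Eventually.of_forall h1)
  simpa [condInt] using this

lemma integral_disint [Nonempty X] (ν : Measure (ℝ × X)) [IsProbabilityMeasure ν] (hν : ν.map Prod.fst = unif01)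
    (ψ : X → ℝ) (hψ : Measurable ψ) (h1 : ∀ x, |ψ x| ≤ 1) (R : ℝ → ℝ) (hR : Integrable R unif01) :
    ∫ w, R w.1 * ψ w.2 ∂ν = ∫ y, R y * condInt ν ψ y ∂unif01 := by
  have hRν : Integrable (fun w : ℝ × X => R w.1) ν := by
    have mp : MeasurePreserving Prod.fst ν unif01 := ⟨measurable_fst, hν⟩
    exact mp.integrable_comp_of_integrable hR
  have hI : Integrable (fun w : ℝ × X => R w.1 * ψ w.2) ν :=
    hRν.mul_bdd (c := 1) (hψ.comp measurable_snd).aestronglyMeasurable (Eventually.of_forall fun w => h1 _)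
  have hd := ν.disintegrate ν.condKernel
  have hf : ν.fst = unif01 := hν
  conv_lhs => rw [← hd]
  rw [Measure.integral_compProd (by rw [hd]; exact hI), hf]
  simp_rw [integral_const_mul]
  rfl

lemma starT_prod [Nonempty X] (m : ℕ) (W : ℝ → ℝ → ℝ) (hm : Measurable (Function.uncurry W))
    (hi : Integrable (Function.uncurry W) (unif01.prod unif01))
    (hd : Integrable (fun x => degFun W x ^ m) unif01)
    (ν : Measure (ℝ × X)) [IsProbabilityMeasure ν] (hν : ν.map Prod.fst = unif01)
    (ψ : Fin (m+1) → X → ℝ) (hψ : ∀ a, Measurable (ψ a)) (h1 : ∀ a x, |ψ a x| ≤ 1) :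
    starT m W (fun x => ∏ a, ψ a (x a)) ν =
      starS m W (condInt ν (ψ 0)) (fun b => condInt ν (ψ b.succ)) := by
  have mp := measurePreserving_piFinSuccAbove (fun _ : Fin (m+1) => ν) 0
  set g : (ℝ × X) × (Fin m → ℝ × X) → ℝ := fun z => ψ 0 z.1.2 * ∏ b : Fin m, (W z.1.1 (z.2 b).1 * ψ b.succ (z.2 b).2) with hg
  have hgm : Measurable g := by
    refine ((hψ 0).comp (by fun_prop)).mul (Finset.measurable_prod _ fun b _ => ?_)
    refine Measurable.mul ?_ ((hψ _).comp (by fun_prop))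
    exact hm.comp (Measurable.prodMk (by fun_prop) (by fun_prop))
  have hT : starT m W (fun x => ∏ a, ψ a (x a)) ν = ∫ z, g z ∂(ν.prod (Measure.pi fun _ => ν)) := by
    rw [← mp.map_eq, integral_map mp.measurable.aemeasurable hgm.aestronglyMeasurable]
    unfold starT
    congr 1; ext z
    show (∏ a, ψ a (z a).2) * _ = _
    rw [Fin.prod_univ_succ, hg]
    simp only [MeasurableEquiv.piFinSuccAbove_apply, Fin.insertNthEquiv_symm_apply, Fin.removeNth,
      Fin.zero_succAbove, Finset.prod_mul_distrib]
    ring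
  have hgI : Integrable g (ν.prod (Measure.pi fun _ => ν)) := by
    rw [← mp.integrable_comp hgm.aestronglyMeasurable]
    refine (starKer_int m W hm hi hd ν hν).1.mono (hgm.comp mp.measurable).aestronglyMeasurable ?_
    refine Eventually.of_forall fun z => ?_
    simp only [hg, Function.comp_apply, MeasurableEquiv.piFinSuccAbove_apply, Fin.insertNthEquiv_symm_apply, Fin.removeNth,
      Fin.zero_succAbove, Finset.prod_mul_distrib, norm_mul, norm_prod]
    have a1 : ‖ψ 0 (z 0).2‖ ≤ 1 := h1 _ _
    have a2 : ∏ b : Fin m, ‖ψ b.succ (z b.succ).2‖ ≤ 1 :=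
      Finset.prod_le_one (fun b _ => norm_nonneg _) fun b _ => h1 _ _
    have a3 : 0 ≤ ∏ b : Fin m, ‖W (z 0).1 (z b.succ).1‖ := Finset.prod_nonneg fun b _ => norm_nonneg _
    have a4 : 0 ≤ ∏ b : Fin m, ‖ψ b.succ (z b.succ).2‖ := Finset.prod_nonneg fun b _ => norm_nonneg _
    calc _ ≤ 1 * ((∏ b : Fin m, ‖W (z 0).1 (z b.succ).1‖) * 1) := by gcongr
      _ = _ := by ring
  have ae1 : ∀ᵐ x ∂unif01, Integrable (W x) unif01 := hi.prod_right_ae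
  have ae1' : ∀ᵐ w ∂ν, Integrable (W w.1) unif01 := by
    have mpf : MeasurePreserving Prod.fst ν unif01 := ⟨measurable_fst, hν⟩
    exact mpf.quasiMeasurePreserving.ae ae1
  rw [hT, integral_prod _ hgI]
  have inner : ∀ᵐ w ∂ν, ∫ y, g (w, y) ∂(Measure.pi fun _ => ν) =
      (∏ b : Fin m, leafInt W (condInt ν (ψ b.succ)) w.1) * ψ 0 w.2 := by
    filter_upwards [ae1'] with w hw
    simp only [hg]
    rw [integral_const_mul, mul_comm]
    congr 1
    rw [integral_fintype_prod_eq_prod (fun (b : Fin m) (y : ℝ × X) => W w.1 y.1 * ψ b.succ y.2)]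
    refine Finset.prod_congr rfl fun b _ => ?_
    exact integral_disint ν hν (ψ b.succ) (hψ _) (h1 _) (W w.1) hw
  rw [integral_congr_ae inner]
  rw [integral_disint ν hν (ψ 0) (hψ _) (h1 _) (fun x => ∏ b : Fin m, leafInt W (condInt ν (ψ b.succ)) x)]
  · unfold starS
    congr 1; ext x; ring
  · refine hd.mono' (Finset.measurable_prod _ fun b _ => leafInt_meas W hm _ (condInt_meas _ _ (hψ _))).aestronglyMeasurable ?_
    filter_upwards [ae1] with x hx
    rw [Real.norm_eq_abs]
    refine (abs_prod_le_pow _ _ _ fun b _ => leafInt_le W _ (condInt_le _ _ (h1 _)) x hx).trans ?_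
    simp
end

end Part3

section Part4
open MeasureTheory Filter Set
open scoped ENNReal NNReal

/-- admissible kernels -/
structure GoodK (m : ℕ) (K : ℝ → ℝ → ℝ) : Prop where
  meas : Measurable (Function.uncurry K)
  int : Integrable (Function.uncurry K) (unif01.prod unif01)
  deg : Integrable (fun x => degFun K x ^ m) unif01

/-- uniform integrability of the degree powers -/
def UIseq (m : ℕ) (K : ℕ → ℝ → ℝ → ℝ) : Prop :=
  ∀ ε : ℝ, 0 < ε → ∃ M : ℝ, 1 ≤ M ∧ ∀ᶠ n in atTop, ∫ x, degTail m (K n) M x ∂unif01 ≤ ε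

lemma degTail_anti (m : ℕ) (K : ℝ → ℝ → ℝ) (x : ℝ) {M M' : ℝ} (h : M ≤ M') :
    degTail m K M' x ≤ degTail m K M x := by
  unfold degTail
  have := pow_nonneg (degFun_nonneg K x) m
  split_ifs with h1 h2 h2
  · exact le_rfl
  · exact absurd (h.trans_lt h1) h2
  · exact this
  · exact le_rfl

lemma GoodK.tail_anti {m : ℕ} {K : ℝ → ℝ → ℝ} (hK : GoodK m K) {M M' : ℝ} (h : M ≤ M') :
    ∫ x, degTail m K M' x ∂unif01 ≤ ∫ x, degTail m K M x ∂unif01 :=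
  integral_mono (degTail_int m K hK.meas _ hK.deg) (degTail_int m K hK.meas _ hK.deg)
    fun x => degTail_anti m K x h

lemma GoodK.tail_zero {m : ℕ} {K : ℝ → ℝ → ℝ} (hK : GoodK m K) :
    Tendsto (fun M : ℕ => ∫ x, degTail m K M x ∂unif01) atTop (nhds 0) := by
  have : Tendsto (fun M : ℕ => ∫ x, degTail m K M x ∂unif01) atTop (nhds (∫ x, (0:ℝ) ∂unif01)) := by
    refine tendsto_integral_of_dominated_convergence (fun x => degFun K x ^ m) ?_ hK.deg ?_ ?_
    · exact fun n => (degTail_int m K hK.meas _ hK.deg).1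
    · intro n
      refine Eventually.of_forall fun x => ?_
      rw [Real.norm_eq_abs, abs_of_nonneg (degTail_nonneg _ _ _ _)]
      unfold degTail; split_ifs
      · exact le_rfl
      · exact pow_nonneg (degFun_nonneg K x) m
    · refine Eventually.of_forall fun x => ?_
      refine tendsto_const_nhds.congr' ?_
      filter_upwards [eventually_ge_atTop ⌈degFun K x⌉₊] with n hn
      unfold degTail
      rw [if_neg]
      exact not_lt.2 ((Nat.le_ceil _).trans (by exact_mod_cast hn))
  simpa using this

lemma GoodK.tail_eps {m : ℕ} {K : ℝ → ℝ → ℝ} (hK : GoodK m K) (ε : ℝ) (hε : 0 < ε) :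
    ∃ M : ℝ, 1 ≤ M ∧ ∫ x, degTail m K M x ∂unif01 ≤ ε := by
  have := (hK.tail_zero.eventually (ge_mem_nhds hε)).and (eventually_ge_atTop 1)
  obtain ⟨M, h1, h2⟩ := this.exists
  exact ⟨M, by exact_mod_cast h2, h1⟩

lemma GoodK.deg_le {m : ℕ} {K : ℝ → ℝ → ℝ} (hK : GoodK m K) {M : ℝ} (hM : 0 ≤ M) :
    ∫ x, degFun K x ^ m ∂unif01 ≤ M ^ m + ∫ x, degTail m K M x ∂unif01 := by
  have : ∫ x, degFun K x ^ m ∂unif01 ≤ ∫ x, (M ^ m + degTail m K M x) ∂unif01 := by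
    refine integral_mono hK.deg ((integrable_const _).add (degTail_int m K hK.meas _ hK.deg)) fun x => ?_
    have h0 := degFun_nonneg K x
    simp only [degTail]; split_ifs with h
    · have := pow_nonneg hM m; linarith
    · have := pow_le_pow_left₀ h0 (not_lt.1 h) m; linarith
  rw [integral_add (integrable_const _) (degTail_int m K hK.meas _ hK.deg), integral_const] at this
  simpa using this

section
variable {X : Type*} [MetricSpace X] [CompactSpace X] [MeasurableSpace X] [BorelSpace X]

/-- uniform convergence of the star functional -/
def UCstar {X : Type*} [MeasurableSpace X] (m : ℕ) (K : ℕ → ℝ → ℝ → ℝ) (W : ℝ → ℝ → ℝ)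
    (φ : (Fin (m+1) → X) → ℝ) : Prop :=
  ∀ ε : ℝ, 0 < ε → ∀ᶠ n in atTop, ∀ ν : Measure (ℝ × X), IsProbabilityMeasure ν →
    ν.map Prod.fst = unif01 → |starT m (K n) φ ν - starT m W φ ν| ≤ ε

/-- product test functions -/
def prodMon (X : Type*) [TopologicalSpace X] (m : ℕ) : Submonoid C(Fin (m+1) → X, ℝ) where
  carrier := {φ | ∃ ψ : Fin (m+1) → C(X, ℝ), (∀ a x, |ψ a x| ≤ 1) ∧ ∀ x, φ x = ∏ a, ψ a (x a)}
  one_mem' := ⟨fun _ => 1, by simp, by simp⟩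
  mul_mem' := by
    rintro f g ⟨ψ, h1, h2⟩ ⟨χ, h3, h4⟩
    refine ⟨fun a => ψ a * χ a, fun a x => ?_, fun x => ?_⟩
    · simp only [ContinuousMap.mul_apply, abs_mul]
      exact mul_le_one₀ (h1 a x) (abs_nonneg _) (h3 a x)
    · simp [h2, h4, Finset.prod_mul_distrib]

lemma UC_prod [Nonempty X] (m : ℕ) (K : ℕ → ℝ → ℝ → ℝ) (W : ℝ → ℝ → ℝ) (hK : ∀ᶠ n in atTop, GoodK m (K n))
    (hW : GoodK m W) (hc : Tendsto (fun n => cutDist (K n) W) atTop (nhds 0)) (hUI : UIseq m K)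
    (φ : C(Fin (m+1) → X, ℝ)) (hφ : φ ∈ prodMon X m) : UCstar m K W φ := by
  obtain ⟨ψ, h1, h2⟩ := hφ
  intro ε hε
  obtain ⟨M1, hM1, ht1⟩ := hUI (ε/8) (by positivity)
  obtain ⟨M2, hM2, ht2⟩ := hW.tail_eps (ε/8) (by positivity)
  set M := max M1 M2
  have hM : 1 ≤ M := le_max_of_le_left hM1
  have hcc : Tendsto (fun n => m * M^m * (4 * cutDist (K n) W)) atTop (nhds (m * M^m * (4 * 0))) :=
    (hc.const_mul 4).const_mul _
  have hcc' : ∀ᶠ n in atTop, m * M^m * (4 * cutDist (K n) W) ≤ ε/2 :=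
    hcc.eventually (ge_mem_nhds (by simpa using (by positivity : 0 < ε/2)))
  filter_upwards [hK, ht1, hcc'] with n hKn ht1 hcn ν hνp hν
  have e : (φ : (Fin (m+1) → X) → ℝ) = fun x => ∏ a, ψ a (x a) := funext h2
  rw [e, starT_prod m (K n) hKn.meas hKn.int hKn.deg ν hν (fun a => ψ a) (fun a => (ψ a).continuous.measurable) h1,
    starT_prod m W hW.meas hW.int hW.deg ν hν (fun a => ψ a) (fun a => (ψ a).continuous.measurable) h1]
  refine (starS_diff m (K n) W hKn.meas hW.meas hKn.int hW.int hKn.deg hW.deg _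
    (condInt_meas _ _ (ψ 0).continuous.measurable) (condInt_le _ _ (h1 _)) _
    (fun b => condInt_meas _ _ (ψ b.succ).continuous.measurable) (fun b => condInt_le _ _ (h1 _)) M hM).trans ?_
  have := hKn.tail_anti (le_max_left M1 M2)
  have := hW.tail_anti (le_max_right M1 M2)
  linarith

lemma UC_span [Nonempty X] (m : ℕ) (K : ℕ → ℝ → ℝ → ℝ) (W : ℝ → ℝ → ℝ) (hK : ∀ᶠ n in atTop, GoodK m (K n))
    (hW : GoodK m W) (hc : Tendsto (fun n => cutDist (K n) W) atTop (nhds 0)) (hUI : UIseq m K)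
    (φ : C(Fin (m+1) → X, ℝ)) (hφ : φ ∈ Submodule.span ℝ (prodMon X m : Set C(Fin (m+1) → X, ℝ))) :
    UCstar m K W φ := by
  induction hφ using Submodule.span_induction with
  | mem x h => exact UC_prod m K W hK hW hc hUI x h
  | zero =>
    intro ε hε
    refine Eventually.of_forall fun n ν _ _ => ?_
    have h0 : ∀ K, starT m K (0 : C(Fin (m+1) → X, ℝ)) ν = 0 := fun K => by simp [starT]
    rw [h0, h0]; simpa using hε.le
  | add x y _ _ hx hy =>
    intro ε hε
    filter_upwards [hK, hx (ε/2) (by positivity), hy (ε/2) (by positivity)] with n hKn h1 h2 ν hνp hν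
    rw [starT_add m (K n) hKn.meas hKn.int hKn.deg ν hν, starT_add m W hW.meas hW.int hW.deg ν hν]
    have := abs_add_le (starT m (K n) x ν - starT m W x ν) (starT m (K n) y ν - starT m W y ν)
    have a := h1 ν hνp hν
    have b := h2 ν hνp hν
    rw [show starT m (K n) x ν + starT m (K n) y ν - (starT m W x ν + starT m W y ν) = (starT m (K n) x ν - starT m W x ν) + (starT m (K n) y ν - starT m W y ν) by ring]
    linarith
  | smul c x _ hx =>
    intro ε hε
    filter_upwards [hx (ε/(|c|+1)) (by positivity)] with n h1 ν hνp hν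
    rw [starT_smul, starT_smul, ← mul_sub, abs_mul]
    have := h1 ν hνp hν
    calc |c| * _ ≤ (|c| + 1) * (ε/(|c|+1)) := by gcongr; linarith
      _ = ε := by field_simp

lemma prodMon_dense (m : ℕ) (φ : C(Fin (m+1) → X, ℝ)) (ε : ℝ) (hε : 0 < ε) :
    ∃ g ∈ Submodule.span ℝ (prodMon X m : Set C(Fin (m+1) → X, ℝ)), ‖φ - g‖ < ε := by
  have h : (Algebra.adjoin ℝ (prodMon X m : Set C(Fin (m+1) → X, ℝ))).topologicalClosure = ⊤ := by
    apply ContinuousMap.subalgebra_topologicalClosure_eq_top_of_separatesPoints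
    intro x y hxy
    obtain ⟨a, ha⟩ := Function.ne_iff.1 hxy
    let f : C(X, ℝ) := ⟨fun z => min 1 (dist z (y a)), by fun_prop⟩
    let F : C(Fin (m+1) → X, ℝ) := ⟨fun z => f (z a), by fun_prop⟩
    refine ⟨F, ⟨F, ?_, rfl⟩, ?_⟩
    · refine Algebra.subset_adjoin ⟨fun b => if b = a then f else 1, fun b z => ?_, fun z => ?_⟩
      · dsimp only
        split_ifs
        · show |min 1 (dist z (y a))| ≤ 1
          rw [abs_of_nonneg (by positivity)]; exact min_le_left _ _
        · simp
      · have : ∀ b, (if b = a then f else 1 : C(X,ℝ)) (z b) = if b = a then f (z b) else 1 := by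
          intro b; split_ifs <;> rfl
        simp only [this]
        rw [Finset.prod_ite_eq' Finset.univ a (fun b => f (z b))]
        simp [F]
    · show min 1 (dist (x a) (y a)) ≠ min 1 (dist (y a) (y a))
      have := dist_pos.2 ha
      rw [dist_self]
      have h2 : 0 < min 1 (dist (x a) (y a)) := lt_min one_pos this
      simp only [min_eq_right (zero_le_one (α := ℝ))]
      exact h2.ne'
  have h2 : φ ∈ (Algebra.adjoin ℝ (prodMon X m : Set C(Fin (m+1) → X, ℝ))).topologicalClosure := by
    rw [h]; trivial
  have h3 : φ ∈ closure ((Algebra.adjoin ℝ (prodMon X m : Set C(Fin (m+1) → X, ℝ))) : Set C(Fin (m+1) → X, ℝ)) := h2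
  obtain ⟨g, hg, hd⟩ := Metric.mem_closure_iff.1 h3 ε hε
  refine ⟨g, ?_, by rwa [dist_eq_norm] at hd⟩
  have : g ∈ Subalgebra.toSubmodule (Algebra.adjoin ℝ (prodMon X m : Set C(Fin (m+1) → X, ℝ))) := hg
  rwa [Algebra.adjoin_eq_span, Submonoid.closure_eq] at this

lemma UC_all [Nonempty X] (m : ℕ) (K : ℕ → ℝ → ℝ → ℝ) (W : ℝ → ℝ → ℝ) (hK : ∀ᶠ n in atTop, GoodK m (K n))
    (hW : GoodK m W) (hc : Tendsto (fun n => cutDist (K n) W) atTop (nhds 0)) (hUI : UIseq m K)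
    (φ : C(Fin (m+1) → X, ℝ)) : UCstar m K W φ := by
  intro ε hε
  obtain ⟨M, hM, hM1⟩ := hUI 1 one_pos
  set C : ℝ := (M ^ m + 1) + ∫ x, degFun W x ^ m ∂unif01 + 1 with hC
  have hW0 : 0 ≤ ∫ x, degFun W x ^ m ∂unif01 := integral_nonneg fun x => pow_nonneg (degFun_nonneg _ _) _
  have hMm : 0 ≤ M ^ m := by positivity
  have hC0 : 0 < C := by linarith
  obtain ⟨g, hg, hfg⟩ := prodMon_dense m φ (ε / (2 * C)) (by positivity)
  filter_upwards [hK, hM1, UC_span m K W hK hW hc hUI g hg (ε/2) (by positivity)] with n hKn h1 h2 ν hνp hν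
  have e : φ = g + (φ - g) := by abel
  have a := h2 ν hνp hν
  have b1 := starT_bound m (K n) hKn.meas hKn.int hKn.deg ν hν (φ - g)
  have b2 := starT_bound m W hW.meas hW.int hW.deg ν hν (φ - g)
  have c1 : starT m (K n) φ ν = starT m (K n) g ν + starT m (K n) (φ - g : C(Fin (m+1) → X, ℝ)) ν := by
    conv_lhs => rw [e]
    exact starT_add m (K n) hKn.meas hKn.int hKn.deg ν hν _ _
  have c2 : starT m W φ ν = starT m W g ν + starT m W (φ - g : C(Fin (m+1) → X, ℝ)) ν := by
    conv_lhs => rw [e]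
    exact starT_add m W hW.meas hW.int hW.deg ν hν _ _
  have d1 := hKn.deg_le (by linarith : (0:ℝ) ≤ M)
  have hN : ‖φ - g‖ * C ≤ ε / 2 := by
    calc ‖φ - g‖ * C ≤ (ε / (2 * C)) * C := by gcongr
      _ = ε/2 := by field_simp
  have hN2 : ‖φ - g‖ * (∫ x, degFun (K n) x ^ m ∂unif01) + ‖φ - g‖ * (∫ x, degFun W x ^ m ∂unif01) ≤ ‖φ - g‖ * C := by
    rw [← mul_add]; gcongr; linarith
  rw [c1, c2, abs_le]
  rw [abs_le] at a b1 b2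
  constructor <;> linarith [a.1, a.2, b1.1, b1.2, b2.1, b2.2]
end

end Part4

section Part5
open MeasureTheory Filter Set
open scoped ENNReal NNReal

lemma clip_abs_le (k r : ℝ) (hk : 0 ≤ k) : |max (-k) (min k r)| ≤ k := by
  rw [abs_le]; exact ⟨le_max_left _ _, max_le (by linarith) (min_le_left _ _)⟩

lemma clip_abs_le_self (k r : ℝ) (hk : 0 ≤ k) : |max (-k) (min k r)| ≤ |r| := by
  rcases le_total r k with h | h
  · rw [min_eq_right h]
    rcases le_total (-k) r with h2 | h2
    · rw [max_eq_right h2]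
    · rw [max_eq_left h2, abs_neg, abs_of_nonneg hk, abs_of_nonpos (by linarith)]; linarith
  · rw [min_eq_left h, max_eq_right (by linarith), abs_of_nonneg hk, abs_of_nonneg (by linarith)]
    exact h

lemma clip_eq (k r : ℝ) (h : |r| ≤ k) : max (-k) (min k r) = r := by
  rw [abs_le] at h
  rw [min_eq_right h.2, max_eq_right h.1]

lemma clip_lip (k a b : ℝ) : |max (-k) (min k a) - max (-k) (min k b)| ≤ |a - b| := by
  refine (abs_max_sub_max_le_max _ _ _ _).trans ?_
  refine max_le (by simp) ?_
  refine (abs_min_sub_min_le_max _ _ _ _).trans ?_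
  exact max_le (by simp) le_rfl

lemma degFun_le_const (K : ℝ → ℝ → ℝ) (C : ℝ) (hC : ∀ x y, |K x y| ≤ C) (x : ℝ) : degFun K x ≤ C := by
  unfold degFun
  have h := norm_integral_le_of_norm_le_const (μ := unif01) (f := fun y => |K x y|) (C := C)
    (Eventually.of_forall fun y => by simpa using hC x y)
  simp only [probReal_univ, mul_one] at h
  exact (le_abs_self _).trans h

lemma GoodK_bdd (m : ℕ) (K : ℝ → ℝ → ℝ) (hm : Measurable (Function.uncurry K)) (C : ℝ) (hC : ∀ x y, |K x y| ≤ C) :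
    GoodK m K := by
  refine ⟨hm, ?_, ?_⟩
  · exact Integrable.of_bound hm.aestronglyMeasurable C (Eventually.of_forall fun z => hC z.1 z.2)
  · refine Integrable.of_bound ((degFun_meas K hm).pow_const m).aestronglyMeasurable (C^m) (Eventually.of_forall fun x => ?_)
    rw [norm_pow, Real.norm_eq_abs, abs_of_nonneg (degFun_nonneg K x)]
    exact pow_le_pow_left₀ (degFun_nonneg K x) (degFun_le_const K C hC x) m

lemma cut_of_L1 (K : ℕ → ℝ → ℝ → ℝ) (W : ℝ → ℝ → ℝ)
    (hK : ∀ n, Integrable (Function.uncurry (K n)) (unif01.prod unif01))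
    (hW : Integrable (Function.uncurry W) (unif01.prod unif01))
    (h : Tendsto (fun n => ∫ z, |K n z.1 z.2 - W z.1 z.2| ∂(unif01.prod unif01)) atTop (nhds 0)) :
    Tendsto (fun n => cutDist (K n) W) atTop (nhds 0) :=
  squeeze_zero (fun n => cutDist_nonneg _ _) (fun n => cut_le_L1 _ _ (hK n) hW) h

section
variable {X : Type*} [MetricSpace X] [CompactSpace X] [MeasurableSpace X] [BorelSpace X]

/-- probability measures with uniform first marginal -/
def Kset (X : Type*) [MeasurableSpace X] : Set (ProbabilityMeasure (ℝ × X)) :=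
  {ν | (ν : Measure (ℝ × X)).map Prod.fst = unif01}

lemma contT_of_lim [Nonempty X] (m : ℕ) (K : ℕ → ℝ → ℝ → ℝ) (W : ℝ → ℝ → ℝ) (hK : ∀ n, GoodK m (K n))
    (hW : GoodK m W) (hc : Tendsto (fun n => cutDist (K n) W) atTop (nhds 0)) (hUI : UIseq m K)
    (φ : C(Fin (m+1) → X, ℝ))
    (hcont : ∀ n, ContinuousOn (fun ν : ProbabilityMeasure (ℝ × X) => starT m (K n) φ ν) (Kset X)) :
    ContinuousOn (fun ν : ProbabilityMeasure (ℝ × X) => starT m W φ ν) (Kset X) := by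
  have h := UC_all m K W (Eventually.of_forall hK) hW hc hUI φ
  have : TendstoUniformlyOn (fun n (ν : ProbabilityMeasure (ℝ × X)) => starT m (K n) φ ν)
      (fun ν => starT m W φ ν) atTop (Kset X) := by
    rw [Metric.tendstoUniformlyOn_iff]
    intro ε hε
    filter_upwards [h (ε/2) (by positivity)] with n hn ν hν
    rw [dist_comm, Real.dist_eq]
    have := hn ν inferInstance hν
    linarith
  exact this.continuousOn (Eventually.of_forall hcont).frequently

lemma contT_bcf (m : ℕ) (f : BoundedContinuousFunction (ℝ × ℝ) ℝ) (φ : C(Fin (m+1) → X, ℝ)) :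
    Continuous (fun ν : ProbabilityMeasure (ℝ × X) => starT m (fun x y => f (x, y)) φ ν) := by
  let F : BoundedContinuousFunction (Fin (m+1) → ℝ × X) ℝ :=
    BoundedContinuousFunction.ofNormedAddCommGroup
      (fun z => φ (fun a => (z a).2) * ∏ b : Fin m, f ((z 0).1, (z b.succ).1))
      (by fun_prop) (‖φ‖ * ‖f‖ ^ m) (by
        intro z
        rw [norm_mul]
        gcongr
        · exact φ.norm_coe_le_norm _
        · refine (abs_prod_le_pow _ _ (‖f‖) fun b _ => ?_).trans ?_
          · exact f.norm_coe_le_norm _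
          · simp)
  have h1 := ProbabilityMeasure.continuous_integral_boundedContinuousFunction F
  have h2 : Continuous fun ν : ProbabilityMeasure (ℝ × X) => ProbabilityMeasure.pi (fun _ : Fin (m+1) => ν) :=
    (ProbabilityMeasure.continuous_pi).comp (continuous_pi fun _ => continuous_id)
  exact h1.comp h2

lemma contT_bdd [Nonempty X] (m : ℕ) (W : ℝ → ℝ → ℝ) (hm : Measurable (Function.uncurry W)) (C : ℝ)
    (hC : ∀ x y, |W x y| ≤ C) (φ : C(Fin (m+1) → X, ℝ)) :
    ContinuousOn (fun ν : ProbabilityMeasure (ℝ × X) => starT m W φ ν) (Kset X) := by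
  have hC0 : 0 ≤ C := (abs_nonneg _).trans (hC 0 0)
  have hW := GoodK_bdd m W hm C hC
  have hex : ∀ n : ℕ, ∃ g : BoundedContinuousFunction (ℝ × ℝ) ℝ,
      ∫ z, ‖Function.uncurry W z - g z‖ ∂(unif01.prod unif01) ≤ 1/((n:ℝ)+1) ∧ Integrable g (unif01.prod unif01) :=
    fun n => hW.int.exists_boundedContinuous_integral_sub_le (by positivity)
  choose g hg hgi using hex
  let f : ℕ → BoundedContinuousFunction (ℝ × ℝ) ℝ := fun n =>
    BoundedContinuousFunction.ofNormedAddCommGroup (fun z => max (-C) (min C (g n z))) (by fun_prop) C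
      (fun z => clip_abs_le _ _ hC0)
  have hf : ∀ n x y, |f n (x, y)| ≤ C := fun n x y => clip_abs_le _ _ hC0
  have hgood : ∀ n, GoodK m (fun x y => f n (x, y)) := fun n =>
    GoodK_bdd m _ (f n).continuous.measurable C (hf n)
  refine contT_of_lim m (fun n x y => f n (x, y)) W hgood hW ?_ ?_ φ fun n => (contT_bcf m (f n) φ).continuousOn
  · refine cut_of_L1 _ _ (fun n => (hgood n).int) hW.int ?_
    refine squeeze_zero (fun n => integral_nonneg fun z => abs_nonneg _) (fun n => ?_)
      tendsto_one_div_add_atTop_nhds_zero_nat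
    refine le_trans ?_ (hg n)
    refine integral_mono_of_nonneg (Eventually.of_forall fun z => abs_nonneg _) (hW.int.sub (hgi n)).norm
      (Eventually.of_forall fun z => ?_)
    show |max (-C) (min C (g n z)) - W z.1 z.2| ≤ |W z.1 z.2 - g n z|
    rw [abs_sub_comm (W z.1 z.2)]
    conv_lhs => rw [← clip_eq C (W z.1 z.2) (hC _ _)]
    exact clip_lip _ _ _
  · intro ε hε
    refine ⟨max 1 C, le_max_left _ _, Eventually.of_forall fun n => ?_⟩
    have : ∀ x, degTail m (fun x y => f n (x, y)) (max 1 C) x = 0 := fun x => by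
      unfold degTail
      rw [if_neg]
      exact not_lt.2 ((degFun_le_const _ C (hf n) x).trans (le_max_right _ _))
    simp [this, hε.le]

lemma contT [Nonempty X] (m : ℕ) (W : ℝ → ℝ → ℝ) (hW : GoodK m W) (φ : C(Fin (m+1) → X, ℝ)) :
    ContinuousOn (fun ν : ProbabilityMeasure (ℝ × X) => starT m W φ ν) (Kset X) := by
  let K : ℕ → ℝ → ℝ → ℝ := fun n x y => max (-(n:ℝ)) (min n (W x y))
  have hKm : ∀ n, Measurable (Function.uncurry (K n)) := fun n =>
    measurable_const.max (measurable_const.min hW.meas)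
  have hKb : ∀ n x y, |K n x y| ≤ n := fun n x y => clip_abs_le _ _ n.cast_nonneg
  have hgood : ∀ n, GoodK m (K n) := fun n => GoodK_bdd m _ (hKm n) n (hKb n)
  have hdeg : ∀ n, ∀ᵐ x ∂unif01, degFun (K n) x ≤ degFun W x := by
    intro n
    filter_upwards [hW.int.prod_right_ae] with x hx
    refine integral_mono_of_nonneg (Eventually.of_forall fun y => abs_nonneg _) hx.norm
      (Eventually.of_forall fun y => clip_abs_le_self _ _ n.cast_nonneg)
  refine contT_of_lim m K W hgood hW ?_ ?_ φ fun n => contT_bdd m (K n) (hKm n) n (hKb n) φ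
  · refine cut_of_L1 _ _ (fun n => (hgood n).int) hW.int ?_
    have : Tendsto (fun n => ∫ z, |K n z.1 z.2 - W z.1 z.2| ∂(unif01.prod unif01)) atTop
        (nhds (∫ z, (0:ℝ) ∂(unif01.prod unif01))) := by
      refine tendsto_integral_of_dominated_convergence (fun z => 2 * |W z.1 z.2|) ?_ (hW.int.norm.const_mul 2) ?_ ?_
      · exact fun n => ((hgood n).int.sub hW.int).norm.1
      · refine fun n => Eventually.of_forall fun z => ?_
        rw [Real.norm_eq_abs, abs_abs]
        have := abs_sub (K n z.1 z.2) (W z.1 z.2)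
        have h2 : |K n z.1 z.2| ≤ |W z.1 z.2| := clip_abs_le_self _ _ n.cast_nonneg
        linarith
      · refine Eventually.of_forall fun z => ?_
        refine tendsto_const_nhds.congr' ?_
        filter_upwards [eventually_ge_atTop ⌈|W z.1 z.2|⌉₊] with n hn
        have : K n z.1 z.2 = W z.1 z.2 := clip_eq _ _ ((Nat.le_ceil _).trans (by exact_mod_cast hn))
        rw [this]; simp
    simpa using this
  · intro ε hε
    obtain ⟨M, hM, hM1⟩ := hW.tail_eps ε hε
    refine ⟨M, hM, Eventually.of_forall fun n => le_trans ?_ hM1⟩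
    refine integral_mono_ae (degTail_int m _ (hKm n) _ (hgood n).deg) (degTail_int m _ hW.meas _ hW.deg) ?_
    filter_upwards [hdeg n] with x hx
    unfold degTail
    have h0 := degFun_nonneg (K n) x
    have := pow_le_pow_left₀ h0 hx m
    have h3 := pow_nonneg (degFun_nonneg W x) m
    split_ifs with h1 h2 h2
    · exact this
    · exact absurd (h1.trans_le hx) h2
    · exact h3
    · exact le_rfl

lemma Kset_closed : IsClosed (Kset X) := by
  have : Kset X = (fun ν : ProbabilityMeasure (ℝ × X) => ν.map (f := Prod.fst) measurable_fst.aemeasurable) ⁻¹' {⟨unif01, inferInstance⟩} := by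
    ext ν
    simp only [Kset, mem_setOf_eq, mem_preimage, mem_singleton_iff]
    constructor
    · intro h; exact Subtype.ext h
    · intro h; exact congrArg Subtype.val h
  rw [this]
  refine IsClosed.preimage ?_ isClosed_singleton
  exact ProbabilityMeasure.continuous_map continuous_fst

lemma Kset_compact : IsCompact (Kset X) := by
  have h : IsCompact (closure (Kset X)) := by
    apply isCompact_closure_of_isTightMeasureSet
    rw [isTightMeasureSet_iff_exists_isCompact_measure_compl_le]
    intro ε hε
    refine ⟨Icc 0 1 ×ˢ univ, isCompact_Icc.prod isCompact_univ, ?_⟩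
    rintro _ ⟨ν, hν, rfl⟩
    have e : (Icc (0:ℝ) 1 ×ˢ (univ : Set X))ᶜ = Prod.fst ⁻¹' (Icc (0:ℝ) 1)ᶜ := by
      ext ⟨a, b⟩; simp
    rw [e, ← Measure.map_apply measurable_fst measurableSet_Icc.compl, hν]
    simp [unif01]
  rwa [Kset_closed.closure_eq] at h
end

end Part5

section Part6
open MeasureTheory Filter Set
open scoped ENNReal NNReal

lemma KLdiv_eq_klDiv {α : Type*} [MeasurableSpace α] (ν ρ : Measure α) [IsProbabilityMeasure ν] [IsProbabilityMeasure ρ] :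
    KLdiv ν ρ = InformationTheory.klDiv ν ρ := by
  unfold KLdiv
  split_ifs with h
  · rw [InformationTheory.klDiv_of_ac_of_integrable h.1 h.2]; simp
  · symm
    rw [InformationTheory.klDiv_eq_top_iff]
    intro h1 h2; exact h ⟨h1, h2⟩

lemma int_of_bdd {α : Type*} [MeasurableSpace α] (P : Measure α) [IsFiniteMeasure P] (g : α → ℝ) (hg : Measurable g)
    (C : ℝ) (hC : ∀ x, |g x| ≤ C) : Integrable g P :=
  Integrable.of_bound hg.aestronglyMeasurable C (Eventually.of_forall hC)

lemma intexp_of_bdd {α : Type*} [MeasurableSpace α] (P : Measure α) [IsFiniteMeasure P] (g : α → ℝ) (hg : Measurable g)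
    (C : ℝ) (hC : ∀ x, |g x| ≤ C) : Integrable (fun x => Real.exp (g x)) P := by
  refine int_of_bdd P _ hg.exp (Real.exp C) fun x => ?_
  rw [Real.abs_exp]
  exact Real.exp_le_exp.2 ((le_abs_self _).trans (hC x))

lemma dv_forward {α : Type*} [MeasurableSpace α] (Q P : Measure α) [IsProbabilityMeasure Q] [IsProbabilityMeasure P]
    (hac : Q ≪ P) (hi : Integrable (llr Q P) Q) (g : α → ℝ) (hg : Measurable g) (C : ℝ) (hC : ∀ x, |g x| ≤ C) :
    ∫ x, g x ∂Q ≤ ∫ x, llr Q P x ∂Q + Real.log (∫ x, Real.exp (g x) ∂P) := by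
  have h1 := int_of_bdd Q g hg C hC
  have h2 := intexp_of_bdd P g hg C hC
  have e := integral_llr_tilted_right hac h1 h2 hi
  have hprob : IsProbabilityMeasure (P.tilted g) := isProbabilityMeasure_tilted h2
  have hac' : Q ≪ P.tilted g := hac.trans (absolutelyContinuous_tilted h2)
  have hi' := integrable_llr_tilted_right hac h1 hi h2
  have := InformationTheory.integral_llr_add_sub_measure_univ_nonneg hac' hi'
  simp only [probReal_univ] at this
  linarith

lemma exp_lip (a b C : ℝ) (ha : |a| ≤ C) (hb : |b| ≤ C) : Real.exp a ≤ Real.exp b + Real.exp C * |a - b| := by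
  have h1 : Real.exp a * (b - a + 1) ≤ Real.exp b := by
    have := Real.add_one_le_exp (b - a)
    calc Real.exp a * (b - a + 1) ≤ Real.exp a * Real.exp (b - a) := by gcongr
      _ = Real.exp b := by rw [← Real.exp_add]; ring_nf
  have h2 : Real.exp a * (a - b) ≤ Real.exp C * |a - b| := by
    have : Real.exp a ≤ Real.exp C := Real.exp_le_exp.2 ((le_abs_self _).trans ha)
    calc Real.exp a * (a - b) ≤ Real.exp a * |a - b| := by gcongr; exact le_abs_self _
      _ ≤ _ := by gcongr
  nlinarith

section
variable {α : Type*} [MeasurableSpace α] [TopologicalSpace α] [BorelSpace α] [TopologicalSpace.PseudoMetrizableSpace α]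

lemma dv_ext (ν ρ : Measure α) [IsProbabilityMeasure ν] [IsProbabilityMeasure ρ] (c : ℝ)
    (H : ∀ f : BoundedContinuousFunction α ℝ, ∫ x, f x ∂ν ≤ c + Real.log (∫ x, Real.exp (f x) ∂ρ))
    (f : α → ℝ) (hf : Measurable f) (C : ℝ) (hC0 : 0 ≤ C) (hC : ∀ x, |f x| ≤ C) :
    ∫ x, f x ∂ν ≤ c + (∫ x, Real.exp (f x) ∂ρ - 1) := by
  refine le_of_forall_pos_le_add fun ε hε => ?_
  set δ := ε / (1 + Real.exp C) with hδ
  have hδ0 : 0 < δ := by positivity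
  obtain ⟨g0, hg0, hgi0⟩ := (int_of_bdd (ν + ρ) f hf C hC).exists_boundedContinuous_integral_sub_le hδ0
  let g : BoundedContinuousFunction α ℝ :=
    BoundedContinuousFunction.ofNormedAddCommGroup (fun z => max (-C) (min C (g0 z))) (by fun_prop) C
      (fun z => clip_abs_le _ _ hC0)
  have hgC : ∀ x, |g x| ≤ C := fun x => clip_abs_le _ _ hC0
  have hgm : Measurable g := g.continuous.measurable
  have hd : ∀ x, |f x - g x| ≤ |f x - g0 x| := fun x => by
    show |f x - max (-C) (min C (g0 x))| ≤ _
    conv_lhs => rw [← clip_eq C (f x) (hC _)]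
    exact clip_lip _ _ _
  have hdi : ∀ (P : Measure α) [IsFiniteMeasure P], Integrable (fun x => |f x - g x|) P := fun P _ =>
    ((int_of_bdd P f hf C hC).sub (int_of_bdd P g hgm C hgC)).norm
  have htot : ∫ x, |f x - g x| ∂ν + ∫ x, |f x - g x| ∂ρ ≤ δ := by
    rw [← integral_add_measure (hdi ν) (hdi ρ)]
    refine le_trans ?_ hg0
    exact integral_mono_of_nonneg (Eventually.of_forall fun z => abs_nonneg _) 
      ((int_of_bdd (ν + ρ) f hf C hC).sub hgi0).norm (Eventually.of_forall hd)
  have n1 : 0 ≤ ∫ x, |f x - g x| ∂ν := integral_nonneg fun x => abs_nonneg _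
  have n2 : 0 ≤ ∫ x, |f x - g x| ∂ρ := integral_nonneg fun x => abs_nonneg _
  have a1 : ∫ x, f x ∂ν ≤ ∫ x, g x ∂ν + ∫ x, |f x - g x| ∂ν := by
    rw [← integral_add (int_of_bdd ν g hgm C hgC) (hdi ν)]
    refine integral_mono (int_of_bdd ν f hf C hC) ((int_of_bdd ν g hgm C hgC).add (hdi ν)) fun x => ?_
    simp only
    linarith [le_abs_self (f x - g x)]
  have a2 : ∫ x, Real.exp (g x) ∂ρ ≤ ∫ x, Real.exp (f x) ∂ρ + Real.exp C * ∫ x, |f x - g x| ∂ρ := by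
    rw [← integral_const_mul, ← integral_add (intexp_of_bdd ρ f hf C hC) ((hdi ρ).const_mul _)]
    refine integral_mono (intexp_of_bdd ρ g hgm C hgC) ((intexp_of_bdd ρ f hf C hC).add ((hdi ρ).const_mul _)) fun x => ?_
    simp only
    rw [abs_sub_comm]
    exact exp_lip _ _ _ (hgC x) (hC x)
  have a3 := H g
  have hpos : 0 < ∫ x, Real.exp (g x) ∂ρ := integral_exp_pos (intexp_of_bdd ρ g hgm C hgC)
  have a4 := Real.log_le_sub_one_of_pos hpos
  have a5 : (1 + Real.exp C) * δ = ε := by rw [hδ]; field_simp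
  have := Real.exp_pos C
  nlinarith

lemma dv_converse (ν ρ : Measure α) [IsProbabilityMeasure ν] [IsProbabilityMeasure ρ] (c : ℝ)
    (H : ∀ f : BoundedContinuousFunction α ℝ, ∫ x, f x ∂ν ≤ c + Real.log (∫ x, Real.exp (f x) ∂ρ)) :
    KLdiv ν ρ ≤ ENNReal.ofReal c := by
  have H2 := dv_ext ν ρ c H
  have hac : ν ≪ ρ := by
    refine Measure.AbsolutelyContinuous.mk fun A hA h0 => ?_
    by_contra hne
    have hpos : 0 < ν.real A := by
      rw [measureReal_def]; exact ENNReal.toReal_pos hne (measure_ne_top _ _)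
    have key : ∀ L : ℝ, 0 ≤ L → L * ν.real A ≤ c := by
      intro L hL
      have := H2 (A.indicator fun _ => L) (measurable_const.indicator hA) L hL (fun x => by
        by_cases hx : x ∈ A <;> simp [hx, abs_of_nonneg hL, hL])
      have e1 : ∫ x, Real.exp (A.indicator (fun _ => L) x) ∂ρ = 1 := by
        have : (fun x => Real.exp (A.indicator (fun _ => L) x)) =ᵐ[ρ] fun _ => 1 := by
          have h0' : ∀ᵐ x ∂ρ, x ∉ A := measure_eq_zero_iff_ae_notMem.1 h0
          filter_upwards [h0'] with x hx
          simp [hx]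
        rw [integral_congr_ae this]; simp
      rw [e1, integral_indicator hA] at this
      simp at this
      linarith
    have := key ((|c| + 1) / ν.real A) (by positivity)
    rw [div_mul_cancel₀ _ hpos.ne'] at this
    linarith [le_abs_self c]
  rw [KLdiv_eq_klDiv, InformationTheory.klDiv_eq_lintegral_klFun_of_ac hac]
  set r : α → ℝ := fun x => (ν.rnDeriv ρ x).toReal with hr
  have hrm : Measurable r := (Measure.measurable_rnDeriv ν ρ).ennreal_toReal
  have hr0 : ∀ x, 0 ≤ r x := fun x => ENNReal.toReal_nonneg
  have hri : Integrable r ρ := Measure.integrable_toReal_rnDeriv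
  let rk : ℕ → α → ℝ := fun k x => max (Real.exp (-k)) (min (Real.exp k) (r x))
  have hrkm : ∀ k, Measurable (rk k) := fun k => measurable_const.max (measurable_const.min hrm)
  have hrk1 : ∀ (k : ℕ) x, Real.exp (-(k:ℝ)) ≤ rk k x := fun k x => le_max_left _ _
  have hrk2 : ∀ (k : ℕ) x, rk k x ≤ Real.exp k := fun k x =>
    max_le (Real.exp_le_exp.2 (by have := k.cast_nonneg (α := ℝ); linarith)) (min_le_left _ _)
  have hrkpos : ∀ k x, 0 < rk k x := fun k x => (Real.exp_pos _).trans_le (hrk1 k x)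
  have hlog : ∀ (k : ℕ) x, |Real.log (rk k x)| ≤ k := by
    intro k x
    rw [abs_le]
    constructor
    · rw [Real.le_log_iff_exp_le (hrkpos k x)]; exact hrk1 k x
    · rw [Real.log_le_iff_le_exp (hrkpos k x)]; exact hrk2 k x
  let F : ℕ → α → ℝ := fun k x => r x * Real.log (rk k x) - rk k x + 1
  have hFm : ∀ k, Measurable (F k) := fun k =>
    ((hrm.mul (hrkm k).log).sub (hrkm k)).add measurable_const
  have hi1 : ∀ k, Integrable (fun x => r x * Real.log (rk k x)) ρ := fun k =>
    hri.mul_bdd (c := k) (hrkm k).log.aestronglyMeasurable (Eventually.of_forall (hlog k))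
  have hi2 : ∀ k, Integrable (rk k) ρ := fun k =>
    int_of_bdd ρ _ (hrkm k) (Real.exp k) fun x => by rw [abs_of_pos (hrkpos k x)]; exact hrk2 k x
  have hF0 : ∀ k x, 0 ≤ F k x := by
    intro k x
    have h1 : 0 ≤ InformationTheory.klFun (rk k x) := InformationTheory.klFun_nonneg (hrkpos k x).le
    rw [InformationTheory.klFun_apply] at h1
    have hk0 := k.cast_nonneg (α := ℝ)
    have h2 : 0 ≤ (r x - rk k x) * Real.log (rk k x) := by
      by_cases ha : r x < Real.exp (-(k:ℝ))
      · have e : rk k x = Real.exp (-(k:ℝ)) := by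
          apply max_eq_left; exact (min_le_right _ _).trans ha.le
        rw [e, Real.log_exp]
        nlinarith
      · by_cases hb : Real.exp k < r x
        · have e : rk k x = Real.exp k := by
            show max _ (min _ _) = _
            rw [min_eq_left hb.le, max_eq_right]
            exact Real.exp_le_exp.2 (by linarith)
          rw [e, Real.log_exp]
          nlinarith
        · have e : rk k x = r x := by
            show max _ (min _ _) = _
            rw [min_eq_right (not_lt.1 hb), max_eq_right (not_lt.1 ha)]
          rw [e]; simp
    show 0 ≤ r x * Real.log (rk k x) - rk k x + 1
    nlinarith
  have hFint : ∀ k, ∫ x, F k x ∂ρ ≤ c := by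
    intro k
    have := H2 (fun x => Real.log (rk k x)) (hrkm k).log k k.cast_nonneg (hlog k)
    simp only [Real.exp_log (hrkpos _ _)] at this
    rw [← integral_rnDeriv_smul hac] at this
    have e : ∫ x, F k x ∂ρ = ∫ x, r x * Real.log (rk k x) ∂ρ - ∫ x, rk k x ∂ρ + 1 := by
      show ∫ x, (r x * Real.log (rk k x) - rk k x + 1) ∂ρ = _
      have hs : Integrable (fun x => r x * Real.log (rk k x) - rk k x) ρ := (hi1 k).sub (hi2 k)
      rw [integral_add hs (integrable_const _), integral_sub (hi1 k) (hi2 k)]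
      simp
    rw [e]
    simp only [smul_eq_mul] at this
    linarith
  have hFl : ∀ k, ∫⁻ x, ENNReal.ofReal (F k x) ∂ρ ≤ ENNReal.ofReal c := by
    intro k
    have hs : Integrable (F k) ρ := ((hi1 k).sub (hi2 k)).add (integrable_const _)
    rw [← ofReal_integral_eq_lintegral_ofReal hs (Eventually.of_forall (hF0 k))]
    exact ENNReal.ofReal_le_ofReal (hFint k)
  have hlim : ∀ x, Tendsto (fun k => ENNReal.ofReal (F k x)) atTop (nhds (ENNReal.ofReal (InformationTheory.klFun (r x)))) := by
    intro x
    refine (ENNReal.continuous_ofReal.tendsto _).comp ?_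
    have t1 : Tendsto (fun k : ℕ => Real.exp (k:ℝ)) atTop atTop := Real.tendsto_exp_atTop.comp tendsto_natCast_atTop_atTop
    have t2 : Tendsto (fun k : ℕ => Real.exp (-(k:ℝ))) atTop (nhds 0) :=
      (Real.tendsto_exp_neg_atTop_nhds_zero).comp tendsto_natCast_atTop_atTop
    rcases (hr0 x).eq_or_lt with h | h
    · have : ∀ k, F k x = - Real.exp (-(k:ℝ)) + 1 := by
        intro k
        show r x * Real.log (rk k x) - rk k x + 1 = _
        have e : rk k x = Real.exp (-(k:ℝ)) := by
          apply max_eq_left; rw [← h]; exact (min_le_right _ _).trans (Real.exp_pos _).le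
        rw [e, ← h]; ring
      simp only [this]
      rw [← h, InformationTheory.klFun_zero]
      simpa using (t2.neg.add_const 1)
    · refine tendsto_const_nhds.congr' ?_
      filter_upwards [t1.eventually_ge_atTop (r x), t2.eventually (ge_mem_nhds h)] with k h1 h2
      have e : rk k x = r x := by
        show max _ (min _ _) = _
        rw [min_eq_right h1, max_eq_right h2]
      show _ = r x * Real.log (rk k x) - rk k x + 1
      rw [e, InformationTheory.klFun_apply]; ring
  calc ∫⁻ x, ENNReal.ofReal (InformationTheory.klFun (r x)) ∂ρ
      = ∫⁻ x, liminf (fun k => ENNReal.ofReal (F k x)) atTop ∂ρ := by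
        refine lintegral_congr fun x => ((hlim x).liminf_eq).symm
    _ ≤ liminf (fun k => ∫⁻ x, ENNReal.ofReal (F k x) ∂ρ) atTop :=
        lintegral_liminf_le fun k => (hFm k).ennreal_ofReal
    _ ≤ ENNReal.ofReal c := by
        refine (liminf_le_liminf (Eventually.of_forall hFl)).trans ?_
        simp

/-- the DV functional separates from sublevel sets -/
lemma KL_level_iff (ν : Measure α) (ρ : Measure α) [IsProbabilityMeasure ν] [IsProbabilityMeasure ρ] (c : ℝ) (hc : 0 ≤ c) :
    KLdiv ν ρ ≤ ENNReal.ofReal c ↔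
    ∀ f : BoundedContinuousFunction α ℝ, ∫ x, f x ∂ν ≤ c + Real.log (∫ x, Real.exp (f x) ∂ρ) := by
  refine ⟨fun h f => ?_, dv_converse ν ρ c⟩
  unfold KLdiv at h
  split_ifs at h with h1
  · have := dv_forward ν ρ h1.1 h1.2 f f.continuous.measurable ‖f‖ f.norm_coe_le_norm
    have h2 := (ENNReal.ofReal_le_ofReal_iff hc).1 h
    linarith
  · simp at h
end

section
variable {X : Type*} [MetricSpace X] [CompactSpace X] [MeasurableSpace X] [BorelSpace X]

/-- entropy sublevel sets -/
def Klev (μ : Measure X) (c : ℝ) : Set (ProbabilityMeasure (ℝ × X)) :=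
  {ν | ν ∈ Kset X ∧ KLdiv (ν : Measure (ℝ × X)) (unif01.prod μ) ≤ ENNReal.ofReal c}

lemma Klev_compact (μ : Measure X) [IsProbabilityMeasure μ] (c : ℝ) (hc : 0 ≤ c) : IsCompact (Klev μ c) := by
  have e : Klev μ c = Kset X ∩ ⋂ f : BoundedContinuousFunction (ℝ × X) ℝ,
      {ν : ProbabilityMeasure (ℝ × X) | ∫ x, f x ∂(ν : Measure (ℝ × X)) ≤ c + Real.log (∫ x, Real.exp (f x) ∂(unif01.prod μ))} := by
    ext ν
    simp only [Klev, mem_inter_iff, mem_iInter]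
    exact and_congr_right fun _ => KL_level_iff _ _ c hc
  rw [e]
  refine Kset_compact.inter_right (isClosed_iInter fun f => ?_)
  exact isClosed_le (ProbabilityMeasure.continuous_integral_boundedContinuousFunction f) continuous_const
end

end Part6

section Part7
open MeasureTheory Filter Set
open scoped ENNReal NNReal

/-- a measurable partition of the unit interval in `n` cells of equal mass -/
structure IdxMap (n : ℕ) (j : ℝ → Fin n) : Prop where
  meas : Measurable j
  mass : ∀ i, unif01.real (j ⁻¹' {i}) = (n : ℝ)⁻¹

lemma IdxMap.pos {n : ℕ} {j : ℝ → Fin n} (_ : IdxMap n j) : 0 < n := Fin.pos (j 0)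

lemma IdxMap.cell {n : ℕ} {j : ℝ → Fin n} (h : IdxMap n j) (i : Fin n) : MeasurableSet (j ⁻¹' {i}) :=
  h.meas (measurableSet_singleton i)

/-- splitting an integral along the cells -/
lemma IdxMap.integral_split {n : ℕ} {j : ℝ → Fin n} (h : IdxMap n j) {α : Type*} [MeasurableSpace α]
    (P : Measure α) (p : α → ℝ) (hp : Measurable p)
    (f : α → ℝ) (hf : Integrable f P) : ∫ a, f a ∂P = ∑ i, ∫ a in p ⁻¹' (j ⁻¹' {i}), f a ∂P := by
  have := integral_iUnion_fintype (μ := P) (f := f) (s := fun i : Fin n => p ⁻¹' (j ⁻¹' {i}))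
    (fun i => hp (h.cell i))
    (fun i k hik => by
      refine Disjoint.preimage _ (Disjoint.preimage _ ?_)
      simpa using hik) (fun i => hf.integrableOn)
  rw [← this]
  have hu : ⋃ i : Fin n, p ⁻¹' (j ⁻¹' {i}) = univ := by
    ext a; simp
  rw [hu, Measure.restrict_univ]

section
variable {X : Type*} [MetricSpace X] [CompactSpace X] [MeasurableSpace X] [BorelSpace X]

/-- empirical measure -/
noncomputable def emp {X : Type*} [MeasurableSpace X] {n : ℕ} (j : ℝ → Fin n) (x : Fin n → X) : Measure (ℝ × X) :=
  unif01.map (fun a => (a, x (j a)))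

lemma emp_meas {X : Type*} [MeasurableSpace X] {n : ℕ} {j : ℝ → Fin n} (h : IdxMap n j) (x : Fin n → X) :
    Measurable (fun a => (a, x (j a))) :=
  measurable_id.prodMk ((measurable_of_countable x).comp h.meas)

lemma emp_prob {X : Type*} [MeasurableSpace X] {n : ℕ} {j : ℝ → Fin n} (h : IdxMap n j) (x : Fin n → X) : IsProbabilityMeasure (emp j x) :=
  Measure.isProbabilityMeasure_map (emp_meas h x).aemeasurable

lemma emp_fst {X : Type*} [MeasurableSpace X] {n : ℕ} {j : ℝ → Fin n} (h : IdxMap n j) (x : Fin n → X) :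
    (emp j x).map Prod.fst = unif01 := by
  unfold emp
  rw [Measure.map_map measurable_fst (emp_meas h x)]
  exact Measure.map_id

/-- cell averages -/
noncomputable def cellI {X : Type*} [MeasurableSpace X] {n : ℕ} (j : ℝ → Fin n) (f : ℝ × X → ℝ) (i : Fin n) (y : X) : ℝ :=
  ∫ a in j ⁻¹' {i}, f (a, y) ∂unif01

lemma sec_int {X : Type*} [MeasurableSpace X] (f : ℝ × X → ℝ) (hf : Measurable f) (C : ℝ)
    (hC : ∀ z, |f z| ≤ C) (y : X) (P : Measure ℝ) [IsFiniteMeasure P] : Integrable (fun a => f (a, y)) P :=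
  int_of_bdd P _ (hf.comp (by fun_prop)) C fun _ => hC _

lemma cellI_meas {X : Type*} [MeasurableSpace X] {n : ℕ} (j : ℝ → Fin n) (f : ℝ × X → ℝ) (hf : Measurable f) (i : Fin n) :
    Measurable (cellI j f i) := by
  have : Measurable (fun z : X × ℝ => f (z.2, z.1)) := hf.comp (by fun_prop)
  exact (this.stronglyMeasurable.integral_prod_right (ν := unif01.restrict (j ⁻¹' {i}))).measurable

lemma cellI_le {X : Type*} [MeasurableSpace X] {n : ℕ} {j : ℝ → Fin n} (h : IdxMap n j) (f : ℝ × X → ℝ)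
    (C : ℝ) (hC : ∀ z, |f z| ≤ C) (i : Fin n) (y : X) : |cellI j f i y| ≤ C / n := by
  have := norm_integral_le_of_norm_le_const (μ := unif01.restrict (j ⁻¹' {i})) (f := fun a => f (a, y)) (C := C)
    (Eventually.of_forall fun a => hC _)
  rw [measureReal_restrict_apply MeasurableSet.univ, univ_inter, h.mass] at this
  simpa [div_eq_mul_inv, cellI] using this

lemma emp_integral {X : Type*} [MeasurableSpace X] {n : ℕ} {j : ℝ → Fin n} (h : IdxMap n j) (x : Fin n → X)
    (f : ℝ × X → ℝ) (hf : Measurable f) (C : ℝ) (hC : ∀ z, |f z| ≤ C) :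
    ∫ z, f z ∂(emp j x) = ∑ i, cellI j f i (x i) := by
  unfold emp
  rw [integral_map (emp_meas h x).aemeasurable hf.aestronglyMeasurable]
  rw [h.integral_split unif01 id measurable_id (fun a => f (a, x (j a))) (int_of_bdd _ _ (hf.comp (emp_meas h x)) C fun _ => hC _)]
  refine Finset.sum_congr rfl fun i _ => ?_
  refine setIntegral_congr_fun (h.cell i) fun a ha => ?_
  have : j a = i := ha
  simp only [this]

lemma jensen_cell {X : Type*} [MeasurableSpace X] {n : ℕ} {j : ℝ → Fin n} (h : IdxMap n j)
    (f : ℝ × X → ℝ) (hf : Measurable f) (C : ℝ) (hC : ∀ z, |f z| ≤ C) (i : Fin n) (y : X) :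
    Real.exp (n * cellI j f i y) ≤ n * cellI j (fun z => Real.exp (f z)) i y := by
  have hn : (0:ℝ) < n := by exact_mod_cast h.pos
  set s := n * cellI j f i y with hs
  have i1 : Integrable (fun a => f (a, y)) (unif01.restrict (j ⁻¹' {i})) := sec_int f hf C hC y _
  have i2 : Integrable (fun a => Real.exp (f (a, y))) (unif01.restrict (j ⁻¹' {i})) :=
    intexp_of_bdd _ _ (hf.comp (by fun_prop)) C fun _ => hC _
  have key : ∫ a in j ⁻¹' {i}, Real.exp s * (f (a, y) + (1 - s)) ∂unif01 ≤ cellI j (fun z => Real.exp (f z)) i y := by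
    refine integral_mono ((i1.add (integrable_const _)).const_mul _) i2 fun a => ?_
    have := Real.add_one_le_exp (f (a, y) - s)
    calc Real.exp s * (f (a, y) + (1 - s)) ≤ Real.exp s * Real.exp (f (a, y) - s) := by gcongr; linarith
      _ = Real.exp (f (a, y)) := by rw [← Real.exp_add]; ring_nf
  rw [integral_const_mul, integral_add i1 (integrable_const _), integral_const,
    measureReal_restrict_apply MeasurableSet.univ, univ_inter, h.mass] at key
  have e : ∫ a in j ⁻¹' {i}, f (a, y) ∂unif01 = s / n := by
    rw [hs]; unfold cellI; field_simp
  rw [e] at key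
  calc Real.exp s = n * (Real.exp s * (s / n + (n:ℝ)⁻¹ • (1 - s))) := by
        rw [smul_eq_mul]; field_simp; ring
    _ ≤ _ := by gcongr

lemma prod_le_one_of_sum {n : ℕ} (c : Fin n → ℝ) (hc : ∀ i, 0 ≤ c i) (hs : ∑ i, c i = n) : ∏ i, c i ≤ 1 := by
  calc ∏ i, c i ≤ ∏ i, Real.exp (c i - 1) := by
        refine Finset.prod_le_prod (fun i _ => hc i) fun i _ => ?_
        have := Real.add_one_le_exp (c i - 1); linarith
    _ = 1 := by
        rw [← Real.exp_sum, Finset.sum_sub_distrib, hs]; simp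

lemma mgf_bound {X : Type*} [MeasurableSpace X] (μ : Measure X) [IsProbabilityMeasure μ] {n : ℕ} {j : ℝ → Fin n} (h : IdxMap n j)
    (f : ℝ × X → ℝ) (hf : Measurable f) (C : ℝ) (hC : ∀ z, |f z| ≤ C) :
    Integrable (fun x : Fin n → X => Real.exp (n * ∫ z, f z ∂(emp j x))) (Measure.pi fun _ => μ) ∧
    ∫ x, Real.exp (n * ∫ z, f z ∂(emp j x)) ∂(Measure.pi fun _ : Fin n => μ) ≤
      (∫ z, Real.exp (f z) ∂(unif01.prod μ)) ^ n := by
  have hn : (0:ℝ) < n := by exact_mod_cast h.pos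
  have e : ∀ x : Fin n → X, Real.exp (n * ∫ z, f z ∂(emp j x)) = ∏ i, Real.exp (n * cellI j f i (x i)) := by
    intro x
    rw [emp_integral h x f hf C hC, Finset.mul_sum, Real.exp_sum]
  simp_rw [e]
  have hI : ∀ i, Integrable (fun y => Real.exp (n * cellI j f i y)) μ := fun i =>
    intexp_of_bdd μ _ ((cellI_meas j f hf i).const_mul _) C fun y => by
      rw [abs_mul, abs_of_pos hn]
      calc (n:ℝ) * |cellI j f i y| ≤ n * (C / n) := by gcongr; exact cellI_le h f C hC i y
        _ = C := by field_simp
  refine ⟨Integrable.fintype_prod hI, ?_⟩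
  rw [integral_fintype_prod_eq_prod (fun i y => Real.exp (n * cellI j f i y))]
  set Z := ∫ z, Real.exp (f z) ∂(unif01.prod μ) with hZ
  have hZi : Integrable (fun z => Real.exp (f z)) (unif01.prod μ) := intexp_of_bdd _ f hf C hC
  have hZ0 : 0 < Z := integral_exp_pos hZi
  let g : ℝ × X → ℝ := fun z => Real.exp (f z)
  have hg : Measurable g := hf.exp
  have hgC : ∀ z, |g z| ≤ Real.exp C := fun z => by
    rw [Real.abs_exp]; exact Real.exp_le_exp.2 ((le_abs_self _).trans (hC z))
  have hci : ∀ i, Integrable (cellI j g i) μ := fun i =>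
    int_of_bdd μ _ (cellI_meas j g hg i) _ (cellI_le h g _ hgC i)
  have hsum : ∑ i, ∫ y, cellI j g i y ∂μ = Z := by
    rw [← integral_finsetSum _ fun i _ => hci i]
    rw [hZ, integral_prod_symm _ hZi]
    refine integral_congr_ae (Eventually.of_forall fun y => ?_)
    exact (h.integral_split unif01 id measurable_id (fun a => g (a, y)) (sec_int g hg _ hgC y _)).symm
  have hle : ∀ i, ∫ y, Real.exp (n * cellI j f i y) ∂μ ≤ n * ∫ y, cellI j g i y ∂μ := by
    intro i
    rw [← integral_const_mul]
    exact integral_mono (hI i) ((hci i).const_mul _) fun y => jensen_cell h f hf C hC i y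
  have hc0 : ∀ i, 0 ≤ ∫ y, cellI j g i y ∂μ := fun i =>
    integral_nonneg fun y => integral_nonneg fun a => (Real.exp_pos _).le
  calc ∏ i, ∫ y, Real.exp (n * cellI j f i y) ∂μ ≤ ∏ i, (n * ∫ y, cellI j g i y ∂μ) :=
        Finset.prod_le_prod (fun i _ => integral_nonneg fun y => (Real.exp_pos _).le) fun i _ => hle i
    _ = (∏ i, ((n * ∫ y, cellI j g i y ∂μ) / Z)) * Z ^ n := by
        rw [Finset.prod_div_distrib]; simp [hZ0.ne']
    _ ≤ 1 * Z ^ n := by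
        gcongr
        refine prod_le_one_of_sum _ (fun i => by have := hc0 i; positivity) ?_
        rw [← Finset.sum_div, ← Finset.mul_sum, hsum]; field_simp
    _ = Z ^ n := one_mul _

lemma chernoff {X : Type*} [MeasurableSpace X] (μ : Measure X) [IsProbabilityMeasure μ] {n : ℕ} {j : ℝ → Fin n} (h : IdxMap n j)
    (f : ℝ × X → ℝ) (hf : Measurable f) (C : ℝ) (hC : ∀ z, |f z| ≤ C) (c : ℝ) :
    (Measure.pi fun _ : Fin n => μ) {x | c + Real.log (∫ z, Real.exp (f z) ∂(unif01.prod μ)) < ∫ z, f z ∂(emp j x)} ≤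
      ENNReal.ofReal (Real.exp (-(n * c))) := by
  have hn : (0:ℝ) < n := by exact_mod_cast h.pos
  set Z := ∫ z, Real.exp (f z) ∂(unif01.prod μ) with hZ
  have hZ0 : 0 < Z := integral_exp_pos (intexp_of_bdd _ f hf C hC)
  obtain ⟨hI, hb⟩ := mgf_bound μ h f hf C hC
  have mk := mul_meas_ge_le_integral_of_nonneg (μ := Measure.pi fun _ : Fin n => μ)
    (Eventually.of_forall fun x => (Real.exp_pos _).le) hI (Real.exp (n * c) * Z ^ n)
  have hsub : {x : Fin n → X | c + Real.log Z < ∫ z, f z ∂(emp j x)} ⊆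
      {x | Real.exp (n * c) * Z ^ n ≤ Real.exp (n * ∫ z, f z ∂(emp j x))} := by
    intro x hx
    have hx' : c + Real.log Z < ∫ z, f z ∂(emp j x) := hx
    show Real.exp (n * c) * Z ^ n ≤ Real.exp (n * ∫ z, f z ∂(emp j x))
    have : Real.exp (n * c) * Z ^ n = Real.exp (n * (c + Real.log Z)) := by
      rw [mul_add, Real.exp_add, Real.exp_nat_mul (Real.log Z), Real.exp_log hZ0]
    rw [this]
    exact Real.exp_le_exp.2 (by gcongr)
  refine (measure_mono hsub).trans ?_
  rw [← ofReal_measureReal (measure_ne_top _ _)]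
  refine ENNReal.ofReal_le_ofReal ?_
  have hp : 0 < Real.exp (n * c) * Z ^ n := by positivity
  have : (Real.exp (n * c) * Z ^ n) * (Measure.pi fun _ : Fin n => μ).real {x | Real.exp (n * c) * Z ^ n ≤ Real.exp (n * ∫ z, f z ∂(emp j x))} ≤ Z ^ n :=
    mk.trans (hb.trans le_rfl)
  have h2 : (Real.exp (n * c)) * (Measure.pi fun _ : Fin n => μ).real {x | Real.exp (n * c) * Z ^ n ≤ Real.exp (n * ∫ z, f z ∂(emp j x))} ≤ 1 := by
    have hZn : 0 < Z ^ n := by positivity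
    nlinarith
  rw [Real.exp_neg, ← one_div, le_div_iff₀ (Real.exp_pos _), mul_comm]
  exact h2

lemma ub_compact (μ : Measure X) [IsProbabilityMeasure μ] (c : ℝ) (hc : 0 ≤ c) (C : Set (ProbabilityMeasure (ℝ × X)))
    (hC : IsCompact C) (hCK : C ⊆ Kset X) (hdisj : Disjoint C (Klev μ c)) :
    ∃ N : ℕ, ∀ (n : ℕ) (j : ℝ → Fin n) (h : IdxMap n j),
      (Measure.pi fun _ : Fin n => μ) {x | (⟨emp j x, emp_prob h x⟩ : ProbabilityMeasure (ℝ × X)) ∈ C} ≤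
        N * ENNReal.ofReal (Real.exp (-(n * c))) := by
  let O : BoundedContinuousFunction (ℝ × X) ℝ → Set (ProbabilityMeasure (ℝ × X)) := fun f =>
    {ν | c + Real.log (∫ x, Real.exp (f x) ∂(unif01.prod μ)) < ∫ x, f x ∂(ν : Measure (ℝ × X))}
  have hO : ∀ f, IsOpen (O f) := fun f =>
    isOpen_lt continuous_const (ProbabilityMeasure.continuous_integral_boundedContinuousFunction f)
  have hcov : C ⊆ ⋃ f, O f := by
    intro ν hν
    have hn : ¬ KLdiv (ν : Measure (ℝ × X)) (unif01.prod μ) ≤ ENNReal.ofReal c := fun hle =>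
      disjoint_left.1 hdisj hν ⟨hCK hν, hle⟩
    rw [KL_level_iff _ _ c hc] at hn
    push Not at hn
    obtain ⟨f, hf⟩ := hn
    exact mem_iUnion.2 ⟨f, hf⟩
  obtain ⟨t, ht⟩ := hC.elim_finite_subcover O hO hcov
  refine ⟨t.card, fun n j h => ?_⟩
  calc (Measure.pi fun _ : Fin n => μ) {x | (⟨emp j x, emp_prob h x⟩ : ProbabilityMeasure (ℝ × X)) ∈ C}
      ≤ (Measure.pi fun _ : Fin n => μ) (⋃ f ∈ t, {x | c + Real.log (∫ z, Real.exp (f z) ∂(unif01.prod μ)) < ∫ z, f z ∂(emp j x)}) := by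
        refine measure_mono fun x hx => ?_
        have := ht hx
        obtain ⟨f, hf, hf2⟩ := mem_iUnion₂.1 this
        exact mem_iUnion₂.2 ⟨f, hf, hf2⟩
    _ ≤ ∑ f ∈ t, (Measure.pi fun _ : Fin n => μ) {x | c + Real.log (∫ z, Real.exp (f z) ∂(unif01.prod μ)) < ∫ z, f z ∂(emp j x)} :=
        measure_biUnion_finset_le _ _
    _ ≤ ∑ f ∈ t, ENNReal.ofReal (Real.exp (-(n * c))) :=
        Finset.sum_le_sum fun f _ => chernoff μ h f f.continuous.measurable ‖f‖ f.norm_coe_le_norm c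
    _ = _ := by simp
end

end Part7

section Part8
open MeasureTheory Filter Set
open scoped ENNReal NNReal

lemma pi_lintegral_prod {α : Type*} [MeasurableSpace α] {n : ℕ} (R : Fin n → Measure α) [∀ i, IsProbabilityMeasure (R i)]
    (f : Fin n → α → ℝ≥0∞) (hf : ∀ i, Measurable (f i)) :
    ∫⁻ z, ∏ i, f i (z i) ∂(Measure.pi R) = ∏ i, ∫⁻ a, f i a ∂(R i) := by
  have hind := ProbabilityTheory.iIndepFun_pi (μ := R) (X := f) (fun i => (hf i).aemeasurable)
  rw [ProbabilityTheory.lintegral_prod_eq_prod_lintegral_of_indepFun Finset.univ _ hind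
    (fun i => (hf i).comp (measurable_pi_apply i))]
  refine Finset.prod_congr rfl fun i _ => ?_
  exact (measurePreserving_eval R i).lintegral_comp (hf i)

lemma pi_withDens {α : Type*} [MeasurableSpace α] {n : ℕ} (R S : Fin n → Measure α) [∀ i, IsProbabilityMeasure (R i)]
    [∀ i, IsProbabilityMeasure (S i)]
    (f : α → ℝ≥0∞) (hf : Measurable f) (hS : ∀ i, S i = (R i).withDensity f) :
    Measure.pi S = (Measure.pi R).withDensity (fun z => ∏ i, f (z i)) := by
  refine Measure.pi_eq fun s hs => ?_
  rw [withDensity_apply _ (MeasurableSet.univ_pi hs), ← lintegral_indicator (MeasurableSet.univ_pi hs)]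
  have : (fun z : Fin n → α => (univ.pi s).indicator (fun z => ∏ i, f (z i)) z) =
      fun z => ∏ i, (s i).indicator f (z i) := by
    funext z
    by_cases hz : z ∈ univ.pi s
    · rw [indicator_of_mem hz]
      exact Finset.prod_congr rfl fun i _ => (indicator_of_mem (hz i (mem_univ i)) _).symm
    · rw [indicator_of_notMem hz]
      simp only [mem_univ_pi, not_forall] at hz
      obtain ⟨i, hi⟩ := hz
      exact (Finset.prod_eq_zero (Finset.mem_univ i) (indicator_of_notMem hi _)).symm
  rw [this, pi_lintegral_prod R (fun i => (s i).indicator f) (fun i => hf.indicator (hs i))]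
  refine Finset.prod_congr rfl fun i _ => ?_
  rw [lintegral_indicator (hs i), hS i, withDensity_apply _ (hs i)]

lemma llr_pi {α : Type*} [MeasurableSpace α] {n : ℕ} (R S : Fin n → Measure α) [∀ i, IsProbabilityMeasure (R i)]
    [∀ i, IsProbabilityMeasure (S i)]
    (f : α → ℝ≥0∞) (hf : Measurable f) (hS : ∀ i, S i = (R i).withDensity f)
    (hi : ∀ i, Integrable (fun a => Real.log (f a).toReal) (S i)) :
    Measure.pi S ≪ Measure.pi R ∧ Integrable (llr (Measure.pi S) (Measure.pi R)) (Measure.pi S) ∧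
    ∫ z, llr (Measure.pi S) (Measure.pi R) z ∂(Measure.pi S) = ∑ i, ∫ a, Real.log (f a).toReal ∂(S i) := by
  have e := pi_withDens R S f hf hS
  have hF : Measurable (fun z : Fin n → α => ∏ i, f (z i)) := by fun_prop
  have hac : Measure.pi S ≪ Measure.pi R := by rw [e]; exact withDensity_absolutelyContinuous _ _
  have hSac : ∀ i, S i ≪ R i := fun i => by rw [hS i]; exact withDensity_absolutelyContinuous _ _
  have hd : ∀ i, (S i).rnDeriv (R i) =ᵐ[R i] f := fun i => by
    rw [hS i]; exact Measure.rnDeriv_withDensity (R i) hf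
  have hpos : ∀ i, ∀ᵐ a ∂(S i), 0 < f a ∧ f a < ⊤ := fun i => by
    filter_upwards [Measure.rnDeriv_pos (hSac i), (hSac i).ae_le (Measure.rnDeriv_lt_top (S i) (R i)), (hSac i).ae_le (hd i)] with a h1 h2 h3
    rw [← h3]; exact ⟨h1, h2⟩
  have hposz : ∀ᵐ z ∂(Measure.pi S), ∀ i, 0 < f (z i) ∧ f (z i) < ⊤ := by
    rw [ae_all_iff]
    exact fun i => (measurePreserving_eval S i).quasiMeasurePreserving.ae (hpos i)
  have hl : llr (Measure.pi S) (Measure.pi R) =ᵐ[Measure.pi S] fun z => ∑ i, Real.log (f (z i)).toReal := by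
    have h1 : (Measure.pi S).rnDeriv (Measure.pi R) =ᵐ[Measure.pi R] fun z => ∏ i, f (z i) := by
      rw [e]; exact Measure.rnDeriv_withDensity _ hF
    filter_upwards [hac.ae_le h1, hposz] with z h2 h3
    rw [llr, h2, ENNReal.toReal_prod, Real.log_prod]
    exact fun i _ => (ENNReal.toReal_pos (h3 i).1.ne' (h3 i).2.ne).ne'
  have hIntg : ∀ i, Integrable (fun z : Fin n → α => Real.log (f (z i)).toReal) (Measure.pi S) := fun i =>
    (measurePreserving_eval S i).integrable_comp_of_integrable (hi i)
  refine ⟨hac, (integrable_congr hl).2 (integrable_finsetSum _ fun i _ => hIntg i), ?_⟩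
  rw [integral_congr_ae hl, integral_finsetSum _ fun i _ => hIntg i]
  refine Finset.sum_congr rfl fun i _ => ?_
  exact integral_comp_eval (μ := S) (i := i) (f := fun a => Real.log (f a).toReal) (hi i).aestronglyMeasurable

/-- entropy lower bound on probabilities -/
lemma lb_abs {α : Type*} [MeasurableSpace α] (Q P : Measure α) [IsProbabilityMeasure Q] [IsProbabilityMeasure P]
    (hac : Q ≪ P) (hi : Integrable (llr Q P) Q) (A : Set α) (hA : MeasurableSet A) (hq : 0 < Q.real A) :
    0 < P.real A ∧ Q.real A * (- Real.log (P.real A)) ≤ ∫ x, llr Q P x ∂Q + Real.log 2 := by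
  have hp : 0 < P.real A := by
    rw [measureReal_def] at hq ⊢
    refine ENNReal.toReal_pos (fun h0 => ?_) (measure_ne_top _ _)
    rw [hac h0] at hq; simp at hq
  refine ⟨hp, ?_⟩
  set p := P.real A
  have hp1 : p ≤ 1 := measureReal_le_one
  let g : α → ℝ := A.indicator fun _ => - Real.log p
  have hg : Measurable g := measurable_const.indicator hA
  have hl : 0 ≤ - Real.log p := by have := Real.log_nonpos hp.le hp1; linarith
  have hC : ∀ x, |g x| ≤ - Real.log p := fun x => by
    by_cases hx : x ∈ A
    · simp [g, hx, abs_of_nonpos (Real.log_nonpos hp.le hp1)]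
    · simp only [g, indicator_of_notMem hx, abs_zero]; exact hl
  have := dv_forward Q P hac hi g hg _ hC
  have e1 : ∫ x, g x ∂Q = Q.real A * (-Real.log p) := by
    rw [integral_indicator hA, setIntegral_const, smul_eq_mul]
  have e2 : ∫ x, Real.exp (g x) ∂P = 1 + p * (p⁻¹ - 1) := by
    have : (fun x => Real.exp (g x)) = fun x => 1 + A.indicator (fun _ => p⁻¹ - 1) x := by
      funext x
      by_cases hx : x ∈ A
      · simp [g, hx, Real.exp_neg, Real.exp_log hp]
      · simp [g, hx]
    rw [this, integral_add (integrable_const _) ((integrable_const _).indicator hA), integral_indicator hA, setIntegral_const]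
    simp [p]
  rw [e1, e2] at this
  refine this.trans ?_
  gcongr
  · have : p * (p⁻¹ - 1) = 1 - p := by field_simp
    rw [this]; linarith
  · have : p * (p⁻¹ - 1) = 1 - p := by field_simp
    rw [this]; linarith

/-- conditional law given cell `i` -/
noncomputable def cellM {X : Type*} [MeasurableSpace X] {n : ℕ} (ν : Measure (ℝ × X)) (j : ℝ → Fin n) (i : Fin n) : Measure (ℝ × X) :=
  (n : ℝ≥0∞) • ν.restrict (Prod.fst ⁻¹' (j ⁻¹' {i}))

section
variable {X : Type*} [MeasurableSpace X]

lemma cellM_prob {n : ℕ} {j : ℝ → Fin n} (h : IdxMap n j) (ν : Measure (ℝ × X)) (hν : ν.map Prod.fst = unif01) (i : Fin n) :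
    IsProbabilityMeasure (cellM ν j i) := by
  constructor
  rw [cellM, Measure.smul_apply, Measure.restrict_apply_univ, ← Measure.map_apply measurable_fst (h.cell i), hν]
  have := h.mass i
  rw [← ofReal_measureReal (measure_ne_top _ _), this, smul_eq_mul, ← ENNReal.ofReal_natCast,
    ← ENNReal.ofReal_mul (by positivity)]
  have hn : (n:ℝ) ≠ 0 := by exact_mod_cast h.pos.ne'
  simp [hn]

lemma cellM_integral {n : ℕ} (j : ℝ → Fin n) (ν : Measure (ℝ × X)) (i : Fin n) (f : ℝ × X → ℝ) :
    ∫ z, f z ∂(cellM ν j i) = n * ∫ z in Prod.fst ⁻¹' (j ⁻¹' {i}), f z ∂ν := by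
  rw [cellM, integral_smul_measure]; simp

lemma cellM_int {n : ℕ} (j : ℝ → Fin n) (ν : Measure (ℝ × X)) (i : Fin n) (f : ℝ × X → ℝ) (hf : Integrable f ν) :
    Integrable f (cellM ν j i) := (hf.restrict).smul_measure (by simp)

lemma cellM_dens {n : ℕ} {j : ℝ → Fin n} (h : IdxMap n j) (ν ρ : Measure (ℝ × X)) [IsProbabilityMeasure ν] [IsProbabilityMeasure ρ]
    (hac : ν ≪ ρ) (i : Fin n) : cellM ν j i = (cellM ρ j i).withDensity (ν.rnDeriv ρ) := by
  rw [cellM, cellM, withDensity_smul_measure, ← restrict_withDensity (measurable_fst (h.cell i)),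
    Measure.withDensity_rnDeriv_eq _ _ hac]

lemma cellM_sum {n : ℕ} {j : ℝ → Fin n} (h : IdxMap n j) (ν : Measure (ℝ × X)) (f : ℝ × X → ℝ) (hf : Integrable f ν) :
    ∑ i, ∫ z, f z ∂(cellM ν j i) = n * ∫ z, f z ∂ν := by
  simp_rw [cellM_integral]
  rw [← Finset.mul_sum, ← h.integral_split ν Prod.fst measurable_fst f hf]

lemma cellM_snd {n : ℕ} {j : ℝ → Fin n} (h : IdxMap n j) (μ : Measure X) [IsProbabilityMeasure μ] (i : Fin n) :
    (cellM (unif01.prod μ) j i).map Prod.snd = μ := by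
  have : Prod.fst ⁻¹' (j ⁻¹' {i}) = (j ⁻¹' {i}) ×ˢ (univ : Set X) := by ext; simp
  rw [cellM, Measure.map_smul, this, ← Measure.prod_restrict, Measure.restrict_univ, Measure.map_snd_prod, smul_smul]
  rw [Measure.restrict_apply_univ]
  have := h.mass i
  have hn : (n:ℝ) ≠ 0 := by exact_mod_cast h.pos.ne'
  rw [← ofReal_measureReal (measure_ne_top _ _), this, ← ENNReal.ofReal_natCast,
    ← ENNReal.ofReal_mul (by positivity)]
  simp [hn]

lemma lb_core {n : ℕ} {j : ℝ → Fin n} (h : IdxMap n j) (ν : Measure (ℝ × X)) [IsProbabilityMeasure ν] (hν : ν.map Prod.fst = unif01)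
    (μ : Measure X) [IsProbabilityMeasure μ] (hac : ν ≪ unif01.prod μ) (hi : Integrable (llr ν (unif01.prod μ)) ν)
    (A : Set (Fin n → X)) (hA : MeasurableSet A)
    (hq : 0 < (Measure.pi fun i => (cellM ν j i).map Prod.snd).real A) :
    0 < (Measure.pi fun _ : Fin n => μ).real A ∧
    (Measure.pi fun i => (cellM ν j i).map Prod.snd).real A * (- Real.log ((Measure.pi fun _ : Fin n => μ).real A)) ≤
      n * ∫ z, llr ν (unif01.prod μ) z ∂ν + Real.log 2 := by
  have i1 := cellM_prob h ν hν
  have i2 := cellM_prob h (unif01.prod μ) (by rw [Measure.map_fst_prod]; simp)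
  have i3 : ∀ i, IsProbabilityMeasure ((cellM ν j i).map Prod.snd) := fun i => Measure.isProbabilityMeasure_map measurable_snd.aemeasurable
  have i4 : ∀ i, IsProbabilityMeasure ((cellM (unif01.prod μ) j i).map Prod.snd) := fun i => Measure.isProbabilityMeasure_map measurable_snd.aemeasurable
  obtain ⟨a1, a2, a3⟩ := llr_pi (cellM (unif01.prod μ) j) (cellM ν j) (ν.rnDeriv (unif01.prod μ)) (Measure.measurable_rnDeriv _ _)
    (cellM_dens h ν _ hac) (fun i => cellM_int j ν i _ hi)
  have hm : Measurable (fun (z : Fin n → ℝ × X) i => (z i).2) := by fun_prop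
  have e1 : Measure.pi (fun i => (cellM ν j i).map Prod.snd) = (Measure.pi (cellM ν j)).map (fun z i => (z i).2) :=
    (Measure.pi_map_pi (fun i => measurable_snd.aemeasurable)).symm
  have e2 : Measure.pi (fun _ : Fin n => μ) = (Measure.pi (cellM (unif01.prod μ) j)).map (fun z i => (z i).2) := by
    have := (Measure.pi_map_pi (μ := cellM (unif01.prod μ) j) (f := fun _ => Prod.snd) (fun i => measurable_snd.aemeasurable)).symm
    simp_rw [cellM_snd h μ] at this
    exact this
  rw [e1] at hq ⊢
  rw [e2]
  rw [map_measureReal_apply hm hA] at hq ⊢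
  rw [map_measureReal_apply hm hA]
  have := lb_abs (Measure.pi (cellM ν j)) (Measure.pi (cellM (unif01.prod μ) j)) a1 a2 _ (hm hA) hq
  rw [a3] at this
  have hs := cellM_sum h ν _ hi
  simp only [llr] at hs
  rw [hs] at this
  exact this
end

end Part8

section Part9
open MeasureTheory Filter Set
open scoped ENNReal NNReal

section
variable {X : Type*} [MeasurableSpace X]

/-- cell-averaged version of `ν` -/
noncomputable def bar {n : ℕ} (ν : Measure (ℝ × X)) (j : ℝ → Fin n) : Measure (ℝ × X) :=
  ∑ i, (unif01.restrict (j ⁻¹' {i})).prod ((cellM ν j i).map Prod.snd)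

lemma cellS_prob {n : ℕ} {j : ℝ → Fin n} (h : IdxMap n j) (ν : Measure (ℝ × X)) (hν : ν.map Prod.fst = unif01) (i : Fin n) :
    IsProbabilityMeasure ((cellM ν j i).map Prod.snd) := by
  have := cellM_prob h ν hν i
  exact Measure.isProbabilityMeasure_map measurable_snd.aemeasurable

lemma measure_split {n : ℕ} {j : ℝ → Fin n} (h : IdxMap n j) {α : Type*} [MeasurableSpace α]
    (P : Measure α) (p : α → ℝ) (hp : Measurable p) (s : Set α) (hs : MeasurableSet s) :
    P s = ∑ i, P (s ∩ p ⁻¹' (j ⁻¹' {i})) := by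
  rw [← measure_biUnion_finset]
  · congr 1; ext a; simp
  · intro i _ k _ hik
    refine Disjoint.mono inter_subset_right inter_subset_right ?_
    refine Disjoint.preimage _ (Disjoint.preimage _ ?_)
    simpa using hik
  · intro i _; exact hs.inter (hp (h.cell i))

lemma bar_fst {n : ℕ} {j : ℝ → Fin n} (h : IdxMap n j) (ν : Measure (ℝ × X)) (hν : ν.map Prod.fst = unif01) :
    (bar ν j).map Prod.fst = unif01 := by
  have := cellS_prob h ν hν
  ext s hs
  rw [Measure.map_apply measurable_fst hs, bar, Measure.finsetSum_apply]
  have e : ∀ i, (unif01.restrict (j ⁻¹' {i})).prod ((cellM ν j i).map Prod.snd) (Prod.fst ⁻¹' s) = unif01 (s ∩ j ⁻¹' {i}) := by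
    intro i
    rw [← Measure.map_apply measurable_fst hs, Measure.map_fst_prod, measure_univ, one_smul, Measure.restrict_apply hs]
  simp_rw [e]
  exact (measure_split h unif01 id measurable_id s hs).symm

lemma bar_prob {n : ℕ} {j : ℝ → Fin n} (h : IdxMap n j) (ν : Measure (ℝ × X)) (hν : ν.map Prod.fst = unif01) :
    IsProbabilityMeasure (bar ν j) := by
  constructor
  have := bar_fst h ν hν
  have h2 : (bar ν j).map Prod.fst univ = 1 := by rw [this]; exact measure_univ
  rwa [Measure.map_apply measurable_fst MeasurableSet.univ, preimage_univ] at h2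

lemma bar_map {n : ℕ} {j : ℝ → Fin n} (h : IdxMap n j) (ν : Measure (ℝ × X)) [IsProbabilityMeasure ν] (hν : ν.map Prod.fst = unif01) :
    (bar ν j).map (fun z => (j z.1, z.2)) = ν.map (fun z => (j z.1, z.2)) := by
  have := cellS_prob h ν hν
  have hm : Measurable (fun z : ℝ × X => (j z.1, z.2)) := (h.meas.comp measurable_fst).prodMk measurable_snd
  have hn : (n:ℝ) ≠ 0 := by exact_mod_cast h.pos.ne'
  ext s hs
  rw [Measure.map_apply hm hs, Measure.map_apply hm hs, bar, Measure.finsetSum_apply,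
    measure_split h ν Prod.fst measurable_fst _ (hm hs)]
  refine Finset.sum_congr rfl fun i _ => ?_
  have hsi : MeasurableSet (Prod.mk i ⁻¹' s) := measurable_prodMk_left hs
  rw [Measure.prod_apply (hm hs)]
  have e : ∫⁻ x in j ⁻¹' {i}, ((cellM ν j i).map Prod.snd) (Prod.mk x ⁻¹' ((fun z : ℝ × X => (j z.1, z.2)) ⁻¹' s)) ∂unif01 =
      ∫⁻ x in j ⁻¹' {i}, ((cellM ν j i).map Prod.snd) (Prod.mk i ⁻¹' s) ∂unif01 := by
    refine setLIntegral_congr_fun (h.cell i) fun x hx => ?_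
    have hx' : j x = i := hx
    have : (Prod.mk x ⁻¹' ((fun z : ℝ × X => (j z.1, z.2)) ⁻¹' s)) = Prod.mk i ⁻¹' s := by
      ext y; simp [hx']
    simp only [this]
  rw [e, setLIntegral_const, Measure.map_apply measurable_snd hsi, cellM, Measure.smul_apply,
    Measure.restrict_apply (measurable_snd hsi), ← ofReal_measureReal (μ := unif01) (measure_ne_top _ _), h.mass, smul_eq_mul,
    mul_comm, ← mul_assoc, ← ENNReal.ofReal_natCast, ← ENNReal.ofReal_mul (by positivity), inv_mul_cancel₀ hn, ENNReal.ofReal_one, one_mul]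
  congr 1
  ext z
  simp only [mem_inter_iff, mem_preimage, mem_singleton_iff]
  constructor
  · rintro ⟨h1, h2⟩; rw [h2]; exact ⟨h1, rfl⟩
  · rintro ⟨h1, h2⟩; rw [h2] at h1; exact ⟨h1, h2⟩

lemma starT_of_map (m : ℕ) {n : ℕ} {j : ℝ → Fin n} (h : IdxMap n j) (Q : Fin n → Fin n → ℝ) (φ : (Fin (m+1) → X) → ℝ)
    (hφ : Measurable φ) (ν : Measure (ℝ × X)) [IsProbabilityMeasure ν] :
    starT m (fun x y => Q (j x) (j y)) φ ν =
      ∫ w : Fin (m+1) → Fin n × X, φ (fun a => (w a).2) * ∏ b : Fin m, Q (w 0).1 (w b.succ).1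
        ∂(Measure.pi fun _ => ν.map (fun z => (j z.1, z.2))) := by
  have hm : Measurable (fun z : ℝ × X => (j z.1, z.2)) := (h.meas.comp measurable_fst).prodMk measurable_snd
  have : IsProbabilityMeasure (ν.map (fun z => (j z.1, z.2))) := Measure.isProbabilityMeasure_map hm.aemeasurable
  have e := Measure.pi_map_pi (μ := fun _ : Fin (m+1) => ν) (f := fun _ z => (j z.1, z.2)) (fun i => hm.aemeasurable)
  rw [← e, integral_map]
  · rfl
  · exact (measurable_pi_lambda _ fun i => hm.comp (measurable_pi_apply i)).aemeasurable
  · refine Measurable.aestronglyMeasurable ?_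
    have h1 : Measurable (fun w : Fin (m+1) → Fin n × X => φ fun a => (w a).2) :=
      hφ.comp (measurable_pi_lambda _ fun a => measurable_snd.comp (measurable_pi_apply a))
    refine h1.mul (Finset.measurable_prod _ fun b _ => ?_)
    have : Measurable (fun p : Fin n × Fin n => Q p.1 p.2) := measurable_of_countable _
    exact this.comp ((measurable_fst.comp (measurable_pi_apply 0)).prodMk (measurable_fst.comp (measurable_pi_apply b.succ)))

lemma starT_bar (m : ℕ) {n : ℕ} {j : ℝ → Fin n} (h : IdxMap n j) (Q : Fin n → Fin n → ℝ) (φ : (Fin (m+1) → X) → ℝ)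
    (hφ : Measurable φ) (ν : Measure (ℝ × X)) [IsProbabilityMeasure ν] (hν : ν.map Prod.fst = unif01) :
    starT m (fun x y => Q (j x) (j y)) φ (bar ν j) = starT m (fun x y => Q (j x) (j y)) φ ν := by
  have := bar_prob h ν hν
  rw [starT_of_map m h Q φ hφ, starT_of_map m h Q φ hφ, bar_map h ν hν]

lemma bar_integral {n : ℕ} {j : ℝ → Fin n} (h : IdxMap n j) (ν : Measure (ℝ × X)) (hν : ν.map Prod.fst = unif01)
    (f : ℝ × X → ℝ) (hf : Measurable f) (C : ℝ) (hC : ∀ z, |f z| ≤ C) :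
    ∫ z, f z ∂(bar ν j) = ∑ i, ∫ y, cellI j f i y ∂((cellM ν j i).map Prod.snd) := by
  have := cellS_prob h ν hν
  rw [bar, integral_finsetSum_measure fun i _ => int_of_bdd _ f hf C hC]
  refine Finset.sum_congr rfl fun i _ => ?_
  rw [integral_prod_symm _ (int_of_bdd _ f hf C hC)]
  rfl

lemma conc {n : ℕ} {j : ℝ → Fin n} (h : IdxMap n j) (ν : Measure (ℝ × X)) (hν : ν.map Prod.fst = unif01)
    (f : ℝ × X → ℝ) (hf : Measurable f) (C : ℝ) (hC : ∀ z, |f z| ≤ C) (δ : ℝ) (hδ : 0 < δ) :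
    (Measure.pi fun i => (cellM ν j i).map Prod.snd).real {x | δ ≤ |∫ z, f z ∂(emp j x) - ∫ z, f z ∂(bar ν j)|} ≤
      C ^ 2 / δ ^ 2 / n := by
  have hn : (0:ℝ) < n := by exact_mod_cast h.pos
  have := cellS_prob h ν hν
  have hb := fun i => int_of_bdd ((cellM ν j i).map Prod.snd) _ (cellI_meas j f hf i) _ (cellI_le h f C hC i)
  have hL : ∀ i, MemLp (cellI j f i) 2 ((cellM ν j i).map Prod.snd) := fun i =>
    MemLp.of_bound (cellI_meas j f hf i).aestronglyMeasurable (C / n) (Eventually.of_forall fun y => cellI_le h f C hC i y)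
  let Y : (Fin n → X) → ℝ := ∑ i, fun x => cellI j f i (x i)
  have hY : ∀ x, Y x = ∫ z, f z ∂(emp j x) := fun x => by
    rw [emp_integral h x f hf C hC]; simp [Y]
  have hLi : ∀ i, MemLp (fun x : Fin n → X => cellI j f i (x i)) 2 (Measure.pi fun i => (cellM ν j i).map Prod.snd) := fun i =>
    (hL i).comp_measurePreserving (measurePreserving_eval _ i)
  have hYL : MemLp Y 2 (Measure.pi fun i => (cellM ν j i).map Prod.snd) := memLp_finsetSum' _ fun i _ => hLi i
  have hE : ∫ x, Y x ∂(Measure.pi fun i => (cellM ν j i).map Prod.snd) = ∫ z, f z ∂(bar ν j) := by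
    rw [bar_integral h ν hν f hf C hC]
    simp only [Y, Finset.sum_apply]
    rw [integral_finsetSum _ fun i _ => (hLi i).integrable (by norm_num)]
    refine Finset.sum_congr rfl fun i _ => ?_
    exact integral_comp_eval (μ := fun i => (cellM ν j i).map Prod.snd) (i := i) (f := cellI j f i) (cellI_meas j f hf i).aestronglyMeasurable
  have hV : ProbabilityTheory.variance Y (Measure.pi fun i => (cellM ν j i).map Prod.snd) ≤ C ^ 2 / n := by
    rw [ProbabilityTheory.variance_sum_pi hL]
    calc ∑ i, ProbabilityTheory.variance (cellI j f i) ((cellM ν j i).map Prod.snd) ≤ ∑ i : Fin n, ((C / n - (-(C / n))) / 2) ^ 2 := by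
          refine Finset.sum_le_sum fun i _ => ProbabilityTheory.variance_le_sq_of_bounded (Eventually.of_forall fun y => ?_) (cellI_meas j f hf i).aemeasurable
          exact abs_le.1 (cellI_le h f C hC i y)
      _ = C ^ 2 / n := by simp; field_simp
  have := ProbabilityTheory.meas_ge_le_variance_div_sq hYL hδ
  rw [hE] at this
  simp_rw [hY] at this
  rw [measureReal_def]
  refine (ENNReal.toReal_mono ENNReal.ofReal_ne_top this).trans ?_
  rw [ENNReal.toReal_ofReal (div_nonneg (ProbabilityTheory.variance_nonneg _ _) (by positivity))]
  calc _ ≤ C ^ 2 / n / δ ^ 2 := by gcongr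
    _ = _ := by rw [div_right_comm]
end

section
variable {X : Type*} [MetricSpace X] [CompactSpace X] [MeasurableSpace X] [BorelSpace X]

lemma test_fun (T : ProbabilityMeasure (ℝ × X) → ℝ) (hT : ContinuousOn T (Kset X)) (ε : ℝ) (hε : 0 < ε) :
    ∃ (t : Finset (BoundedContinuousFunction (ℝ × X) ℝ)) (δ : ℝ), 0 < δ ∧ ∀ ν₁ ∈ Kset X, ∀ ν₂ ∈ Kset X,
      (∀ f ∈ t, |∫ z, f z ∂(ν₁ : Measure (ℝ × X)) - ∫ z, f z ∂(ν₂ : Measure (ℝ × X))| < δ) → |T ν₁ - T ν₂| < ε := by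
  let G : ProbabilityMeasure (ℝ × X) × ProbabilityMeasure (ℝ × X) → ℝ := fun p => |T p.1 - T p.2|
  have hG : ContinuousOn G (Kset X ×ˢ Kset X) :=
    ((hT.comp continuousOn_fst fun p hp => hp.1).sub (hT.comp continuousOn_snd fun p hp => hp.2)).abs
  have hB : IsCompact ((Kset X ×ˢ Kset X) ∩ G ⁻¹' (Ici ε)) := by
    refine (Kset_compact.prod Kset_compact).of_isClosed_subset ?_ inter_subset_left
    exact hG.preimage_isClosed_of_isClosed (Kset_closed.prod Kset_closed) isClosed_Ici
  let O : BoundedContinuousFunction (ℝ × X) ℝ × ℕ → Set (ProbabilityMeasure (ℝ × X) × ProbabilityMeasure (ℝ × X)) := fun a =>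
    {p | 1 / ((a.2 : ℝ) + 1) < |∫ z, a.1 z ∂(p.1 : Measure (ℝ × X)) - ∫ z, a.1 z ∂(p.2 : Measure (ℝ × X))|}
  have hO : ∀ a, IsOpen (O a) := fun a => by
    refine isOpen_lt continuous_const ?_
    exact (((ProbabilityMeasure.continuous_integral_boundedContinuousFunction a.1).comp continuous_fst).sub
      ((ProbabilityMeasure.continuous_integral_boundedContinuousFunction a.1).comp continuous_snd)).abs
  have hcov : ((Kset X ×ˢ Kset X) ∩ G ⁻¹' (Ici ε)) ⊆ ⋃ a, O a := by
    rintro p ⟨_, hp⟩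
    have hne : p.1 ≠ p.2 := by
      intro he
      have : ε ≤ |T p.1 - T p.2| := hp
      rw [he] at this; simp at this; linarith
    have : ∃ f : BoundedContinuousFunction (ℝ × X) ℝ, ∫ z, f z ∂(p.1 : Measure (ℝ × X)) ≠ ∫ z, f z ∂(p.2 : Measure (ℝ × X)) := by
      by_contra hcon
      push Not at hcon
      have i1 : IsProbabilityMeasure (p.1 : Measure (ℝ × X)) := p.1.2
      have i2 : IsProbabilityMeasure (p.2 : Measure (ℝ × X)) := p.2.2
      have h3 : (p.1 : Measure (ℝ × X)) = (p.2 : Measure (ℝ × X)) := ext_of_forall_integral_eq_of_IsFiniteMeasure hcon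
      exact hne (Subtype.ext h3)
    obtain ⟨f, hf⟩ := this
    obtain ⟨k, hk⟩ := exists_nat_one_div_lt (abs_pos.2 (sub_ne_zero.2 hf))
    exact mem_iUnion.2 ⟨(f, k), hk⟩
  obtain ⟨s, hs⟩ := hB.elim_finite_subcover O hO hcov
  classical
  refine ⟨s.image Prod.fst, 1 / ((s.sup Prod.snd : ℕ) + 1 : ℝ), by positivity, fun ν₁ h1 ν₂ h2 hf => ?_⟩
  by_contra hcon
  push Not at hcon
  obtain ⟨a, ha, hp⟩ := mem_iUnion₂.1 (hs (show (ν₁, ν₂) ∈ _ from ⟨⟨h1, h2⟩, hcon⟩))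
  have h3 := hf a.1 (Finset.mem_image_of_mem _ ha)
  have h4 : 1 / ((a.2 : ℝ) + 1) < |∫ z, a.1 z ∂(ν₁ : Measure (ℝ × X)) - ∫ z, a.1 z ∂(ν₂ : Measure (ℝ × X))| := hp
  have h5 : (a.2 : ℝ) ≤ (s.sup Prod.snd : ℕ) := by exact_mod_cast Finset.le_sup (f := Prod.snd) ha
  have h6 : 1 / ((s.sup Prod.snd : ℕ) + 1 : ℝ) ≤ 1 / ((a.2 : ℝ) + 1) := by gcongr
  linarith

lemma lb_event [Nonempty X] (m : ℕ) (K : ℕ → ℝ → ℝ → ℝ) (W : ℝ → ℝ → ℝ) (hW : GoodK m W)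
    (φ : C(Fin (m+1) → X, ℝ)) (hUC : UCstar m K W φ) (Q : ∀ n : ℕ, Fin n → Fin n → ℝ)
    (ν : Measure (ℝ × X)) [IsProbabilityMeasure ν] (hν : ν.map Prod.fst = unif01)
    (ε : ℝ) (hε : 0 < ε) (q : ℝ) (hq1 : q < 1) :
    ∀ᶠ n in atTop, ∀ j : ℝ → Fin n, IdxMap n j → (K n = fun x y => Q n (j x) (j y)) →
      ∃ A : Set (Fin n → X), MeasurableSet A ∧ A ⊆ {x | |starT m W φ (emp j x) - starT m W φ ν| < ε} ∧
        q ≤ (Measure.pi fun i => (cellM ν j i).map Prod.snd).real A := by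
  obtain ⟨t, δ, hδ, ht⟩ := test_fun _ (contT m W hW φ) (ε / 3) (by positivity)
  let B : ℝ := ∑ f ∈ t, ‖f‖ ^ 2 / δ ^ 2
  have hB : Tendsto (fun n : ℕ => B / n) atTop (nhds 0) := tendsto_const_div_atTop_nhds_zero_nat B
  filter_upwards [hUC (ε / 3) (by positivity), hB.eventually (gt_mem_nhds (show (0:ℝ) < 1 - q by linarith))] with n hn hBn j hj hK
  have hpr := cellS_prob hj ν hν
  have hbp := bar_prob hj ν hν
  let A : Set (Fin n → X) := ⋂ f ∈ t, {x | |∫ z, f z ∂(emp j x) - ∫ z, f z ∂(bar ν j)| < δ}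
  have hmA : ∀ f ∈ t, MeasurableSet {x : Fin n → X | |∫ z, f z ∂(emp j x) - ∫ z, f z ∂(bar ν j)| < δ} := by
    intro f _
    refine measurableSet_lt ?_ measurable_const
    simp_rw [fun x => emp_integral hj x f f.continuous.measurable ‖f‖ f.norm_coe_le_norm]
    refine Measurable.abs (Measurable.sub_const ?_ _)
    exact Finset.measurable_sum _ fun i _ => (cellI_meas j f f.continuous.measurable i).comp (measurable_pi_apply i)
  have hA : MeasurableSet A := Finset.measurableSet_biInter t hmA
  refine ⟨A, hA, ?_, ?_⟩
  · intro x hx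
    have h1 : |starT m W φ (emp j x) - starT m W φ (bar ν j)| < ε / 3 := by
      refine ht ⟨emp j x, emp_prob hj x⟩ (emp_fst hj x) ⟨bar ν j, hbp⟩ (bar_fst hj ν hν) fun f hf => ?_
      exact mem_iInter₂.1 hx f hf
    have h2 := hn (bar ν j) hbp (bar_fst hj ν hν)
    have h3 := hn ν inferInstance hν
    rw [hK] at h2 h3
    rw [starT_bar m hj (Q n) φ φ.continuous.measurable ν hν] at h2
    show |starT m W φ (emp j x) - starT m W φ ν| < ε
    rw [abs_lt] at *
    rw [abs_le] at *
    constructor <;> linarith [h1.1, h1.2, h2.1, h2.2, h3.1, h3.2]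
  · have hc : (Measure.pi fun i => (cellM ν j i).map Prod.snd).real Aᶜ ≤ B / n := by
      have hsub : Aᶜ = ⋃ f ∈ t, {x | δ ≤ |∫ z, f z ∂(emp j x) - ∫ z, f z ∂(bar ν j)|} := by
        ext x; simp [A]
      rw [hsub]
      refine (measureReal_biUnion_finset_le _ _).trans ?_
      simp only [B, Finset.sum_div]
      exact Finset.sum_le_sum fun f _ => conc hj ν hν f f.continuous.measurable ‖f‖ f.norm_coe_le_norm δ hδ
    have := probReal_add_probReal_compl (μ := Measure.pi fun i => (cellM ν j i).map Prod.snd) hA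
    linarith

lemma lb_main [Nonempty X] (m : ℕ) (K : ℕ → ℝ → ℝ → ℝ) (W : ℝ → ℝ → ℝ) (hW : GoodK m W)
    (φ : C(Fin (m+1) → X, ℝ)) (hUC : UCstar m K W φ) (Q : ∀ n : ℕ, Fin n → Fin n → ℝ)
    (μ : Measure X) [IsProbabilityMeasure μ]
    (ν : Measure (ℝ × X)) [IsProbabilityMeasure ν] (hν : ν.map Prod.fst = unif01)
    (hac : ν ≪ unif01.prod μ) (hi : Integrable (llr ν (unif01.prod μ)) ν) (ε : ℝ) (hε : 0 < ε) (q : ℝ) (hq : 0 < q) (hq1 : q < 1) :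
    ∀ᶠ n in atTop, ∀ j : ℝ → Fin n, IdxMap n j → (K n = fun x y => Q n (j x) (j y)) →
      ∃ A : Set (Fin n → X), A ⊆ {x | |starT m W φ (emp j x) - starT m W φ ν| < ε} ∧
        0 < (Measure.pi fun _ : Fin n => μ).real A ∧
        q * (- Real.log ((Measure.pi fun _ : Fin n => μ).real A)) ≤ n * ∫ z, llr ν (unif01.prod μ) z ∂ν + Real.log 2 := by
  filter_upwards [lb_event m K W hW φ hUC Q ν hν ε hε q hq1] with n hn j hj hK
  obtain ⟨A, hA, hAs, hqA⟩ := hn j hj hK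
  obtain ⟨hp, hle⟩ := lb_core hj ν hν μ hac hi A hA (by linarith)
  refine ⟨A, hAs, hp, ?_⟩
  have hl : 0 ≤ - Real.log ((Measure.pi fun _ : Fin n => μ).real A) := by
    have := Real.log_nonpos hp.le measureReal_le_one; linarith
  exact (mul_le_mul_of_nonneg_right hqA hl).trans hle
end

end Part9

section Part10
open MeasureTheory Filter Set
open scoped ENNReal NNReal

lemma ae_unif01 : ∀ᵐ x ∂unif01, x ∈ Ioc (0:ℝ) 1 := by
  unfold unif01
  rw [← restrict_Ioc_eq_restrict_Icc]
  exact ae_restrict_mem measurableSet_Ioc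

/-- the index of the cell containing `x` -/
noncomputable def idx (n : ℕ) (hn : 0 < n) (x : ℝ) : Fin n :=
  ⟨min (⌈(n:ℝ) * x⌉₊ - 1) (n - 1), by omega⟩

lemma idx_meas (n : ℕ) (hn : 0 < n) : Measurable (idx n hn) := by
  have h1 : Measurable (fun x : ℝ => ⌈(n:ℝ) * x⌉₊) := Nat.measurable_ceil.comp (measurable_const.mul measurable_id)
  have h2 : Measurable (fun k : ℕ => (⟨min (k - 1) (n - 1), by omega⟩ : Fin n)) := measurable_of_countable _
  exact h2.comp h1

lemma idx_iff (n : ℕ) (hn : 0 < n) (x : ℝ) (hx : x ∈ Ioc (0:ℝ) 1) (i : Fin n) :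
    x ∈ Ioc (((i : ℕ) : ℝ)/n) ((((i : ℕ) : ℝ)+1)/n) ↔ idx n hn x = i := by
  have hn' : (0:ℝ) < n := by exact_mod_cast hn
  have h0 : 0 < ⌈(n:ℝ) * x⌉₊ := Nat.ceil_pos.2 (mul_pos hn' hx.1)
  have h1 : ⌈(n:ℝ) * x⌉₊ ≤ n := Nat.ceil_le.2 (by nlinarith [hx.2])
  rw [mem_Ioc, div_lt_iff₀ hn', le_div_iff₀ hn', idx, Fin.ext_iff]
  simp only
  rw [show min (⌈(n:ℝ) * x⌉₊ - 1) (n - 1) = ⌈(n:ℝ) * x⌉₊ - 1 by omega]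
  have e1 : ((i:ℕ):ℝ) < x * n ↔ (i:ℕ) < ⌈(n:ℝ) * x⌉₊ := by rw [Nat.lt_ceil, mul_comm]
  have e2 : x * n ≤ ((i:ℕ):ℝ) + 1 ↔ ⌈(n:ℝ) * x⌉₊ ≤ (i:ℕ) + 1 := by rw [Nat.ceil_le, mul_comm]; push_cast; rfl
  rw [e1, e2]; omega

lemma stepKernel_eq (n : ℕ) (hn : 0 < n) (Q : Fin n → Fin n → ℝ) (x y : ℝ) (hx : x ∈ Ioc (0:ℝ) 1) (hy : y ∈ Ioc (0:ℝ) 1) :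
    stepKernel n Q x y = Q (idx n hn x) (idx n hn y) := by
  unfold stepKernel
  simp_rw [idx_iff n hn x hx, idx_iff n hn y hy]
  rw [Finset.sum_eq_single (idx n hn x), Finset.sum_eq_single (idx n hn y)]
  · simp
  · intro b _ hb; simp [hb.symm]
  · simp
  · intro b _ hb; simp [hb.symm]
  · simp

lemma idx_IdxMap (n : ℕ) (hn : 0 < n) : IdxMap n (idx n hn) := by
  have hn' : (0:ℝ) < n := by exact_mod_cast hn
  refine ⟨idx_meas n hn, fun i => ?_⟩
  have : unif01.real (idx n hn ⁻¹' {i}) = unif01.real (Ioc (((i : ℕ) : ℝ)/n) ((((i : ℕ) : ℝ)+1)/n)) := by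
    refine measureReal_congr ?_
    filter_upwards [ae_unif01] with x hx
    exact propext (idx_iff n hn x hx i).symm
  rw [this, unif01, measureReal_restrict_apply measurableSet_Ioc]
  have hsub : Ioc (((i : ℕ) : ℝ)/n) ((((i : ℕ) : ℝ)+1)/n) ∩ Icc 0 1 = Ioc (((i : ℕ) : ℝ)/n) ((((i : ℕ) : ℝ)+1)/n) := by
    refine inter_eq_left.2 fun x hx => ⟨?_, ?_⟩
    · exact le_trans (by positivity) hx.1.le
    · refine hx.2.trans ?_
      rw [div_le_one hn']
      exact_mod_cast i.2
  rw [hsub, Real.volume_real_Ioc_of_le (by gcongr; linarith)]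
  field_simp; ring

lemma IdxMap.comp {n : ℕ} {j : ℝ → Fin n} (h : IdxMap n j) (σ : ℝ → ℝ) (hσ : MeasurePreserving σ unif01 unif01) :
    IdxMap n (fun x => j (σ x)) := by
  refine ⟨h.meas.comp hσ.measurable, fun i => ?_⟩
  rw [← h.mass i]
  exact hσ.measureReal_preimage (h.cell i).nullMeasurableSet

lemma IdxMap.integral_comp {n : ℕ} {j : ℝ → Fin n} (h : IdxMap n j) (g : Fin n → ℝ) :
    ∫ x, g (j x) ∂unif01 = (∑ i, g i) / n := by
  have hm : Measurable (fun x => g (j x)) := (measurable_of_countable g).comp h.meas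
  rw [h.integral_split unif01 id measurable_id (fun x => g (j x)) (int_of_bdd _ _ hm (∑ i, |g i|) fun x =>
    Finset.single_le_sum (f := fun i => |g i|) (fun i _ => abs_nonneg _) (Finset.mem_univ (j x)))]
  rw [Finset.sum_div]
  refine Finset.sum_congr rfl fun i _ => ?_
  have : ∫ a in id ⁻¹' (j ⁻¹' {i}), g (j a) ∂unif01 = ∫ a in j ⁻¹' {i}, g i ∂unif01 :=
    setIntegral_congr_fun (h.cell i) fun a ha => by
      have : j a = i := ha
      simp only [this]
  rw [this, setIntegral_const, h.mass, smul_eq_mul]; ring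

/-- normalised degree -/
noncomputable def dg {n : ℕ} (Q : Fin n → Fin n → ℝ) (i : Fin n) : ℝ := (∑ k, |Q i k|) / n

lemma dg_nonneg {n : ℕ} (Q : Fin n → Fin n → ℝ) (i : Fin n) : 0 ≤ dg Q i :=
  div_nonneg (Finset.sum_nonneg fun _ _ => abs_nonneg _) (by positivity)

/-- normalised tail sum -/
noncomputable def tl (m : ℕ) {n : ℕ} (Q : Fin n → Fin n → ℝ) (M : ℝ) : ℝ :=
  (∑ i, if M < dg Q i then dg Q i ^ m else 0) / n

lemma degFun_rep {n : ℕ} {j : ℝ → Fin n} (h : IdxMap n j) (Q : Fin n → Fin n → ℝ) (x : ℝ) :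
    degFun (fun x y => Q (j x) (j y)) x = dg Q (j x) :=
  h.integral_comp (fun k => |Q (j x) k|)

lemma degTail_rep (m : ℕ) {n : ℕ} {j : ℝ → Fin n} (h : IdxMap n j) (Q : Fin n → Fin n → ℝ) (M : ℝ) :
    ∫ x, degTail m (fun x y => Q (j x) (j y)) M x ∂unif01 = tl m Q M := by
  unfold degTail
  simp_rw [degFun_rep h Q]
  exact h.integral_comp (fun i => if M < dg Q i then dg Q i ^ m else 0)

lemma degFun_step (n : ℕ) (hn : 0 < n) (Q : Fin n → Fin n → ℝ) (x : ℝ) (hx : x ∈ Ioc (0:ℝ) 1) :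
    degFun (stepKernel n Q) x = dg Q (idx n hn x) := by
  rw [← degFun_rep (idx_IdxMap n hn) Q x]
  unfold degFun
  refine integral_congr_ae ?_
  filter_upwards [ae_unif01] with y hy
  rw [stepKernel_eq n hn Q x y hx hy]

lemma UI_tl (m : ℕ) (hm : 1 ≤ m) (Q : ∀ n : ℕ, Fin n → Fin n → ℝ)
    (hUI : ∀ ε : ℝ, 0 < ε → ∃ M : ℝ, ∀ n : ℕ,
      ∫⁻ x in {x : ℝ | M < degFun (stepKernel n (Q n)) x ^ m},
        ENNReal.ofReal (degFun (stepKernel n (Q n)) x ^ m) ∂unif01 ≤ ENNReal.ofReal ε) :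
    ∀ ε : ℝ, 0 < ε → ∃ M : ℝ, 1 ≤ M ∧ ∀ n : ℕ, 0 < n → tl m (Q n) M ≤ ε := by
  intro ε hε
  obtain ⟨M, hM⟩ := hUI ε hε
  refine ⟨max 1 M, le_max_left _ _, fun n hn => ?_⟩
  have hI := idx_IdxMap n hn
  let g : Fin n → ℝ := fun i => if max 1 M < dg (Q n) i then dg (Q n) i ^ m else 0
  have hg0 : ∀ i, 0 ≤ g i := fun i => by
    simp only [g]; split_ifs
    · exact pow_nonneg (dg_nonneg _ _) _
    · exact le_rfl
  have e : tl m (Q n) (max 1 M) = ∫ x, g (idx n hn x) ∂unif01 := (hI.integral_comp g).symm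
  have hgm : Measurable (fun x => g (idx n hn x)) := (measurable_of_countable g).comp hI.meas
  have hgi : Integrable (fun x => g (idx n hn x)) unif01 := int_of_bdd _ _ hgm (∑ i, |g i|) fun x =>
    Finset.single_le_sum (f := fun i => |g i|) (fun i _ => abs_nonneg _) (Finset.mem_univ (idx n hn x))
  rw [e, integral_eq_lintegral_of_nonneg_ae (Eventually.of_forall fun x => hg0 _) hgm.aestronglyMeasurable]
  refine ENNReal.toReal_le_of_le_ofReal hε.le (le_trans ?_ (hM n))
  set S := {x : ℝ | M < degFun (stepKernel n (Q n)) x ^ m} with hS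
  let S' : Set ℝ := {x : ℝ | M < dg (Q n) (idx n hn x) ^ m}
  have hS'm : MeasurableSet S' := by
    have : Measurable (fun x => dg (Q n) (idx n hn x) ^ m) := (measurable_of_countable (fun i => dg (Q n) i ^ m)).comp hI.meas
    exact measurableSet_lt measurable_const this
  have hSS : S =ᵐ[unif01] S' := by
    filter_upwards [ae_unif01] with x hx
    apply propext
    show (M < degFun (stepKernel n (Q n)) x ^ m) ↔ (M < dg (Q n) (idx n hn x) ^ m)
    rw [degFun_step n hn (Q n) x hx]
  rw [Measure.restrict_congr_set hSS, ← lintegral_indicator hS'm]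
  refine lintegral_mono_ae ?_
  filter_upwards [ae_unif01] with x hx
  simp only [g]
  split_ifs with hc
  · have h1 : 1 ≤ dg (Q n) (idx n hn x) := (le_max_left _ _).trans hc.le
    have h2 : M < dg (Q n) (idx n hn x) ^ m :=
      ((le_max_right _ _).trans_lt hc).trans_le (le_self_pow₀ h1 (by omega))
    rw [indicator_of_mem (show x ∈ S' from h2), degFun_step n hn (Q n) x hx]
  · simp

lemma cutDist_congr (W₁ W₂ W : ℝ → ℝ → ℝ) (h : ∀ᵐ x ∂unif01, ∀ᵐ y ∂unif01, W₁ x y = W₂ x y) :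
    cutDist W₁ W = cutDist W₂ W := by
  unfold cutDist
  congr 1; funext S; congr 1; funext T
  have e : ∀ S : {S : Set ℝ // MeasurableSet S}, volume.restrict (Icc (0:ℝ) 1 ∩ S.1) = unif01.restrict S.1 := fun S => by
    rw [unif01, Measure.restrict_restrict S.2, inter_comm]
  rw [e S, e T]
  congr 1
  refine integral_congr_ae (ae_restrict_of_ae ?_)
  filter_upwards [h] with x hx
  refine integral_congr_ae (ae_restrict_of_ae ?_)
  filter_upwards [hx] with y hy
  rw [hy]

/-- existence of good relabelings -/
lemma exists_rep (n : ℕ) (hn : 0 < n) (Q : Fin n → Fin n → ℝ) (W : ℝ → ℝ → ℝ) (η : ℝ) (hη : 0 < η) :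
    ∃ j : ℝ → Fin n, IdxMap n j ∧ cutDist (fun x y => Q (j x) (j y)) W < weakCutDist (stepKernel n Q) W + η := by
  have : Nonempty {σ : ℝ → ℝ // MPB σ} := ⟨⟨id, bijOn_id _, MeasurePreserving.id _⟩⟩
  obtain ⟨σ, hσ⟩ := exists_lt_of_ciInf_lt (show (⨅ σ : {σ : ℝ → ℝ // MPB σ}, cutDist (fun x y => stepKernel n Q (σ.1 x) (σ.1 y)) W) <
    weakCutDist (stepKernel n Q) W + η from lt_add_of_pos_right _ hη)
  refine ⟨fun x => idx n hn (σ.1 x), (idx_IdxMap n hn).comp σ.1 σ.2.2, ?_⟩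
  rwa [cutDist_congr _ (fun x y => stepKernel n Q (σ.1 x) (σ.1 y)) W]
  have ha : ∀ᵐ x ∂unif01, σ.1 x ∈ Ioc (0:ℝ) 1 := σ.2.2.quasiMeasurePreserving.ae ae_unif01
  filter_upwards [ha] with x hx
  filter_upwards [ha] with y hy
  rw [stepKernel_eq n hn Q _ _ hx hy]

lemma starT_emp {X : Type*} [MeasurableSpace X] (m : ℕ) {n : ℕ} {j : ℝ → Fin n} (h : IdxMap n j) (Q : Fin n → Fin n → ℝ)
    (φ : (Fin (m+1) → X) → ℝ) (hφ : Measurable φ) (x : Fin n → X) :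
    starT m (fun x y => Q (j x) (j y)) φ (emp j x) =
      (∑ i : Fin (m+1) → Fin n, φ (x ∘ i) * ∏ b : Fin m, Q (i 0) (i b.succ)) / (n : ℝ) ^ (m+1) := by
  have := emp_prob h x
  have hx : Measurable (fun i : Fin n => (i, x i)) := measurable_of_countable _
  have hj : IsProbabilityMeasure (unif01.map j) := Measure.isProbabilityMeasure_map h.meas.aemeasurable
  have hm : Measurable (fun z : ℝ × X => (j z.1, z.2)) := (h.meas.comp measurable_fst).prodMk measurable_snd
  rw [starT_of_map m h Q φ hφ]
  have e1 : (emp j x).map (fun z => (j z.1, z.2)) = (unif01.map j).map (fun i => (i, x i)) := by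
    rw [emp, Measure.map_map hm (emp_meas h x), Measure.map_map hx h.meas]; rfl
  rw [e1]
  have hp : IsProbabilityMeasure ((unif01.map j).map (fun i => (i, x i))) := Measure.isProbabilityMeasure_map hx.aemeasurable
  have e := Measure.pi_map_pi (μ := fun _ : Fin (m+1) => unif01.map j) (f := fun _ i => (i, x i)) (fun i => hx.aemeasurable)
  have hF : Measurable (fun w : Fin (m+1) → Fin n × X => φ (fun a => (w a).2) * ∏ b : Fin m, Q (w 0).1 (w b.succ).1) := by
    have h1 : Measurable (fun w : Fin (m+1) → Fin n × X => φ fun a => (w a).2) :=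
      hφ.comp (measurable_pi_lambda _ fun a => measurable_snd.comp (measurable_pi_apply a))
    refine h1.mul (Finset.measurable_prod _ fun b _ => ?_)
    have : Measurable (fun p : Fin n × Fin n => Q p.1 p.2) := measurable_of_countable _
    exact this.comp ((measurable_fst.comp (measurable_pi_apply 0)).prodMk (measurable_fst.comp (measurable_pi_apply b.succ)))
  have hx2 : Measurable (fun (z : Fin (m+1) → Fin n) i => (z i, x (z i))) :=
    measurable_pi_lambda _ fun i => hx.comp (measurable_pi_apply i)
  rw [← e, integral_map hx2.aemeasurable hF.aestronglyMeasurable,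
    integral_fintype .of_finite, Finset.sum_div]
  refine Finset.sum_congr rfl fun i _ => ?_
  have hw : (Measure.pi fun _ : Fin (m+1) => unif01.map j).real {i} = ((n:ℝ) ^ (m+1))⁻¹ := by
    rw [← univ_pi_singleton i, measureReal_def, Measure.pi_pi, ENNReal.toReal_prod]
    have : ∀ a, ((unif01.map j) {i a}).toReal = (n:ℝ)⁻¹ := fun a => by
      rw [Measure.map_apply h.meas (measurableSet_singleton _)]; exact h.mass _
    simp [this]
  rw [hw, smul_eq_mul, div_eq_inv_mul]
  rfl

end Part10

section Part11
open MeasureTheory Filter Set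
open scoped ENNReal NNReal

lemma flip_zero {ι α : Type*} [Fintype ι] [DecidableEq ι] [MeasurableSpace α] (ρ : Measure α) [IsProbabilityMeasure ρ]
    (τ : α → α) (hτ : MeasurePreserving τ ρ ρ) (k : ι) (F : (ι → α) → ℝ) (hF : AEStronglyMeasurable F (Measure.pi fun _ : ι => ρ))
    (hodd : ∀ z, F (fun i => if i = k then τ (z i) else z i) = - F z) : ∫ z, F z ∂(Measure.pi fun _ : ι => ρ) = 0 := by
  have mp := measurePreserving_pi (fun _ : ι => ρ) (fun _ : ι => ρ) (f := fun i a => if i = k then τ a else a)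
    (fun i => by
      by_cases hi : i = k
      · simpa [hi] using hτ
      · simp only [hi, if_false]; exact MeasurePreserving.id ρ)
  have h1 : ∫ z, F z ∂(Measure.pi fun _ : ι => ρ) = ∫ z, F (fun i => if i = k then τ (z i) else z i) ∂(Measure.pi fun _ : ι => ρ) := by
    conv_lhs => rw [← mp.map_eq]
    rw [integral_map mp.measurable.aemeasurable (by rw [mp.map_eq]; exact hF)]
  simp_rw [hodd] at h1
  rw [integral_neg] at h1
  linarith

/-- the interval `[-1,1]` as a space of (generalised) signs -/
abbrev Sg := Icc (-1:ℝ) 1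

/-- sign flip -/
def sflip (s : Sg) : Sg := ⟨-s.1, by have := s.2; constructor <;> linarith [this.1, this.2]⟩

lemma sflip_meas : Measurable sflip := (measurable_subtype_coe.neg).subtype_mk

lemma sone_mem : (1:ℝ) ∈ Icc (-1:ℝ) 1 := by norm_num

/-- fair coin -/
noncomputable def coin : Measure Sg :=
  (2⁻¹ : ℝ≥0∞) • Measure.dirac (⟨1, sone_mem⟩ : Sg) + (2⁻¹ : ℝ≥0∞) • Measure.dirac (sflip ⟨1, sone_mem⟩)

instance : IsProbabilityMeasure coin := ⟨by simp [coin, ENNReal.inv_two_add_inv_two]⟩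

lemma coin_flip : MeasurePreserving sflip coin coin := by
  refine ⟨sflip_meas, ?_⟩
  have : sflip (sflip ⟨1, sone_mem⟩) = ⟨1, sone_mem⟩ := by simp [sflip]
  rw [coin, Measure.map_add _ _ sflip_meas, Measure.map_smul, Measure.map_smul, Measure.map_dirac' sflip_meas,
    Measure.map_dirac' sflip_meas, this, add_comm]

lemma coin_sq : ∫ s : Sg, s.1 * s.1 ∂coin = 1 := by
  have hm : Measurable (fun s : Sg => s.1 * s.1) := measurable_subtype_coe.mul measurable_subtype_coe
  have hb : ∀ s : Sg, |s.1 * s.1| ≤ 1 := fun s => by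
    have := s.2
    rw [abs_of_nonneg (mul_self_nonneg _)]
    nlinarith [this.1, this.2]
  rw [coin, integral_add_measure ((int_of_bdd _ _ hm 1 hb).smul_measure (by simp)) ((int_of_bdd _ _ hm 1 hb).smul_measure (by simp)),
    integral_smul_measure, integral_smul_measure, integral_dirac' _ _ hm.stronglyMeasurable, integral_dirac' _ _ hm.stronglyMeasurable]
  simp [sflip]; norm_num

lemma coin_cov {n : ℕ} (k l : Fin n) :
    ∫ s : Fin n → Sg, (s k).1 * (s l).1 ∂(Measure.pi fun _ => coin) = if k = l then 1 else 0 := by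
  split_ifs with h
  · subst h
    have := integral_comp_eval (μ := fun _ : Fin n => coin) (i := k) (f := fun s : Sg => s.1 * s.1)
      (measurable_subtype_coe.mul measurable_subtype_coe).aestronglyMeasurable
    exact this.trans coin_sq
  · refine flip_zero coin sflip coin_flip k _ ?_ fun z => ?_
    · refine Measurable.aestronglyMeasurable ?_
      exact (measurable_subtype_coe.comp (measurable_pi_apply k)).mul (measurable_subtype_coe.comp (measurable_pi_apply l))
    · simp [sflip, Ne.symm h]

/-- the test function `s₁ s₂` -/
def phis : C(Fin (2+1) → Sg, ℝ) := ⟨fun s => (s 1).1 * (s 2).1, by fun_prop⟩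

lemma starT_phis_zero (W : ℝ → ℝ → ℝ) (hW : GoodK 2 W) : starT 2 W phis (unif01.prod coin) = 0 := by
  have hmp : MeasurePreserving (Prod.map id sflip) (unif01.prod coin) (unif01.prod coin) :=
    (MeasurePreserving.id unif01).prod coin_flip
  unfold starT
  refine flip_zero (unif01.prod coin) (Prod.map id sflip) hmp 1 _ ?_ fun z => ?_
  · exact (starT_integrable 2 W hW.meas hW.int hW.deg _ (by rw [Measure.map_fst_prod]; simp) phis).aestronglyMeasurable
  · simp [phis, sflip, Fin.prod_univ_two]

/-- normalised Hilbert-Schmidt norm -/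
noncomputable def eta {n : ℕ} (Q : Fin n → Fin n → ℝ) : ℝ := (∑ i, ∑ k, Q i k ^ 2) / (n:ℝ) ^ 3

lemma V_phis {n : ℕ} (Q : Fin n → Fin n → ℝ) :
    ∫ s : Fin n → Sg, (∑ i : Fin (2+1) → Fin n, phis (s ∘ i) * ∏ b : Fin 2, Q (i 0) (i b.succ)) / (n : ℝ) ^ (2+1) ∂(Measure.pi fun _ => coin) = eta Q := by
  rw [integral_div, eta]
  congr 1
  rw [integral_finsetSum]
  · have e : ∀ i : Fin (2+1) → Fin n, ∫ s : Fin n → Sg, phis (s ∘ i) * ∏ b : Fin 2, Q (i 0) (i b.succ) ∂(Measure.pi fun _ => coin) =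
      if i 1 = i 2 then Q (i 0) (i 1) * Q (i 0) (i 2) else 0 := by
      intro i
      rw [integral_mul_const]
      have := coin_cov (i 1) (i 2)
      have e2 : ∫ s : Fin n → Sg, phis (s ∘ i) ∂(Measure.pi fun _ => coin) = if i 1 = i 2 then 1 else 0 := this
      rw [e2, Fin.prod_univ_two]
      split_ifs <;> simp
    simp_rw [e]
    rw [← (Fin.consEquiv fun _ : Fin (2+1) => Fin n).sum_comp, Fintype.sum_prod_type]
    refine Finset.sum_congr rfl fun i _ => ?_
    rw [← (finTwoArrowEquiv (Fin n)).symm.sum_comp, Fintype.sum_prod_type]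
    refine Finset.sum_congr rfl fun k _ => ?_
    have : ∀ y : Fin n, (if ((Fin.consEquiv fun _ : Fin (2+1) => Fin n) (i, (finTwoArrowEquiv (Fin n)).symm (k, y))) 1 =
        ((Fin.consEquiv fun _ : Fin (2+1) => Fin n) (i, (finTwoArrowEquiv (Fin n)).symm (k, y))) 2 then
        Q (((Fin.consEquiv fun _ : Fin (2+1) => Fin n) (i, (finTwoArrowEquiv (Fin n)).symm (k, y))) 0)
          (((Fin.consEquiv fun _ : Fin (2+1) => Fin n) (i, (finTwoArrowEquiv (Fin n)).symm (k, y))) 1) *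
        Q (((Fin.consEquiv fun _ : Fin (2+1) => Fin n) (i, (finTwoArrowEquiv (Fin n)).symm (k, y))) 0)
          (((Fin.consEquiv fun _ : Fin (2+1) => Fin n) (i, (finTwoArrowEquiv (Fin n)).symm (k, y))) 2) else 0) =
        if k = y then Q i k * Q i y else 0 := fun y => rfl
    simp_rw [this]
    simp [sq]
  · intro i _
    refine (int_of_bdd _ _ ?_ ‖phis‖ fun s => phis.norm_coe_le_norm _).mul_const _
    exact phis.continuous.measurable.comp (measurable_pi_lambda _ fun a => measurable_pi_apply (i a))

lemma eta_small (K : ℕ → ℝ → ℝ → ℝ) (W : ℝ → ℝ → ℝ) (hW : GoodK 2 W) (hUC : UCstar 2 K W phis) (Q : ∀ n : ℕ, Fin n → Fin n → ℝ)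
    (ε : ℝ) (hε : 0 < ε) :
    ∀ᶠ n in atTop, ∀ j : ℝ → Fin n, IdxMap n j → (K n = fun x y => Q n (j x) (j y)) → eta (Q n) ≤ ε := by
  have : Nonempty Sg := ⟨⟨1, sone_mem⟩⟩
  set B := ‖phis‖ * ∫ x, degFun W x ^ 2 ∂unif01 with hB
  have hB0 : 0 ≤ B := mul_nonneg (norm_nonneg _) (integral_nonneg fun x => by positivity)
  set r := ε / (3 * (B + 1)) with hr
  have hr0 : 0 < r := by positivity
  have hfst : (unif01.prod coin).map Prod.fst = unif01 := by rw [Measure.map_fst_prod]; simp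
  filter_upwards [hUC (ε / 3) (by positivity), lb_event 2 K W hW phis hUC Q (unif01.prod coin) hfst (ε / 3) (by positivity) (1 - r) (by linarith)]
    with n hn hA j hj hK
  obtain ⟨A, hAm, hAs, hAq⟩ := hA j hj hK
  have e1 : (fun i => (cellM (unif01.prod coin) j i).map Prod.snd) = fun _ => coin := funext fun i => cellM_snd hj coin i
  rw [e1] at hAq
  rw [← V_phis]
  simp_rw [← starT_emp 2 hj (Q n) phis phis.continuous.measurable, ← hK]
  have hpt : ∀ s : Fin n → Sg, starT 2 (K n) phis (emp j s) ≤ 2 * ε / 3 + Aᶜ.indicator (fun _ => B) s := by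
    intro s
    have hp := emp_prob hj s
    have h1 := abs_le.1 (hn (emp j s) hp (emp_fst hj s))
    by_cases hs : s ∈ A
    · rw [indicator_of_notMem (by simpa using hs)]
      have h2 : |starT 2 W phis (emp j s) - starT 2 W phis (unif01.prod coin)| < ε / 3 := hAs hs
      rw [starT_phis_zero W hW, sub_zero] at h2
      have := abs_lt.1 h2
      linarith [h1.2, this.2]
    · rw [indicator_of_mem (show s ∈ Aᶜ from hs)]
      have h2 := abs_le.1 (starT_bound 2 W hW.meas hW.int hW.deg (emp j s) (emp_fst hj s) phis)
      linarith [h1.2, h2.2]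
  have hIntg : Integrable (fun s : Fin n → Sg => 2 * ε / 3 + Aᶜ.indicator (fun _ => B) s) (Measure.pi fun _ => coin) :=
    (integrable_const _).add ((integrable_const _).indicator hAm.compl)
  have hint2 : Integrable (fun s : Fin n → Sg => starT 2 (K n) phis (emp j s)) (Measure.pi fun _ => coin) := by
    simp_rw [hK, starT_emp 2 hj (Q n) phis phis.continuous.measurable]
    refine Integrable.div_const (integrable_finsetSum _ fun i _ => ?_) _
    refine (int_of_bdd _ _ ?_ ‖phis‖ fun s => phis.norm_coe_le_norm _).mul_const _
    exact phis.continuous.measurable.comp (measurable_pi_lambda _ fun a => measurable_pi_apply (i a))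
  refine (integral_mono hint2 hIntg hpt).trans ?_
  rw [integral_add (integrable_const _) ((integrable_const _).indicator hAm.compl), integral_indicator hAm.compl, setIntegral_const,
    integral_const, probReal_univ, one_smul, smul_eq_mul]
  have h3 := probReal_add_probReal_compl (μ := Measure.pi fun _ : Fin n => coin) hAm
  have h4 : (Measure.pi fun _ : Fin n => coin).real Aᶜ ≤ r := by linarith
  have h5 : r * B ≤ ε / 3 := by
    rw [hr, div_mul_eq_mul_div, div_le_div_iff₀ (by positivity) (by norm_num)]
    nlinarith
  nlinarith [mul_le_mul_of_nonneg_right h4 hB0]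

end Part11

section Part12
open MeasureTheory Filter Set
open scoped ENNReal NNReal

lemma pair_sum {m n : ℕ} (b c : Fin m) (hbc : b ≠ c) (w : Fin n → ℝ) :
    ∑ k : Fin m → Fin n, (if k b = k c then ∏ a, w (k a) else 0) = (∑ l, w l ^ 2) * (∑ l, w l) ^ (m - 2) := by
  classical
  let g : Fin n → Fin m → Fin n → ℝ := fun l a t => if a = b ∨ a = c then (if t = l then w l else 0) else w t
  have e1 : ∀ k : Fin m → Fin n, (if k b = k c then ∏ a, w (k a) else 0) = ∑ l, ∏ a, g l a (k a) := by
    intro k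
    by_cases h : k b = k c
    · rw [if_pos h, Finset.sum_eq_single (k b)]
      · refine Finset.prod_congr rfl fun a _ => ?_
        simp only [g]
        split_ifs with h1 h2
        · rw [h2]
        · rcases h1 with rfl | rfl
          · exact absurd rfl h2
          · exact absurd h.symm h2
        · rfl
      · intro l _ hl
        refine Finset.prod_eq_zero (Finset.mem_univ b) ?_
        simp [g, Ne.symm hl]
      · simp
    · rw [if_neg h]
      symm
      refine Finset.sum_eq_zero fun l _ => ?_
      by_cases h1 : k b = l
      · refine Finset.prod_eq_zero (Finset.mem_univ c) ?_
        have : k c ≠ l := fun h2 => h (h1.trans h2.symm)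
        simp [g, this]
      · refine Finset.prod_eq_zero (Finset.mem_univ b) ?_
        simp [g, h1]
  simp_rw [e1]
  rw [Finset.sum_comm, Finset.sum_mul]
  refine Finset.sum_congr rfl fun l _ => ?_
  have e2 := Finset.prod_univ_sum (fun _ : Fin m => (Finset.univ : Finset (Fin n))) (g l)
  rw [Fintype.piFinset_univ] at e2
  rw [← e2]
  have e3 : ∀ a, ∑ t, g l a t = if a = b ∨ a = c then w l else ∑ t, w t := by
    intro a
    simp only [g]
    split_ifs <;> simp
  simp_rw [e3]
  rw [Finset.prod_ite, Finset.prod_const, Finset.prod_const]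
  have h1 : (Finset.univ.filter fun a : Fin m => a = b ∨ a = c) = {b, c} := by ext a; simp
  have h2 : (Finset.univ.filter fun a : Fin m => ¬ (a = b ∨ a = c)) = ({b, c} : Finset (Fin m))ᶜ := by ext a; simp
  rw [h1, h2, Finset.card_compl, Finset.card_pair hbc, Fintype.card_fin]

/-- collision functional -/
noncomputable def coll (m : ℕ) {n : ℕ} (Q : Fin n → Fin n → ℝ) : ℝ :=
  (∑ i, (∑ l, (|Q i l| / n) ^ 2) * dg Q i ^ (m - 2)) / n

lemma uv_bound {X : Type*} (m n : ℕ) (Q : Fin n → Fin n → ℝ) (hQ : ∀ i, Q i i = 0)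
    (φ : (Fin (m+1) → X) → ℝ) (C : ℝ) (hC : ∀ x, |φ x| ≤ C) (x : Fin n → X) :
    |(∑ i ∈ Finset.univ.filter (fun i : Fin (m+1) → Fin n => Function.Injective i),
        φ (x ∘ i) * ∏ b : Fin m, Q (i 0) (i b.succ)) / (n:ℝ) ^ (m+1) -
      (∑ i : Fin (m+1) → Fin n, φ (x ∘ i) * ∏ b : Fin m, Q (i 0) (i b.succ)) / (n:ℝ) ^ (m+1)| ≤
      C * ((Finset.univ.filter fun p : Fin m × Fin m => p.1 ≠ p.2).card * coll m Q) := by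
  classical
  rcases Nat.eq_zero_or_pos n with rfl | hn
  · simp [coll]
  have hn' : (0:ℝ) < n := by exact_mod_cast hn
  have hC0 : 0 ≤ C := (abs_nonneg _).trans (hC (x ∘ fun _ => ⟨0, hn⟩))
  let P := Finset.univ.filter fun p : Fin m × Fin m => p.1 ≠ p.2
  have hpt : ∀ i : Fin (m+1) → Fin n, ¬ Function.Injective i →
      |φ (x ∘ i) * ∏ b : Fin m, Q (i 0) (i b.succ)| ≤ C * ∑ p ∈ P, if i p.1.succ = i p.2.succ then ∏ b : Fin m, |Q (i 0) (i b.succ)| else 0 := by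
    intro i hi
    rw [abs_mul, Finset.abs_prod]
    refine mul_le_mul (hC _) ?_ (Finset.prod_nonneg fun _ _ => abs_nonneg _) hC0
    have hnn : ∀ p ∈ P, (0:ℝ) ≤ if i p.1.succ = i p.2.succ then ∏ b : Fin m, |Q (i 0) (i b.succ)| else 0 := fun p _ => by
      split_ifs
      · exact Finset.prod_nonneg fun _ _ => abs_nonneg _
      · exact le_rfl
    by_cases h0 : ∃ b : Fin m, i 0 = i b.succ
    · obtain ⟨b, hb⟩ := h0
      have hz : ∏ b : Fin m, |Q (i 0) (i b.succ)| = 0 :=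
        Finset.prod_eq_zero (Finset.mem_univ b) (by rw [← hb, hQ, abs_zero])
      exact hz.le.trans (Finset.sum_nonneg hnn)
    · push Not at h0
      unfold Function.Injective at hi
      push Not at hi
      obtain ⟨a, c, hac, hne⟩ := hi
      have : ∃ b d : Fin m, b ≠ d ∧ i b.succ = i d.succ := by
        rcases Fin.eq_zero_or_eq_succ a with rfl | ⟨b, rfl⟩
        · rcases Fin.eq_zero_or_eq_succ c with rfl | ⟨d, rfl⟩
          · exact absurd rfl hne
          · exact absurd hac (h0 d)
        · rcases Fin.eq_zero_or_eq_succ c with rfl | ⟨d, rfl⟩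
          · exact absurd hac.symm (h0 b)
          · exact ⟨b, d, fun h => hne (by rw [h]), hac⟩
      obtain ⟨b, d, hbd, he⟩ := this
      have := Finset.single_le_sum hnn (show (b, d) ∈ P by simp [P, hbd])
      simpa [he] using this
  have hdiff : (∑ i ∈ Finset.univ.filter (fun i : Fin (m+1) → Fin n => Function.Injective i),
        φ (x ∘ i) * ∏ b : Fin m, Q (i 0) (i b.succ)) -
      (∑ i : Fin (m+1) → Fin n, φ (x ∘ i) * ∏ b : Fin m, Q (i 0) (i b.succ)) =
      - ∑ i ∈ Finset.univ.filter (fun i : Fin (m+1) → Fin n => ¬ Function.Injective i), φ (x ∘ i) * ∏ b : Fin m, Q (i 0) (i b.succ) := by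
    rw [← Finset.sum_filter_add_sum_filter_not Finset.univ (fun i : Fin (m+1) → Fin n => Function.Injective i)
      (fun i => φ (x ∘ i) * ∏ b : Fin m, Q (i 0) (i b.succ))]
    ring
  rw [← sub_div, hdiff, abs_div, abs_neg, abs_of_pos (show (0:ℝ) < (n:ℝ) ^ (m+1) by positivity), div_le_iff₀ (by positivity)]
  have hnn : ∀ (p : Fin m × Fin m) (i : Fin (m+1) → Fin n), (0:ℝ) ≤ if i p.1.succ = i p.2.succ then ∏ b : Fin m, |Q (i 0) (i b.succ)| else 0 := fun p i => by
    split_ifs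
    · exact Finset.prod_nonneg fun _ _ => abs_nonneg _
    · exact le_rfl
  have hpair : ∀ p ∈ P, ∑ i : Fin (m+1) → Fin n, (if i p.1.succ = i p.2.succ then ∏ b : Fin m, |Q (i 0) (i b.succ)| else 0) = coll m Q * (n:ℝ) ^ (m+1) := by
    intro p hp
    have hne : p.1 ≠ p.2 := by simpa [P] using hp
    have hm2 : 2 ≤ m := by
      have h1 := p.1.2
      have h2 := p.2.2
      have h3 : (p.1 : ℕ) ≠ p.2 := fun h => hne (Fin.ext h)
      omega
    rw [← (Fin.consEquiv fun _ : Fin (m+1) => Fin n).sum_comp, Fintype.sum_prod_type]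
    have : ∀ i : Fin n, ∑ k : Fin m → Fin n, (if ((Fin.consEquiv fun _ : Fin (m+1) => Fin n) (i, k)) p.1.succ = ((Fin.consEquiv fun _ : Fin (m+1) => Fin n) (i, k)) p.2.succ
        then ∏ b : Fin m, |Q (((Fin.consEquiv fun _ : Fin (m+1) => Fin n) (i, k)) 0) (((Fin.consEquiv fun _ : Fin (m+1) => Fin n) (i, k)) b.succ)| else 0) =
        ∑ k : Fin m → Fin n, (if k p.1 = k p.2 then ∏ b : Fin m, |Q i (k b)| else 0) := fun i => rfl
    simp_rw [this]
    simp_rw [fun i => pair_sum p.1 p.2 hne (fun t => |Q i t|)]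
    unfold coll dg
    rw [div_mul_eq_mul_div, eq_div_iff hn'.ne', Finset.sum_mul, Finset.sum_mul]
    refine Finset.sum_congr rfl fun i _ => ?_
    simp_rw [div_pow]
    rw [← Finset.sum_div]
    obtain ⟨r, rfl⟩ : ∃ r, m = r + 2 := ⟨m - 2, by omega⟩
    simp only [Nat.add_sub_cancel]
    field_simp
    ring
  calc |∑ i ∈ Finset.univ.filter (fun i : Fin (m+1) → Fin n => ¬ Function.Injective i), φ (x ∘ i) * ∏ b : Fin m, Q (i 0) (i b.succ)|
      ≤ ∑ i ∈ Finset.univ.filter (fun i : Fin (m+1) → Fin n => ¬ Function.Injective i), |φ (x ∘ i) * ∏ b : Fin m, Q (i 0) (i b.succ)| :=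
        Finset.abs_sum_le_sum_abs _ _
    _ ≤ ∑ i ∈ Finset.univ.filter (fun i : Fin (m+1) → Fin n => ¬ Function.Injective i),
          C * ∑ p ∈ P, (if i p.1.succ = i p.2.succ then ∏ b : Fin m, |Q (i 0) (i b.succ)| else 0) :=
        Finset.sum_le_sum fun i hi => hpt i (Finset.mem_filter.1 hi).2
    _ ≤ ∑ i : Fin (m+1) → Fin n, C * ∑ p ∈ P, (if i p.1.succ = i p.2.succ then ∏ b : Fin m, |Q (i 0) (i b.succ)| else 0) :=
        Finset.sum_le_sum_of_subset_of_nonneg (Finset.filter_subset _ _) fun i _ _ => mul_nonneg hC0 (Finset.sum_nonneg fun p _ => hnn p i)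
    _ = C * (P.card * coll m Q) * (n:ℝ) ^ (m+1) := by
        rw [← Finset.mul_sum, Finset.sum_comm, Finset.sum_congr rfl hpair, Finset.sum_const, nsmul_eq_mul]; ring

lemma coll_nonneg (m : ℕ) {n : ℕ} (Q : Fin n → Fin n → ℝ) : 0 ≤ coll m Q :=
  div_nonneg (Finset.sum_nonneg fun i _ => mul_nonneg (Finset.sum_nonneg fun _ _ => sq_nonneg _) (pow_nonneg (dg_nonneg _ _) _)) (by positivity)

lemma coll_le (m : ℕ) (hm : 2 ≤ m) {n : ℕ} (Q : Fin n → Fin n → ℝ) (M : ℝ) (hM : 1 ≤ M) :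
    coll m Q ≤ tl m Q M + M ^ (m - 2) * eta Q := by
  rcases Nat.eq_zero_or_pos n with rfl | hn
  · simp [coll, tl, eta]
  have hn' : (0:ℝ) < n := by exact_mod_cast hn
  have he : eta Q = (∑ i, ∑ l, (|Q i l| / n) ^ 2) / n := by
    unfold eta
    simp_rw [div_pow, sq_abs, ← Finset.sum_div]
    field_simp
  rw [he, coll, tl, mul_div_assoc', ← add_div]
  gcongr
  rw [Finset.mul_sum, ← Finset.sum_add_distrib]
  refine Finset.sum_le_sum fun i _ => ?_
  have h0 : 0 ≤ ∑ l, (|Q i l| / n) ^ 2 := Finset.sum_nonneg fun _ _ => sq_nonneg _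
  have hd := dg_nonneg Q i
  have h1 : ∑ l, (|Q i l| / n) ^ 2 ≤ dg Q i ^ 2 := by
    have : dg Q i = ∑ l, |Q i l| / n := by rw [dg, Finset.sum_div]
    rw [this]
    exact Finset.sum_sq_le_sq_sum_of_nonneg fun l _ => by positivity
  split_ifs with h
  · have : (∑ l, (|Q i l| / n) ^ 2) * dg Q i ^ (m - 2) ≤ dg Q i ^ m := by
      calc _ ≤ dg Q i ^ 2 * dg Q i ^ (m - 2) := by gcongr
        _ = _ := by rw [← pow_add]; congr 1; omega
    have h3 : 0 ≤ M ^ (m - 2) * ∑ l, (|Q i l| / n) ^ 2 := by positivity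
    linarith
  · rw [zero_add, mul_comm]
    push Not at h
    gcongr

end Part12

section Part13
open MeasureTheory Filter Set
open scoped ENNReal NNReal

variable {X : Type*} [MetricSpace X] [CompactSpace X] [MeasurableSpace X] [BorelSpace X]

lemma exists_K (Q : ∀ n : ℕ, Fin n → Fin n → ℝ) (W : ℝ → ℝ → ℝ)
    (hcut : Tendsto (fun n => weakCutDist (stepKernel n (Q n)) W) atTop (nhds 0)) :
    ∃ K : ℕ → ℝ → ℝ → ℝ, (∀ n, 0 < n → ∃ j : ℝ → Fin n, IdxMap n j ∧ K n = fun x y => Q n (j x) (j y)) ∧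
      Tendsto (fun n => cutDist (K n) W) atTop (nhds 0) := by
  have h : ∀ n : ℕ, ∃ k : ℝ → ℝ → ℝ, 0 < n → (∃ j : ℝ → Fin n, IdxMap n j ∧ k = fun x y => Q n (j x) (j y)) ∧
      cutDist k W < weakCutDist (stepKernel n (Q n)) W + 1 / n := by
    intro n
    rcases Nat.eq_zero_or_pos n with rfl | hn
    · exact ⟨0, fun h => absurd h (lt_irrefl _)⟩
    · obtain ⟨j, hj, hc⟩ := exists_rep n hn (Q n) W (1 / n) (by positivity)
      exact ⟨_, fun _ => ⟨⟨j, hj, rfl⟩, hc⟩⟩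
  choose K hK using h
  refine ⟨K, fun n hn => (hK n hn).1, ?_⟩
  have h2 : Tendsto (fun n : ℕ => weakCutDist (stepKernel n (Q n)) W + 1 / (n:ℝ)) atTop (nhds 0) := by
    simpa using hcut.add (tendsto_const_div_atTop_nhds_zero_nat (1:ℝ))
  refine tendsto_of_tendsto_of_tendsto_of_le_of_le' tendsto_const_nhds h2 (Eventually.of_forall fun n => cutDist_nonneg _ _) ?_
  filter_upwards [eventually_gt_atTop 0] with n hn using (hK n hn).2.le

lemma K_meas {n : ℕ} {j : ℝ → Fin n} (h : IdxMap n j) (Q : Fin n → Fin n → ℝ) :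
    Measurable (Function.uncurry fun x y => Q (j x) (j y)) := by
  have h1 : Measurable (fun p : Fin n × Fin n => Q p.1 p.2) := measurable_of_countable _
  exact h1.comp ((h.meas.comp measurable_fst).prodMk (h.meas.comp measurable_snd))

lemma K_good (m : ℕ) {n : ℕ} {j : ℝ → Fin n} (h : IdxMap n j) (Q : Fin n → Fin n → ℝ) :
    GoodK m (fun x y => Q (j x) (j y)) := by
  refine GoodK_bdd m _ (K_meas h Q) (∑ i, ∑ k, |Q i k|) fun x y => ?_
  exact (Finset.single_le_sum (f := fun k => |Q (j x) k|) (fun _ _ => abs_nonneg _) (Finset.mem_univ (j y))).trans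
    (Finset.single_le_sum (f := fun i => ∑ k, |Q i k|) (fun _ _ => Finset.sum_nonneg fun _ _ => abs_nonneg _) (Finset.mem_univ (j x)))

lemma W_good (m : ℕ) (W : ℝ → ℝ → ℝ) (hWmeas : Measurable (Function.uncurry W)) (hWL1 : kerNorm W 1 ≠ ⊤)
    (hWdeg : ∫⁻ x, ENNReal.ofReal (degFun W x ^ m) ∂unif01 ≠ ⊤) : GoodK m W := by
  refine ⟨hWmeas, ?_, ?_⟩
  · rw [← memLp_one_iff_integrable]
    exact ⟨hWmeas.aestronglyMeasurable, lt_top_iff_ne_top.2 hWL1⟩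
  · refine ⟨((degFun_meas W hWmeas).pow_const m).aestronglyMeasurable, ?_⟩
    rw [hasFiniteIntegral_iff_ofReal (Eventually.of_forall fun x => pow_nonneg (degFun_nonneg W x) m)]
    exact lt_top_iff_ne_top.2 hWdeg

lemma W_good2 (m : ℕ) (hm : 2 ≤ m) (W : ℝ → ℝ → ℝ) (h : GoodK m W) : GoodK 2 W := by
  refine ⟨h.meas, h.int, ?_⟩
  refine Integrable.mono' ((integrable_const (1:ℝ)).add h.deg) ((degFun_meas W h.meas).pow_const 2).aestronglyMeasurable
    (Eventually.of_forall fun x => ?_)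
  have h0 := degFun_nonneg W x
  rw [Real.norm_of_nonneg (by positivity)]
  show degFun W x ^ 2 ≤ 1 + degFun W x ^ m
  rcases le_total (degFun W x) 1 with h1 | h1
  · have := pow_le_one₀ h0 h1 (n := 2)
    have : 0 ≤ degFun W x ^ m := by positivity
    linarith
  · have := pow_le_pow_right₀ h1 hm
    linarith

lemma tl_two (m : ℕ) (hm : 2 ≤ m) {n : ℕ} (Q : Fin n → Fin n → ℝ) (M : ℝ) (hM : 1 ≤ M) : tl 2 Q M ≤ tl m Q M := by
  unfold tl
  refine div_le_div_of_nonneg_right (Finset.sum_le_sum fun i _ => ?_) (by positivity)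
  split_ifs with h
  · exact pow_le_pow_right₀ (hM.trans h.le) hm
  · exact le_rfl

lemma setup_all [Nonempty X] (m : ℕ) (hm : 1 ≤ m) (Q : ∀ n : ℕ, Fin n → Fin n → ℝ) (hQzero : ∀ n i, Q n i i = 0)
    (W : ℝ → ℝ → ℝ) (hWmeas : Measurable (Function.uncurry W)) (hWL1 : kerNorm W 1 ≠ ⊤)
    (hcut : Tendsto (fun n => weakCutDist (stepKernel n (Q n)) W) atTop (nhds 0))
    (hUI : ∀ ε : ℝ, 0 < ε → ∃ M : ℝ, ∀ n : ℕ,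
      ∫⁻ x in {x : ℝ | M < degFun (stepKernel n (Q n)) x ^ m},
        ENNReal.ofReal (degFun (stepKernel n (Q n)) x ^ m) ∂unif01 ≤ ENNReal.ofReal ε)
    (hWdeg : ∫⁻ x, ENNReal.ofReal (degFun W x ^ m) ∂unif01 ≠ ⊤) (φ : C(Fin (m+1) → X, ℝ)) :
    GoodK m W ∧ ∃ K : ℕ → ℝ → ℝ → ℝ, (∀ n, 0 < n → ∃ j : ℝ → Fin n, IdxMap n j ∧ K n = fun x y => Q n (j x) (j y)) ∧
      UCstar m K W φ ∧ ∀ ε : ℝ, 0 < ε → ∀ᶠ n in atTop, ∀ x : Fin n → X,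
        |(∑ i ∈ Finset.univ.filter (fun i : Fin (m+1) → Fin n => Function.Injective i),
        φ (x ∘ i) * ∏ b : Fin m, Q n (i 0) (i b.succ)) / (n:ℝ) ^ (m+1) -
      (∑ i : Fin (m+1) → Fin n, φ (x ∘ i) * ∏ b : Fin m, Q n (i 0) (i b.succ)) / (n:ℝ) ^ (m+1)| ≤ ε := by
  have hW := W_good m W hWmeas hWL1 hWdeg
  obtain ⟨K, hK, hc⟩ := exists_K Q W hcut
  have htl := UI_tl m hm Q hUI
  have hgood : ∀ r, ∀ᶠ n in atTop, GoodK r (K n) := by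
    intro r
    filter_upwards [eventually_gt_atTop 0] with n hn
    obtain ⟨j, hj, e⟩ := hK n hn
    rw [e]; exact K_good r hj (Q n)
  have hUIm : UIseq m K := by
    intro ε hε
    obtain ⟨M, hM, h⟩ := htl ε hε
    refine ⟨M, hM, ?_⟩
    filter_upwards [eventually_gt_atTop 0] with n hn
    obtain ⟨j, hj, e⟩ := hK n hn
    rw [e, degTail_rep m hj]; exact h n hn
  refine ⟨hW, K, hK, UC_all m K W (hgood m) hW hc hUIm φ, ?_⟩
  have hφb : ∀ x, |φ x| ≤ ‖φ‖ := fun x => φ.norm_coe_le_norm x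
  intro ε hε
  rcases Nat.lt_or_ge m 2 with hm2 | hm2
  · obtain rfl : m = 1 := by omega
    refine Eventually.of_forall fun n x => ?_
    refine (uv_bound 1 n (Q n) (hQzero n) φ ‖φ‖ hφb x).trans ?_
    have : (Finset.univ.filter fun p : Fin 1 × Fin 1 => p.1 ≠ p.2) = ∅ := by decide
    rw [this]; simpa using hε.le
  · have hUI2 : UIseq 2 K := by
      intro ε hε
      obtain ⟨M, hM, h⟩ := htl ε hε
      refine ⟨M, hM, ?_⟩
      filter_upwards [eventually_gt_atTop 0] with n hn
      obtain ⟨j, hj, e⟩ := hK n hn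
      rw [e, degTail_rep 2 hj]; exact (tl_two m hm2 (Q n) M hM).trans (h n hn)
    have hW2 := W_good2 m hm2 W hW
    have : Nonempty Sg := ⟨⟨1, sone_mem⟩⟩
    have hUC2 : UCstar 2 K W phis := UC_all 2 K W (hgood 2) hW2 hc hUI2 phis
    set N : ℝ := ((Finset.univ.filter fun p : Fin m × Fin m => p.1 ≠ p.2).card : ℝ) with hN
    have hN0 : 0 ≤ N := by positivity
    set δ : ℝ := ε / (2 * (‖φ‖ * N + 1)) with hδ
    have hB : 0 < ‖φ‖ * N + 1 := by positivity
    have hδ0 : 0 < δ := by positivity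
    obtain ⟨M, hM, h⟩ := htl δ hδ0
    have hMp : 0 < M ^ (m - 2) := by positivity
    filter_upwards [eventually_gt_atTop 0, eta_small K W hW2 hUC2 Q (δ / M ^ (m-2)) (by positivity)] with n hn hη x
    obtain ⟨j, hj, e⟩ := hK n hn
    have h1 := hη j hj e
    rw [le_div_iff₀ hMp] at h1
    have h2 : coll m (Q n) ≤ 2 * δ := by
      have := coll_le m hm2 (Q n) M hM
      have := h n hn
      linarith
    refine (uv_bound m n (Q n) (hQzero n) φ ‖φ‖ hφb x).trans ?_
    calc ‖φ‖ * (N * coll m (Q n)) = (‖φ‖ * N) * coll m (Q n) := by ring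
      _ ≤ (‖φ‖ * N + 1) * (2 * δ) := mul_le_mul (by linarith) h2 (coll_nonneg _ _) hB.le
      _ = ε := by rw [hδ]; field_simp

end Part13

section Part14
open MeasureTheory Filter Set
open scoped ENNReal NNReal

variable {X : Type*} [MetricSpace X] [CompactSpace X] [MeasurableSpace X] [BorelSpace X]

lemma term_le (n : ℕ) (hn : 0 < n) (p : ℝ≥0∞) (r : ℝ) (h : p ≤ ENNReal.ofReal (Real.exp (n * r))) :
    (((n : ℝ)⁻¹ : ℝ) : EReal) * ENNReal.log p ≤ (r : EReal) := by
  have hn' : (0:ℝ) < n := by exact_mod_cast hn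
  have h1 := ENNReal.log_le_log h
  rw [ENNReal.log_ofReal, if_neg (by simpa using Real.exp_pos _), Real.log_exp] at h1
  have h0 : (0 : EReal) ≤ (((n : ℝ)⁻¹ : ℝ) : EReal) := by exact_mod_cast (inv_pos.2 hn').le
  refine (mul_le_mul_of_nonneg_left h1 h0).trans ?_
  rw [← EReal.coe_mul]
  refine EReal.coe_le_coe_iff.2 (le_of_eq ?_)
  field_simp

lemma term_ge (n : ℕ) (hn : 0 < n) (p : ℝ≥0∞) (r : ℝ) (h : ENNReal.ofReal (Real.exp (n * r)) ≤ p) :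
    (r : EReal) ≤ (((n : ℝ)⁻¹ : ℝ) : EReal) * ENNReal.log p := by
  have hn' : (0:ℝ) < n := by exact_mod_cast hn
  have h1 := ENNReal.log_le_log h
  rw [ENNReal.log_ofReal, if_neg (by simpa using Real.exp_pos _), Real.log_exp] at h1
  have h0 : (0 : EReal) ≤ (((n : ℝ)⁻¹ : ℝ) : EReal) := by exact_mod_cast (inv_pos.2 hn').le
  refine le_trans ?_ (mul_le_mul_of_nonneg_left h1 h0)
  rw [← EReal.coe_mul]
  refine EReal.coe_le_coe_iff.2 (le_of_eq ?_)
  field_simp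

lemma rate_iff [Nonempty X] (m : ℕ) (W : ℝ → ℝ → ℝ) (hW : GoodK m W) (φ : C(Fin (m+1) → X, ℝ))
    (G : SimpleGraph (Fin (m+1))) [DecidableRel G.Adj]
    (hstar : ∀ a b : Fin (m+1), G.Adj a b ↔ (a ≠ b ∧ (a = 0 ∨ b = 0)))
    (μ : Measure X) [IsProbabilityMeasure μ] (t c : ℝ) (hc : 0 ≤ c) :
    rate0 G W φ μ t ≤ ENNReal.ofReal c ↔ ∃ ν ∈ Klev μ c, starT m W φ (ν : ProbabilityMeasure (ℝ × X)) = t := by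
  constructor
  · intro h
    let A : ℕ → Set (ProbabilityMeasure (ℝ × X)) := fun k => Klev μ (c + 1 / ((k:ℝ) + 1)) ∩ (fun ν : ProbabilityMeasure (ℝ × X) => starT m W φ ν) ⁻¹' {t}
    have hck : ∀ k : ℕ, 0 ≤ c + 1 / ((k:ℝ) + 1) := fun k => by positivity
    have hcl : ∀ k, IsClosed (A k) := fun k =>
      ((contT m W hW φ).mono fun ν hν => hν.1).preimage_isClosed_of_isClosed (Klev_compact μ _ (hck k)).isClosed isClosed_singleton
    have hne : (⋂ k, A k).Nonempty := by
      refine IsCompact.nonempty_iInter_of_sequence_nonempty_isCompact_isClosed A ?_ ?_ ?_ hcl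
      · intro k ν hν
        refine ⟨⟨hν.1.1, hν.1.2.trans (ENNReal.ofReal_le_ofReal ?_)⟩, hν.2⟩
        have : 1 / (((k+1 : ℕ):ℝ) + 1) ≤ 1 / ((k:ℝ) + 1) := by
          apply one_div_le_one_div_of_le (by positivity); push_cast; linarith
        linarith
      · intro k
        have hlt : rate0 G W φ μ t < ENNReal.ofReal (c + 1 / ((k:ℝ) + 1)) := by
          refine h.trans_lt ?_
          have : (0:ℝ) < 1 / ((k:ℝ) + 1) := by positivity
          exact (ENNReal.ofReal_lt_ofReal_iff (by linarith)).2 (by linarith)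
        unfold rate0 at hlt
        rw [iInf_lt_iff] at hlt
        obtain ⟨⟨ν, ⟨hp, hf⟩, hfin, hT⟩, hlt⟩ := hlt
        refine ⟨⟨ν, hp⟩, ⟨hf, hlt.le⟩, ?_⟩
        rw [TWphi_star G hstar] at hT
        exact hT
      · exact (Klev_compact μ _ (hck 0)).of_isClosed_subset (hcl 0) inter_subset_left
    obtain ⟨ν, hν⟩ := hne
    rw [mem_iInter] at hν
    refine ⟨ν, ⟨(hν 0).1.1, ?_⟩, (hν 0).2⟩
    have hlim : Tendsto (fun k : ℕ => ENNReal.ofReal (c + 1 / ((k:ℝ) + 1))) atTop (nhds (ENNReal.ofReal c)) := by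
      refine ENNReal.tendsto_ofReal ?_
      simpa using (tendsto_const_nhds (x := c)).add (tendsto_one_div_add_atTop_nhds_zero_nat (𝕜 := ℝ))
    exact ge_of_tendsto' hlim fun k => (hν k).1.2
  · rintro ⟨ν, hν, hT⟩
    have hp : IsProbabilityMeasure (ν : Measure (ℝ × X)) := ν.2
    refine (iInf_le _ (⟨(ν : Measure (ℝ × X)), ⟨hp, hν.1⟩, (hν.2.trans_lt ENNReal.ofReal_lt_top).ne, ?_⟩ :
      {ν : Measure (ℝ × X) // inTM ν ∧ KLdiv ν (unif01.prod μ) ≠ ⊤ ∧ TWphi G W φ ν = t})).trans hν.2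
    rw [TWphi_star G hstar]; exact hT

lemma ldp_core [Nonempty X] (m : ℕ) (W : ℝ → ℝ → ℝ) (hW : GoodK m W) (φ : C(Fin (m+1) → X, ℝ))
    (G : SimpleGraph (Fin (m+1))) [DecidableRel G.Adj]
    (hstar : ∀ a b : Fin (m+1), G.Adj a b ↔ (a ≠ b ∧ (a = 0 ∨ b = 0)))
    (μ : Measure X) [IsProbabilityMeasure μ] (Q : ∀ n : ℕ, Fin n → Fin n → ℝ) (K : ℕ → ℝ → ℝ → ℝ)
    (hK : ∀ n, 0 < n → ∃ j : ℝ → Fin n, IdxMap n j ∧ K n = fun x y => Q n (j x) (j y))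
    (hUC : UCstar m K W φ) (S : ∀ n : ℕ, (Fin n → X) → ℝ)
    (hS : ∀ ε : ℝ, 0 < ε → ∀ᶠ n in atTop, ∀ j : ℝ → Fin n, IdxMap n j → (K n = fun x y => Q n (j x) (j y)) →
      ∀ x, |S n x - starT m W φ (emp j x)| ≤ ε) :
    SatisfiesLDP (fun n => Measure.pi fun _ : Fin n => μ) S (rate0 G W φ μ) := by
  have hrate := rate_iff m W hW φ G hstar μ
  have hTK : ∀ c, 0 ≤ c → IsCompact ((fun ν : ProbabilityMeasure (ℝ × X) => starT m W φ ν) '' Klev μ c) := fun c hc =>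
    (Klev_compact μ c hc).image_of_continuousOn ((contT m W hW φ).mono fun ν hν => hν.1)
  refine ⟨?_, ?_⟩
  · intro c hc
    have e : {x | rate0 G W φ μ x ≤ c} = (fun ν : ProbabilityMeasure (ℝ × X) => starT m W φ ν) '' Klev μ c.toReal := by
      ext t
      have := hrate t c.toReal ENNReal.toReal_nonneg
      rw [ENNReal.ofReal_toReal hc] at this
      exact this
    rw [e]
    exact hTK _ ENNReal.toReal_nonneg
  intro F _
  constructor
  · rw [EReal.neg_le]
    refine le_iInf₂ fun t ht => ?_
    rw [EReal.neg_le]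
    by_cases htop : rate0 G W φ μ t = ⊤
    · rw [htop]; simp
    set c := (rate0 G W φ μ t).toReal with hcdef
    have hc : 0 ≤ c := ENNReal.toReal_nonneg
    have hrc : rate0 G W φ μ t = ENNReal.ofReal c := (ENNReal.ofReal_toReal htop).symm
    obtain ⟨ν, hν, hT⟩ := (hrate t c hc).1 hrc.le
    have hcE : ((rate0 G W φ μ t : ℝ≥0∞) : EReal) = (c : EReal) := by
      rw [hrc, EReal.coe_ennreal_ofReal, max_eq_left hc]
    rw [hcE]
    obtain ⟨hac, hIntg, hle⟩ : (ν : Measure (ℝ × X)) ≪ unif01.prod μ ∧ Integrable (llr (ν : Measure (ℝ × X)) (unif01.prod μ)) (ν : Measure (ℝ × X)) ∧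
        ∫ z, llr (ν : Measure (ℝ × X)) (unif01.prod μ) z ∂(ν : Measure (ℝ × X)) ≤ c := by
      have h2 := hν.2
      unfold KLdiv at h2
      split_ifs at h2 with h
      · exact ⟨h.1, h.2, (ENNReal.ofReal_le_ofReal_iff hc).1 h2⟩
      · simp at h2
    obtain ⟨ε, hε, hball⟩ := Metric.isOpen_iff.1 isOpen_interior t ht
    refine le_of_forall_lt_imp_le_of_dense fun a ha => ?_
    obtain ⟨r, har, hrc'⟩ := EReal.lt_iff_exists_real_btwn.1 ha
    refine har.le.trans ?_
    have hr : r < -c := by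
      rw [← EReal.coe_neg] at hrc'
      exact EReal.coe_lt_coe_iff.1 hrc'
    set b := -r with hb
    have hbc : c < b := by linarith
    have hb0 : 0 < b := by linarith
    set q := (c + b) / (2 * b) with hq
    have hq0 : 0 < q := by positivity
    have hq1 : q < 1 := by rw [hq, div_lt_one (by positivity)]; linarith
    have hqb : q * b = (c + b) / 2 := by rw [hq]; field_simp
    have hp : IsProbabilityMeasure (ν : Measure (ℝ × X)) := ν.2
    have hlarge : ∀ᶠ n : ℕ in atTop, Real.log 2 ≤ n * ((b - c) / 2) :=
      (tendsto_natCast_atTop_atTop.atTop_mul_const (by linarith : 0 < (b - c) / 2)).eventually_ge_atTop _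
    refine le_liminf_of_le (by isBoundedDefault) ?_
    filter_upwards [eventually_gt_atTop 0, hS (ε / 2) (by positivity), hlarge,
      lb_main m K W hW φ hUC Q μ (ν : Measure (ℝ × X)) hν.1 hac hIntg (ε / 2) (by positivity) q hq0 hq1] with n hn hSn hl hlb
    obtain ⟨j, hj, e⟩ := hK n hn
    obtain ⟨A, hA, hpos, hlog⟩ := hlb j hj e
    have hn' : (0:ℝ) < n := by exact_mod_cast hn
    have hAF : A ⊆ {x | S n x ∈ F} := by
      intro x hx
      have h1 := hA hx
      have h2 := hSn j hj e x
      show S n x ∈ F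
      refine interior_subset (hball ?_)
      rw [Metric.mem_ball, Real.dist_eq, ← hT]
      simp only [mem_setOf_eq] at h1
      calc _ ≤ |S n x - starT m W φ (emp j x)| + |starT m W φ (emp j x) - starT m W φ ν| := abs_sub_le _ _ _
        _ < ε := by linarith
    refine term_ge n hn _ r (le_trans ?_ (measure_mono hAF))
    rw [ENNReal.ofReal_le_iff_le_toReal (measure_ne_top _ _)]
    change _ ≤ (Measure.pi fun _ : Fin n => μ).real A
    rw [← Real.le_log_iff_exp_le hpos]
    set l := Real.log ((Measure.pi fun _ : Fin n => μ).real A)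
    have h3 : q * (-l) ≤ q * (n * b) := by
      have : n * ∫ z, llr (ν : Measure (ℝ × X)) (unif01.prod μ) z ∂(ν : Measure (ℝ × X)) ≤ n * c := mul_le_mul_of_nonneg_left hle hn'.le
      have e1 : q * (n * b) = n * ((c + b) / 2) := by rw [← hqb]; ring
      rw [e1]
      nlinarith
    have h4 := le_of_mul_le_mul_left h3 hq0
    have : n * r = - (n * b) := by rw [hb]; ring
    linarith
  · rw [EReal.le_neg]
    refine le_of_forall_lt_imp_le_of_dense fun a ha => ?_
    obtain ⟨c, hac, hcJ⟩ := EReal.lt_iff_exists_real_btwn.1 ha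
    obtain ⟨r, har, hrc⟩ := EReal.lt_iff_exists_real_btwn.1 hac
    have hrc : r < c := EReal.coe_lt_coe_iff.1 hrc
    refine har.le.trans ?_
    rw [EReal.le_neg, ← EReal.coe_neg]
    refine limsup_le_of_le (by isBoundedDefault) ?_
    rcases lt_or_ge c 0 with hc | hc
    · filter_upwards [eventually_gt_atTop 0] with n hn
      refine (term_le n hn _ 0 (by simpa using prob_le_one)).trans ?_
      exact EReal.coe_le_coe_iff.2 (by linarith)
    have hdisj : Disjoint ((fun ν : ProbabilityMeasure (ℝ × X) => starT m W φ ν) '' Klev μ c) (closure F) := by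
      rw [Set.disjoint_left]
      intro t h1 h2
      have h3 := (hrate t c hc).2 h1
      have h4 : (⨅ x ∈ closure F, (rate0 G W φ μ x : EReal)) ≤ (rate0 G W φ μ t : EReal) := iInf₂_le t h2
      have h5 : (rate0 G W φ μ t : EReal) ≤ (c : EReal) := by
        have := EReal.coe_ennreal_le_coe_ennreal_iff.2 h3
        rwa [EReal.coe_ennreal_ofReal, max_eq_left hc] at this
      exact absurd (hcJ.trans_le (h4.trans h5)) (lt_irrefl _)
    obtain ⟨δ, hδ, hdis⟩ := hdisj.exists_cthickenings (hTK c hc) isClosed_closure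
    have hdis2 := hdis.mono_left (Metric.self_subset_cthickening _)
    set C : Set (ProbabilityMeasure (ℝ × X)) := Kset X ∩ (fun ν : ProbabilityMeasure (ℝ × X) => starT m W φ ν) ⁻¹' (Metric.cthickening δ (closure F)) with hCdef
    have hCc : IsCompact C := Kset_compact.of_isClosed_subset
      ((contT m W hW φ).preimage_isClosed_of_isClosed Kset_closed Metric.isClosed_cthickening) inter_subset_left
    have hCd : Disjoint C (Klev μ c) := by
      rw [Set.disjoint_left]
      intro ν h1 h2
      exact Set.disjoint_left.1 hdis2 ⟨ν, h2, rfl⟩ h1.2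
    obtain ⟨N, hN⟩ := ub_compact μ c hc C hCc inter_subset_left hCd
    have hlarge : ∀ᶠ n : ℕ in atTop, Real.log (N + 1) ≤ n * (c - r) :=
      (tendsto_natCast_atTop_atTop.atTop_mul_const (by linarith : 0 < c - r)).eventually_ge_atTop _
    filter_upwards [eventually_gt_atTop 0, hS δ hδ, hlarge] with n hn hSn hl
    obtain ⟨j, hj, e⟩ := hK n hn
    refine term_le n hn _ (-r) ?_
    have hsub : {x | S n x ∈ F} ⊆ {x | (⟨emp j x, emp_prob hj x⟩ : ProbabilityMeasure (ℝ × X)) ∈ C} := by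
      intro x hx
      refine ⟨emp_fst hj x, ?_⟩
      refine Metric.mem_cthickening_of_dist_le _ (S n x) δ _ (subset_closure hx) ?_
      rw [dist_comm, Real.dist_eq]
      exact hSn j hj e x
    refine (measure_mono hsub).trans ((hN n j hj).trans ?_)
    have hN1 : (N : ℝ≥0∞) = ENNReal.ofReal N := by simp
    rw [hN1, ← ENNReal.ofReal_mul (by positivity)]
    refine ENNReal.ofReal_le_ofReal ?_
    have h6 : (N:ℝ) + 1 ≤ Real.exp (n * (c - r)) := (Real.log_le_iff_le_exp (by positivity)).1 hl
    have h7 : Real.exp (n * -r) = Real.exp (n * (c - r)) * Real.exp (-(n * c)) := by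
      rw [← Real.exp_add]; congr 1; ring
    rw [h7]
    exact mul_le_mul_of_nonneg_right (by linarith) (Real.exp_pos _).le

theorem main_aux
    (μ : Measure X) [IsProbabilityMeasure μ]
    {m : ℕ} (hm : 1 ≤ m) (G : SimpleGraph (Fin (m+1))) [DecidableRel G.Adj]
    (hstar : ∀ a b : Fin (m+1), G.Adj a b ↔ (a ≠ b ∧ (a = 0 ∨ b = 0)))
    (φ : (Fin (m+1) → X) → ℝ) (hφ : Continuous φ)
    (Q : ∀ n : ℕ, Fin n → Fin n → ℝ) (hQzero : ∀ n i, Q n i i = 0)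
    (W : ℝ → ℝ → ℝ) (hWmeas : Measurable (Function.uncurry W)) (hWL1 : kerNorm W 1 ≠ ⊤)
    (hcut : Tendsto (fun n => weakCutDist (stepKernel n (Q n)) W) atTop (nhds 0))
    (hUI : ∀ ε : ℝ, 0 < ε → ∃ M : ℝ, ∀ n : ℕ,
      ∫⁻ x in {x : ℝ | M < degFun (stepKernel n (Q n)) x ^ m},
        ENNReal.ofReal (degFun (stepKernel n (Q n)) x ^ m) ∂unif01 ≤ ENNReal.ofReal ε)
    (hWdeg : ∫⁻ x, ENNReal.ofReal (degFun W x ^ m) ∂unif01 ≠ ⊤) :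
    SatisfiesLDP (fun n => Measure.pi fun _ : Fin n => μ)
      (fun n x => Ustat G φ n (Q n) x) (rate0 G W φ μ) ∧
    SatisfiesLDP (fun n => Measure.pi fun _ : Fin n => μ)
      (fun n x => Vstat G φ n (Q n) x) (rate0 G W φ μ) := by
  have hne : Nonempty X := nonempty_of_isProbabilityMeasure μ
  obtain ⟨hW, K, hK, hUC, hUV⟩ := setup_all m hm Q hQzero W hWmeas hWL1 hcut hUI hWdeg (⟨φ, hφ⟩ : C(Fin (m+1) → X, ℝ))
  have hV : ∀ ε : ℝ, 0 < ε → ∀ᶠ n in atTop, ∀ j : ℝ → Fin n, IdxMap n j → (K n = fun x y => Q n (j x) (j y)) →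
      ∀ x, |Vstat G φ n (Q n) x - starT m W φ (emp j x)| ≤ ε := by
    intro ε hε
    filter_upwards [hUC ε hε] with n hn j hj e x
    have h1 := hn (emp j x) (emp_prob hj x) (emp_fst hj x)
    rw [e] at h1
    have h2 := starT_emp m hj (Q n) φ hφ.measurable x
    have h3 : Vstat G φ n (Q n) x = starT m (fun x y => Q n (j x) (j y)) φ (emp j x) := by
      rw [h2]
      unfold Vstat
      simp_rw [edgeProd_star G hstar]
    rw [h3]; exact h1
  refine ⟨ldp_core m W hW ⟨φ, hφ⟩ G hstar μ Q K hK hUC _ ?_, ldp_core m W hW ⟨φ, hφ⟩ G hstar μ Q K hK hUC _ hV⟩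
  intro ε hε
  filter_upwards [hV (ε/2) (by positivity), hUV (ε/2) (by positivity)] with n h1 h2 j hj e x
  have h3 := h1 j hj e x
  have h4 : |Ustat G φ n (Q n) x - Vstat G φ n (Q n) x| ≤ ε / 2 := by
    have := h2 x
    unfold Ustat Vstat
    simp_rw [edgeProd_star G hstar]
    exact this
  calc _ ≤ |Ustat G φ n (Q n) x - Vstat G φ n (Q n) x| + |Vstat G φ n (Q n) x - starT m W φ (emp j x)| := abs_sub_le _ _ _
    _ ≤ ε := by linarith

end Part14

/-- Theorem 1.2 (ii): the star case `H = K_{1,v-1}`. -/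
theorem ldp_inhomogeneous_U_V_statistics_star
    {X : Type*} [MetricSpace X] [CompactSpace X] [MeasurableSpace X] [BorelSpace X]
    (μ : Measure X) [IsProbabilityMeasure μ]
    (hnondeg : ∀ x : X, μ ≠ Measure.dirac x)
    {v : ℕ} (hv : 2 ≤ v) (G : SimpleGraph (Fin v)) [DecidableRel G.Adj]
    (hstar : ∀ a b : Fin v, G.Adj a b ↔
      (a ≠ b ∧ (a = (⟨0, by omega⟩ : Fin v) ∨ b = (⟨0, by omega⟩ : Fin v))))
    (φ : (Fin v → X) → ℝ) (hφ : Continuous φ)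
    (Q : ∀ n : ℕ, Fin n → Fin n → ℝ)
    (hQsymm : ∀ n i j, Q n i j = Q n j i) (hQzero : ∀ n i, Q n i i = 0)
    (W : ℝ → ℝ → ℝ) (hWmeas : Measurable (Function.uncurry W))
    (hWsymm : ∀ x y, W x y = W y x) (hWL1 : kerNorm W 1 ≠ ⊤)
    (hcut : Tendsto (fun n => weakCutDist (stepKernel n (Q n)) W) atTop (nhds 0))
    (hUI : ∀ ε : ℝ, 0 < ε → ∃ M : ℝ, ∀ n : ℕ,
      ∫⁻ x in {x : ℝ | M < degFun (stepKernel n (Q n)) x ^ (v - 1)},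
        ENNReal.ofReal (degFun (stepKernel n (Q n)) x ^ (v - 1)) ∂unif01
        ≤ ENNReal.ofReal ε)
    (hWdeg : ∫⁻ x, ENNReal.ofReal (degFun W x ^ (v - 1)) ∂unif01 ≠ ⊤) :
    SatisfiesLDP (fun n => Measure.pi fun _ : Fin n => μ)
      (fun n x => Ustat G φ n (Q n) x) (rate0 G W φ μ) ∧
    SatisfiesLDP (fun n => Measure.pi fun _ : Fin n => μ)
      (fun n x => Vstat G φ n (Q n) x) (rate0 G W φ μ) := by
  obtain ⟨m, rfl⟩ : ∃ m, v = m + 1 := ⟨v - 1, by omega⟩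
  exact main_aux μ (by omega) G hstar φ hφ Q hQzero W hWmeas hWL1 hcut hUI hWdeg
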